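/- arXiv:1706.09675 — 2 statements merged into one kernel-verified Lean document; each statement's English description precedes it below -/
import Mathlib

section
/- Let R = k[x_1,…,x_n] be a polynomial ring over a field k, let J and H be homogeneous ideals in R, let f ∈ R be a form of degree d that is a non-zerodivisor on R/J, and set I = J + fH. Then (i) depth R/I ∈ {depth R/(J+H), depth R/J − 1}, and (ii) reg R/I ∈ {reg R/(J+H) + d, reg R/J + d − 1, reg R/J + d − 2, …, reg R/J}. -/
open MvPolynomial

/-- The depth of the `R`-module `M` with respect to the ideal `J`: the supremum of
lengths of `M`-regular sequences consisting of elements of `J`. -/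
noncomputable def idealDepth {R : Type*} [CommRing R] (J : Ideal R)
    (M : Type*) [AddCommGroup M] [Module R M] : ℕ :=
  sSup {d : ℕ | ∃ rs : List R, rs.length = d ∧ (∀ r ∈ rs, r ∈ J) ∧
    RingTheory.Sequence.IsRegular M rs}

/-- The irrelevant maximal homogeneous ideal `(x₁, …, xₙ)` of the polynomial ring. -/
noncomputable def mxIdeal (k : Type*) [Field k] (n : ℕ) : Ideal (MvPolynomial (Fin n) k) :=
  Ideal.span (Set.range MvPolynomial.X)

/-- `depth R/I`, the depth of the quotient module with respect to the maximal
homogeneous ideal. -/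
noncomputable def pdepth {k : Type*} [Field k] {n : ℕ}
    (I : Ideal (MvPolynomial (Fin n) k)) : ℕ :=
  idealDepth (mxIdeal k n) (MvPolynomial (Fin n) k ⧸ I)

/-- `p` is homogeneous of degree `d ∈ ℤ` (where `0` is homogeneous of any degree). -/
def HomogOfDeg {k : Type*} [Field k] {n : ℕ} (p : MvPolynomial (Fin n) k) (d : ℤ) : Prop :=
  p = 0 ∨ ∃ m : ℕ, (m : ℤ) = d ∧ p.IsHomogeneous m

/-- A finite graded free resolution of `R/I`: free modules `Fᵢ = ⊕_j R(-D i j)` (of rank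
`b i`, zero for `i > len`), differentials given by matrices `A i : Fᵢ₊₁ → Fᵢ` whose entries
are homogeneous of the appropriate degrees, and an augmentation `F₀ → R/I` given by the
homogeneous column `v`, the whole complex being exact. -/
structure GradedFreeRes {k : Type*} [Field k] {n : ℕ}
    (I : Ideal (MvPolynomial (Fin n) k)) where
  len : ℕ
  b : ℕ → ℕ
  hb : ∀ i : ℕ, len < i → b i = 0
  D : (i : ℕ) → Fin (b i) → ℤ
  A : (i : ℕ) → Matrix (Fin (b i)) (Fin (b (i+1))) (MvPolynomial (Fin n) k)
  v : Fin (b 0) → MvPolynomial (Fin n) k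
  hv : ∀ r, HomogOfDeg (v r) (D 0 r)
  hA : ∀ (i : ℕ) r c, HomogOfDeg (A i r c) (D (i+1) c - D i r)
  haug : Function.Surjective
    (fun w : Fin (b 0) → MvPolynomial (Fin n) k => Ideal.Quotient.mk I (∑ r, w r * v r))
  hex0 : Function.Exact ((A 0).mulVec)
    (fun w : Fin (b 0) → MvPolynomial (Fin n) k => Ideal.Quotient.mk I (∑ r, w r * v r))
  hex : ∀ i : ℕ, Function.Exact ((A (i+1)).mulVec) ((A i).mulVec)

/-- The Castelnuovo–Mumford regularity `reg R/I`: the least `r` such that some finite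
graded free resolution of `R/I` has all its `i`-th twists `≤ r + i`; equivalently (via the
minimal free resolution) `reg R/I = max { j - i : β_{i,j}(R/I) ≠ 0 }`. -/
noncomputable def regQuot {k : Type*} [Field k] {n : ℕ}
    (I : Ideal (MvPolynomial (Fin n) k)) : ℤ :=
  sInf {r : ℤ | ∃ F : GradedFreeRes I, ∀ (i : ℕ) (j : Fin (F.b i)), F.D i j - (i : ℤ) ≤ r}

/-- The regularity of a (nonzero) homogeneous ideal: `reg I = reg R/I + 1`. -/
noncomputable def regIdeal {k : Type*} [Field k] {n : ℕ}
    (I : Ideal (MvPolynomial (Fin n) k)) : ℤ :=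
  regQuot I + 1

/-- An ideal is homogeneous if it is generated by homogeneous polynomials. -/
def IsHomogeneousIdeal {k : Type*} [Field k] {n : ℕ}
    (I : Ideal (MvPolynomial (Fin n) k)) : Prop :=
  ∃ T : Set (MvPolynomial (Fin n) k), (∀ p ∈ T, ∃ d : ℕ, p.IsHomogeneous d) ∧ I = Ideal.span T

/-- A monomial ideal: an ideal generated by monomials. -/
def IsMonomialIdeal {k : Type*} [Field k] {n : ℕ}
    (I : Ideal (MvPolynomial (Fin n) k)) : Prop :=
  ∃ T : Set (Fin n →₀ ℕ), I = Ideal.span ((fun m => monomial m (1 : k)) '' T)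


universe u v w
set_option linter.unusedSectionVars false
set_option linter.unusedSimpArgs false
namespace DRM
section Koszul
variable {R : Type u} [CommRing R]

/-- Underlying module of the Koszul complex on the list `l`, as an iterated cone. -/
def Kos (M : Type v) : List R → Type v
  | [] => M
  | _ :: l => Kos M l × Kos M l

variable {M : Type v} [AddCommGroup M] [Module R M]
variable {A : Type v} [AddCommGroup A] [Module R A]
variable {B : Type v} [AddCommGroup B] [Module R B]
variable {C : Type v} [AddCommGroup C] [Module R C]

instance instKosAdd (M : Type v) [AddCommGroup M] : (l : List R) → AddCommGroup (Kos M l)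
  | [] => inferInstanceAs (AddCommGroup M)
  | _ :: l => letI := instKosAdd M l; inferInstanceAs (AddCommGroup (Kos M l × Kos M l))

instance instKosMod (M : Type v) [AddCommGroup M] [Module R M] : (l : List R) → Module R (Kos M l)
  | [] => inferInstanceAs (Module R M)
  | _ :: l => letI := instKosMod M l; inferInstanceAs (Module R (Kos M l × Kos M l))

/-- The Koszul differential. -/
def Kd (M : Type v) [AddCommGroup M] [Module R M] : (l : List R) → Kos M l →ₗ[R] Kos M l
  | [] => 0
  | r :: l =>
    (LinearMap.prod ((Kd M l).comp (LinearMap.fst R (Kos M l) (Kos M l)) +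
        r • LinearMap.snd R (Kos M l) (Kos M l))
      (-(Kd M l).comp (LinearMap.snd R (Kos M l) (Kos M l))) :
      Kos M l × Kos M l →ₗ[R] Kos M l × Kos M l)

/-- Pairing constructor. -/
def Kmk (r : R) (l : List R) (a b : Kos M l) : Kos M (r :: l) := (a, b)

theorem Kex (r : R) (l : List R) (z : Kos M (r :: l)) : ∃ a b, z = Kmk r l a b := ⟨z.1, z.2, rfl⟩

theorem Kmk_inj {r : R} {l : List R} {a b a' b' : Kos M l} :
    Kmk r l a b = Kmk r l a' b' ↔ a = a' ∧ b = b' := Prod.mk_inj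

theorem Kmk_add (r : R) (l : List R) (a b a' b' : Kos M l) :
    Kmk r l a b + Kmk r l a' b' = Kmk r l (a + a') (b + b') := rfl
theorem Kmk_sub (r : R) (l : List R) (a b a' b' : Kos M l) :
    Kmk r l a b - Kmk r l a' b' = Kmk r l (a - a') (b - b') := rfl
theorem Kmk_smul (r : R) (l : List R) (a b : Kos M l) (s : R) :
    s • Kmk r l a b = Kmk r l (s • a) (s • b) := rfl
theorem Kmk_zero (r : R) (l : List R) : (0 : Kos M (r :: l)) = Kmk r l 0 0 := rfl

theorem Kd_mk (r : R) (l : List R) (a b : Kos M l) :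
    Kd M (r :: l) (Kmk r l a b) = Kmk r l (Kd M l a + r • b) (-Kd M l b) := rfl

theorem Kdd (l : List R) (z : Kos M l) : Kd M l (Kd M l z) = 0 := by
  induction l with
  | nil => rfl
  | cons r l ih =>
    obtain ⟨a, b, rfl⟩ := Kex r l z
    simp [Kd_mk, Kmk_zero, Kmk_inj, ih]

/-- Bigraded pieces: homological degree `i`, internal degree `e`. -/
def Kgr (g : ℤ → AddSubgroup M) : (l : List R) → ℤ → ℤ → AddSubgroup (Kos M l)
  | [], i, e => if i = 0 then g e else (⊥ : AddSubgroup M)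
  | _ :: l, i, e => ((Kgr g l i e).prod (Kgr g l (i - 1) e) : AddSubgroup (Kos M l × Kos M l))

theorem mem_Kgr {g : ℤ → AddSubgroup M} {r : R} {l : List R} {i e : ℤ} {a b : Kos M l} :
    Kmk r l a b ∈ Kgr g (r :: l) i e ↔ a ∈ Kgr g l i e ∧ b ∈ Kgr g l (i - 1) e := Iff.rfl

theorem Kgr_smul {g : ℤ → AddSubgroup M} (s : R) (e e' : ℤ) (h : ∀ m ∈ g e, s • m ∈ g e')
    (l : List R) (i : ℤ) (z : Kos M l) (hz : z ∈ Kgr g l i e) : s • z ∈ Kgr g l i e' := by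
  induction l generalizing i with
  | nil =>
    by_cases hi : i = 0
    · simp only [Kgr, hi, if_true] at hz ⊢
      exact h z hz
    · simp only [Kgr, hi, if_false] at hz ⊢
      have hz' : z = 0 := hz
      subst hz'
      rw [smul_zero]; rfl
  | cons r l ih =>
    obtain ⟨a, b, rfl⟩ := Kex r l z
    rw [Kmk_smul]
    exact ⟨ih i a hz.1, ih _ b hz.2⟩

theorem Kgr_d {g : ℤ → AddSubgroup M} (l : List R)
    (h : ∀ r ∈ l, ∀ e, ∀ m ∈ g e, r • m ∈ g (e + 1))
    (i e : ℤ) (z : Kos M l) (hz : z ∈ Kgr g l i e) : Kd M l z ∈ Kgr g l (i - 1) (e + 1) := by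
  induction l generalizing i with
  | nil => exact zero_mem _
  | cons r l ih =>
    obtain ⟨a, b, rfl⟩ := Kex r l z
    rw [Kd_mk]
    have ih' := ih (fun r hr => h r (List.mem_cons_of_mem _ hr))
    refine ⟨add_mem (ih' i a hz.1) (Kgr_smul r e (e + 1) (h r (by simp) e) l _ b hz.2),
      (Kgr g l _ _).neg_mem (ih' _ b hz.2)⟩

theorem Kgr_neg {g : ℤ → AddSubgroup M} (l : List R) (i e : ℤ) (hi : i < 0) (z : Kos M l)
    (hz : z ∈ Kgr g l i e) : z = 0 := by
  induction l generalizing i with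
  | nil =>
    simp only [Kgr, hi.ne, if_false] at hz
    exact hz
  | cons r l ih =>
    obtain ⟨a, b, rfl⟩ := Kex r l z
    rw [ih i hi a hz.1, ih (i - 1) (by lia) b hz.2]; rfl

theorem Kgr_gt {g : ℤ → AddSubgroup M} (l : List R) (i e : ℤ) (hi : l.length < i) (z : Kos M l)
    (hz : z ∈ Kgr g l i e) : z = 0 := by
  induction l generalizing i with
  | nil =>
    have : i ≠ 0 := by simp at hi; lia
    simp only [Kgr, this, if_false] at hz
    exact hz
  | cons r l ih =>
    simp only [List.length_cons, Nat.cast_add, Nat.cast_one] at hi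
    obtain ⟨a, b, rfl⟩ := Kex r l z
    rw [ih i (by lia) a hz.1, ih (i - 1) (by lia) b hz.2]; rfl

/-- Functoriality. -/
def Kmap (φ : A →ₗ[R] B) : (l : List R) → Kos A l →ₗ[R] Kos B l
  | [] => φ
  | _ :: l => (LinearMap.prodMap (Kmap φ l) (Kmap φ l) : Kos A l × Kos A l →ₗ[R] Kos B l × Kos B l)

theorem Kmap_mk (φ : A →ₗ[R] B) (r : R) (l : List R) (a b : Kos A l) :
    Kmap φ (r :: l) (Kmk r l a b) = Kmk r l (Kmap φ l a) (Kmap φ l b) := rfl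

theorem Kmap_d (φ : A →ₗ[R] B) (l : List R) (z : Kos A l) :
    Kmap φ l (Kd A l z) = Kd B l (Kmap φ l z) := by
  induction l with
  | nil => exact map_zero _
  | cons r l ih =>
    obtain ⟨a, b, rfl⟩ := Kex r l z
    simp [Kd_mk, Kmap_mk, ih]

theorem Kmap_gr {gA : ℤ → AddSubgroup A} {gB : ℤ → AddSubgroup B} (φ : A →ₗ[R] B) (e e' : ℤ)
    (h : ∀ a ∈ gA e, φ a ∈ gB e') (l : List R) (i : ℤ) (z : Kos A l) (hz : z ∈ Kgr gA l i e) :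
    Kmap φ l z ∈ Kgr gB l i e' := by
  induction l generalizing i with
  | nil =>
    by_cases hi : i = 0
    · simp only [Kgr, hi, if_true] at hz ⊢
      exact h z hz
    · simp only [Kgr, hi, if_false] at hz ⊢
      have hz' : z = 0 := hz
      subst hz'
      rw [map_zero]; rfl
  | cons r l ih =>
    obtain ⟨a, b, rfl⟩ := Kex r l z
    exact ⟨ih i a hz.1, ih _ b hz.2⟩

theorem Kmap_inj (φ : A →ₗ[R] B) (h : Function.Injective φ) (l : List R) :
    Function.Injective (Kmap φ l) := by
  induction l with
  | nil => exact h
  | cons r l ih => exact Prod.map_injective.2 ⟨ih, ih⟩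

theorem Kmap_lift {gB : ℤ → AddSubgroup B} {gC : ℤ → AddSubgroup C} (ψ : B →ₗ[R] C) (e : ℤ)
    (h : ∀ c ∈ gC e, ∃ b ∈ gB e, ψ b = c) (l : List R) (i : ℤ) (z : Kos C l)
    (hz : z ∈ Kgr gC l i e) : ∃ y ∈ Kgr gB l i e, Kmap ψ l y = z := by
  induction l generalizing i with
  | nil =>
    by_cases hi : i = 0
    · simp only [Kgr, hi, if_true] at hz ⊢
      exact h z hz
    · simp only [Kgr, hi, if_false] at hz ⊢
      have hz' : z = 0 := hz
      subst hz'
      exact ⟨0, rfl, map_zero _⟩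
  | cons r l ih =>
    obtain ⟨a, b, rfl⟩ := Kex r l z
    obtain ⟨a', ha, rfl⟩ := ih i a hz.1
    obtain ⟨b', hb, rfl⟩ := ih _ b hz.2
    exact ⟨Kmk r l a' b', ⟨ha, hb⟩, rfl⟩

theorem Kmap_exact {gA : ℤ → AddSubgroup A} {gB : ℤ → AddSubgroup B} (φ : A →ₗ[R] B)
    (ψ : B →ₗ[R] C) (e : ℤ)
    (h : ∀ b ∈ gB e, ψ b = 0 → ∃ a ∈ gA e, φ a = b) (l : List R) (i : ℤ) (z : Kos B l)
    (hz : z ∈ Kgr gB l i e) (h0 : Kmap ψ l z = 0) : ∃ y ∈ Kgr gA l i e, Kmap φ l y = z := by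
  induction l generalizing i with
  | nil =>
    by_cases hi : i = 0
    · simp only [Kgr, hi, if_true] at hz ⊢
      exact h z hz h0
    · simp only [Kgr, hi, if_false] at hz ⊢
      have hz' : z = 0 := hz
      subst hz'
      exact ⟨0, rfl, map_zero _⟩
  | cons r l ih =>
    obtain ⟨a, b, rfl⟩ := Kex r l z
    rw [Kmap_mk, Kmk_zero, Kmk_inj] at h0
    obtain ⟨a', ha, rfl⟩ := ih i a hz.1 h0.1
    obtain ⟨b', hb, rfl⟩ := ih _ b hz.2 h0.2
    exact ⟨Kmk r l a' b', ⟨ha, hb⟩, rfl⟩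

theorem Kmap_comp_zero (φ : A →ₗ[R] B) (ψ : B →ₗ[R] C) (h : ∀ a, ψ (φ a) = 0) (l : List R)
    (z : Kos A l) : Kmap ψ l (Kmap φ l z) = 0 := by
  induction l with
  | nil => exact h z
  | cons r l ih =>
    obtain ⟨a, b, rfl⟩ := Kex r l z
    simp [Kmap_mk, ih, Kmk_zero]

/-- multiplication by elements of the list is null-homotopic -/
theorem Khomotopy (g : ℤ → AddSubgroup M) (l : List R) (s : R) (hs : s ∈ l) :
    ∃ h : Kos M l → Kos M l, (∀ i e z, z ∈ Kgr g l i e → h z ∈ Kgr g l (i + 1) e) ∧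
      ∀ z, Kd M l (h z) + h (Kd M l z) = s • z := by
  suffices ∃ h : Kos M l →ₗ[R] Kos M l, (∀ i e z, z ∈ Kgr g l i e → h z ∈ Kgr g l (i + 1) e) ∧
      ∀ z, Kd M l (h z) + h (Kd M l z) = s • z by
    obtain ⟨h, h1, h2⟩ := this
    exact ⟨h, h1, h2⟩
  induction l with
  | nil => simp at hs
  | cons r l ih =>
    by_cases hl : s ∈ l
    · obtain ⟨h, h1, h2⟩ := ih hl
      refine ⟨(LinearMap.prodMap h (-h) : Kos M l × Kos M l →ₗ[R] Kos M l × Kos M l), ?_, ?_⟩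
      · intro i e z hz
        obtain ⟨a, b, rfl⟩ := Kex r l z
        refine ⟨h1 _ _ _ hz.1, ?_⟩
        have := h1 _ _ _ hz.2
        rw [show i - 1 + 1 = i + 1 - 1 by ring] at this
        exact (Kgr g l _ _).neg_mem this
      · intro z
        obtain ⟨a, b, rfl⟩ := Kex r l z
        rw [Kd_mk]
        change Kd M (r :: l) (Kmk r l (h a) (- h b)) + Kmk r l (h (Kd M l a + r • b)) (-(h (- Kd M l b))) = _
        simp only [Kd_mk, Kmk_add, Kmk_smul, Kmk_inj, ← h2]
        constructor
        · simp; abel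
        · simp
    · have : s = r := by simpa [hl] using hs
      subst this
      refine ⟨(LinearMap.prod 0 (LinearMap.fst R _ _) : Kos M l × Kos M l →ₗ[R] Kos M l × Kos M l), ?_, ?_⟩
      · intro i e z hz
        obtain ⟨a, b, rfl⟩ := Kex s l z
        refine ⟨zero_mem _, ?_⟩
        rw [add_sub_cancel_right]; exact hz.1
      · intro z
        obtain ⟨a, b, rfl⟩ := Kex s l z
        rw [Kd_mk]
        change Kd M (s :: l) (Kmk s l 0 a) + Kmk s l 0 (Kd M l a + s • b) = _
        simp [Kd_mk, Kmk_add, Kmk_smul, Kmk_inj]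

/-- inclusion in homological degree zero -/
def K0 (M : Type v) [AddCommGroup M] [Module R M] : (l : List R) → M →ₗ[R] Kos M l
  | [] => LinearMap.id
  | _ :: l => (LinearMap.prod (K0 M l) 0 : M →ₗ[R] Kos M l × Kos M l)

theorem K0_cons (r : R) (l : List R) (m : M) : K0 M (r :: l) m = Kmk r l (K0 M l m) 0 := rfl

theorem K0_inj (l : List R) (m : M) (h : K0 M l m = 0) : m = 0 := by
  induction l with
  | nil => exact h
  | cons r l ih => exact ih (Kmk_inj.1 h).1

theorem K0_mem {g : ℤ → AddSubgroup M} (l : List R) (e : ℤ) (m : M) (hm : m ∈ g e) :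
    K0 M l m ∈ Kgr g l 0 e := by
  induction l with
  | nil => simp only [Kgr]; exact hm
  | cons r l ih => exact ⟨ih, zero_mem _⟩

theorem K0_surj {g : ℤ → AddSubgroup M} (l : List R) (e : ℤ) (z : Kos M l)
    (hz : z ∈ Kgr g l 0 e) : ∃ m ∈ g e, z = K0 M l m := by
  induction l with
  | nil => exact ⟨z, by simp only [Kgr] at hz; exact hz, rfl⟩
  | cons r l ih =>
    obtain ⟨a, b, rfl⟩ := Kex r l z
    obtain ⟨m, hm, rfl⟩ := ih a hz.1
    refine ⟨m, hm, ?_⟩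
    rw [Kgr_neg l _ e (by norm_num) b hz.2]; rfl

theorem Kd_K0 (l : List R) (m : M) : Kd M l (K0 M l m) = 0 := by
  induction l with
  | nil => rfl
  | cons r l ih => simp [K0_cons, Kd_mk, ih, Kmk_zero]

/-- The degree `e` part of `(l) M`, in the graded sense. -/
def Kim (g : ℤ → AddSubgroup M) : List R → ℤ → M → Prop
  | [], _, m => m = 0
  | r :: l, e, m => ∃ a b, Kim g l e a ∧ b ∈ g e ∧ m = a + r • b

theorem Kim_iff {g : ℤ → AddSubgroup M} (l : List R) (e : ℤ) (m : M) :
    Kim g l e m ↔ ∃ w ∈ Kgr g l 1 e, Kd M l w = K0 M l m := by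
  induction l generalizing m with
  | nil =>
    constructor
    · rintro rfl
      exact ⟨0, zero_mem _, by simp⟩
    · rintro ⟨w, hw, h⟩
      exact h.symm
  | cons r l ih =>
    constructor
    · rintro ⟨a, b, ha, hb, rfl⟩
      obtain ⟨w, hw, h⟩ := (ih a).1 ha
      refine ⟨Kmk r l w (K0 M l b), ⟨hw, K0_mem l e b hb⟩, ?_⟩
      simp [Kd_mk, K0_cons, h, Kd_K0]
    · rintro ⟨w, hw, h⟩
      obtain ⟨a, b, rfl⟩ := Kex r l w
      obtain ⟨b, hb, rfl⟩ := K0_surj l e b (mem_Kgr.1 hw).2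
      rw [Kd_mk, K0_cons, Kmk_inj] at h
      refine ⟨m - r • b, b, (ih _).2 ⟨a, hw.1, ?_⟩, hb, by abel⟩
      rw [map_sub, ← h.1]; simp

/-- inclusion in top homological degree -/
def Kt (M : Type v) [AddCommGroup M] [Module R M] : (l : List R) → M →ₗ[R] Kos M l
  | [] => LinearMap.id
  | _ :: l => (LinearMap.prod 0 (Kt M l) : M →ₗ[R] Kos M l × Kos M l)

theorem Kt_cons (r : R) (l : List R) (m : M) : Kt M (r :: l) m = Kmk r l 0 (Kt M l m) := rfl

theorem Kt_inj (l : List R) (m : M) (h : Kt M l m = 0) : m = 0 := by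
  induction l with
  | nil => exact h
  | cons r l ih => exact ih (Kmk_inj.1 h).2

theorem Kt_mem {g : ℤ → AddSubgroup M} (l : List R) (e : ℤ) (m : M) (hm : m ∈ g e) :
    Kt M l m ∈ Kgr g l l.length e := by
  induction l with
  | nil => simp only [Kgr]; exact hm
  | cons r l ih => 
    rw [Kt_cons, mem_Kgr]
    refine ⟨zero_mem _, ?_⟩
    simpa using ih

theorem Kt_d (l : List R) (m : M) (hm : ∀ r ∈ l, r • m = 0) : Kd M l (Kt M l m) = 0 := by
  induction l with
  | nil => rfl
  | cons r l ih =>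
    rw [Kt_cons, Kd_mk, ih (fun r hr => hm r (by simp [hr])), ← map_smul, hm r (by simp)]
    simp [Kmk_zero]

/-- vanishing of Koszul homology in homological degree `i` and internal degree `e`. -/
def Van (l : List R) (g : ℤ → AddSubgroup M) (i e : ℤ) : Prop :=
  ∀ z ∈ Kgr g l i e, Kd M l z = 0 → ∃ w ∈ Kgr g l (i + 1) (e - 1), Kd M l w = z

theorem Van_neg (l : List R) (g : ℤ → AddSubgroup M) (i e : ℤ) (hi : i < 0) : Van l g i e :=
  fun z hz _ => ⟨0, zero_mem _, by rw [Kgr_neg l i e hi z hz, map_zero]⟩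

theorem Van_gt (l : List R) (g : ℤ → AddSubgroup M) (i e : ℤ) (hi : l.length < i) : Van l g i e :=
  fun z hz _ => ⟨0, zero_mem _, by rw [Kgr_gt l i e hi z hz, map_zero]⟩

theorem Van_zero_iff (l : List R) (g : ℤ → AddSubgroup M) (e : ℤ) :
    Van l g 0 e ↔ ∀ m ∈ g e, Kim g l (e - 1) m := by
  constructor
  · intro h m hm
    rw [Kim_iff]
    exact h _ (K0_mem l e m hm) (Kd_K0 l m)
  · intro h z hz _
    obtain ⟨m, hm, rfl⟩ := K0_surj l e z hz
    exact (Kim_iff _ _ _).1 (h m hm)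

/-- graded module condition -/
def Gm (l : List R) (g : ℤ → AddSubgroup M) : Prop := ∀ r ∈ l, ∀ e, ∀ m ∈ g e, r • m ∈ g (e + 1)

/-- graded short exact sequences -/
structure Ses (gA : ℤ → AddSubgroup A) (gB : ℤ → AddSubgroup B) (gC : ℤ → AddSubgroup C)
    (φ : A →ₗ[R] B) (ψ : B →ₗ[R] C) : Prop where
  inj : Function.Injective φ
  dA : ∀ e, ∀ a ∈ gA e, φ a ∈ gB e
  dB : ∀ e, ∀ b ∈ gB e, ψ b ∈ gC e
  zero : ∀ a, ψ (φ a) = 0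
  ex : ∀ e, ∀ b ∈ gB e, ψ b = 0 → ∃ a ∈ gA e, φ a = b
  surj : ∀ e, ∀ c ∈ gC e, ∃ b ∈ gB e, ψ b = c

variable {gA : ℤ → AddSubgroup A} {gB : ℤ → AddSubgroup B} {gC : ℤ → AddSubgroup C}
    {φ : A →ₗ[R] B} {ψ : B →ₗ[R] C} {l : List R}

theorem Ses.mid (S : Ses gA gB gC φ ψ) (hB : Gm l gB) (i e : ℤ)
    (h1 : Van l gA i e) (h3 : Van l gC i e) : Van l gB i e := by
  intro z hz hd
  obtain ⟨w, hw, hwz⟩ := h3 (Kmap ψ l z) (Kmap_gr ψ e e (S.dB e) l i z hz)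
    (by rw [← Kmap_d, hd, map_zero])
  obtain ⟨y, hy, rfl⟩ := Kmap_lift ψ (e - 1) (S.surj _) l _ w hw
  have hdy := Kgr_d l hB _ _ y hy
  simp only [add_sub_cancel_right, sub_add_cancel] at hdy
  obtain ⟨u, hu, huz⟩ := Kmap_exact φ ψ e (S.ex e) l i (z - Kd B l y) (sub_mem hz hdy)
    (by rw [map_sub, Kmap_d, hwz, sub_self])
  obtain ⟨v, hv, hvu⟩ := h1 u hu (Kmap_inj φ S.inj l (by
    rw [Kmap_d, huz, map_sub, hd, Kdd]; simp))
  refine ⟨Kmap φ l v + y, add_mem (Kmap_gr φ _ _ (S.dA _) l _ v hv) hy, ?_⟩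
  rw [map_add, ← Kmap_d, hvu, huz]; abel

theorem Ses.right (S : Ses gA gB gC φ ψ) (hB : Gm l gB) (i e : ℤ)
    (h1 : Van l gA (i - 1) (e + 1)) (h2 : Van l gB i e) : Van l gC i e := by
  intro z hz hd
  obtain ⟨y, hy, rfl⟩ := Kmap_lift ψ e (S.surj _) l _ z hz
  have hdy := Kgr_d l hB _ _ y hy
  obtain ⟨u, hu, huz⟩ := Kmap_exact φ ψ _ (S.ex _) l _ (Kd B l y) hdy (by rw [Kmap_d, hd])
  obtain ⟨v, hv, hvu⟩ := h1 u hu (Kmap_inj φ S.inj l (by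
    rw [Kmap_d, huz, Kdd]; simp))
  simp only [add_sub_cancel_right, sub_add_cancel] at hv
  have hv' := Kmap_gr φ _ _ (S.dA _) l _ v hv
  obtain ⟨w, hw, hwy⟩ := h2 (y - Kmap φ l v) (sub_mem hy hv') (by
    rw [map_sub, ← Kmap_d, hvu, huz, sub_self])
  refine ⟨Kmap ψ l w, Kmap_gr ψ _ _ (S.dB _) l _ w hw, ?_⟩
  rw [← Kmap_d, hwy, map_sub, Kmap_comp_zero φ ψ S.zero, sub_zero]

/-- left term, with a weaker hypothesis on the middle term -/
theorem Ses.left' (S : Ses gA gB gC φ ψ) (hB : Gm l gB) (i e : ℤ)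
    (h2 : ∀ u ∈ Kgr gA l i e, Kd A l u = 0 → ∃ w ∈ Kgr gB l (i + 1) (e - 1),
      Kd B l w = Kmap φ l u)
    (h3 : Van l gC (i + 1) (e - 1)) : Van l gA i e := by
  intro z hz hd
  obtain ⟨w, hw, hwz⟩ := h2 z hz hd
  obtain ⟨y0, hy0, hyw⟩ := h3 (Kmap ψ l w) (Kmap_gr ψ _ _ (S.dB _) l _ w hw) (by
    rw [← Kmap_d, hwz, Kmap_comp_zero φ ψ S.zero])
  obtain ⟨y, hy, rfl⟩ := Kmap_lift ψ _ (S.surj _) l _ y0 hy0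
  have hdy := Kgr_d l hB _ _ y hy
  simp only [add_sub_cancel_right, sub_add_cancel] at hdy
  obtain ⟨u, hu, huz⟩ := Kmap_exact φ ψ _ (S.ex _) l _ (w - Kd B l y) (sub_mem hw hdy)
    (by rw [map_sub, Kmap_d, hyw, sub_self])
  refine ⟨u, hu, Kmap_inj φ S.inj l ?_⟩
  rw [Kmap_d, huz, map_sub, hwz, Kdd, sub_zero]

theorem Ses.left (S : Ses gA gB gC φ ψ) (hB : Gm l gB) (i e : ℤ)
    (h2 : Van l gB i e) (h3 : Van l gC (i + 1) (e - 1)) : Van l gA i e :=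
  S.left' hB i e (fun u hu hd => h2 _ (Kmap_gr φ e e (S.dA e) l i u hu)
    (by rw [← Kmap_d, hd, map_zero])) h3

/-- If `φ` is zero on homology then vanishing passes from the right term to the middle. -/
theorem Ses.mid' (S : Ses gA gB gC φ ψ) (hB : Gm l gB) (i e : ℤ)
    (h2 : ∀ u ∈ Kgr gA l i e, Kd A l u = 0 → ∃ w ∈ Kgr gB l (i + 1) (e - 1),
      Kd B l w = Kmap φ l u)
    (h3 : Van l gC i e) : Van l gB i e := by
  intro z hz hd
  obtain ⟨w, hw, hwz⟩ := h3 (Kmap ψ l z) (Kmap_gr ψ e e (S.dB e) l i z hz)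
    (by rw [← Kmap_d, hd, map_zero])
  obtain ⟨y, hy, rfl⟩ := Kmap_lift ψ (e - 1) (S.surj _) l _ w hw
  have hdy := Kgr_d l hB _ _ y hy
  simp only [add_sub_cancel_right, sub_add_cancel] at hdy
  obtain ⟨u, hu, huz⟩ := Kmap_exact φ ψ e (S.ex e) l i (z - Kd B l y) (sub_mem hz hdy)
    (by rw [map_sub, Kmap_d, hwz, sub_self])
  obtain ⟨v, hv, hvu⟩ := h2 u hu (Kmap_inj φ S.inj l (by
    rw [Kmap_d, huz, map_sub, hd, Kdd]; simp))
  refine ⟨v + y, add_mem hv hy, ?_⟩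
  rw [map_add, hvu, huz]; abel

/-- multiplication by `∑ c s * s` kills cycles -/
theorem Knull {g : ℤ → AddSubgroup M} (l' : List R) (hl : ∀ s ∈ l', s ∈ l) (c : R → R) (i e : ℤ) (z : Kos M l)
    (hc : ∀ s ∈ l', c s • z ∈ Kgr g l i e) (hz : Kd M l z = 0) :
    ∃ w ∈ Kgr g l (i + 1) e, Kd M l w = (l'.map (fun s => s * c s)).sum • z := by
  induction l' with
  | nil => exact ⟨0, zero_mem _, by simp⟩
  | cons s l' ih =>
    obtain ⟨w, hw, h⟩ := ih (fun s hs => hl s (by simp [hs])) (fun s hs => hc s (by simp [hs]))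
    obtain ⟨h', h1, h2⟩ := Khomotopy g l s (hl s (by simp))
    refine ⟨h' (c s • z) + w, add_mem (h1 _ _ _ (hc s (by simp))) hw, ?_⟩
    have := h2 (c s • z)
    have h0 := h2 0
    rw [map_smul, hz, smul_zero] at this
    have h00 : h' 0 = 0 := by
      have := h1 (-2) e 0 (zero_mem _)
      exact Kgr_neg l (-2 + 1) e (by norm_num) _ this
    rw [h00, add_zero] at this
    rw [map_add, this, h, List.map_cons, List.sum_cons, add_smul, mul_smul]

end Koszul
end DRM

namespace DRM
section Poly
variable {k : Type u} [Field k] {n : ℕ}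

theorem hom_iff (p : MvPolynomial (Fin n) k) (e : ℤ) :
    HomogOfDeg p e ↔ ∀ m, coeff m p ≠ 0 → ((m.degree : ℕ) : ℤ) = e := by
  constructor
  · rintro (rfl | ⟨a, rfl, h⟩) m hm
    · simp at hm
    · by_contra hne
      exact hm (h.coeff_eq_zero (by exact_mod_cast hne))
  · intro h
    by_cases hp : p = 0
    · exact Or.inl hp
    · right
      obtain ⟨m, hm⟩ := MvPolynomial.ne_zero_iff.1 hp
      refine ⟨m.degree, h m hm, ?_⟩
      have h1 := h m hm
      intro m' hm'
      have := h m' hm'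
      change Finsupp.weight (fun _ => 1) m' = _
      rw [← Finsupp.degree_eq_weight_one]
      exact_mod_cast this.trans h1.symm

theorem hom_zero (e : ℤ) : HomogOfDeg (0 : MvPolynomial (Fin n) k) e := Or.inl rfl

theorem hom_add {p q : MvPolynomial (Fin n) k} {e : ℤ} (hp : HomogOfDeg p e)
    (hq : HomogOfDeg q e) : HomogOfDeg (p + q) e := by
  rw [hom_iff] at *
  intro m hm
  by_cases h : coeff m p = 0
  · exact hq m (by simpa [h] using hm)
  · exact hp m h

theorem hom_neg {p : MvPolynomial (Fin n) k} {e : ℤ} (hp : HomogOfDeg p e) :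
    HomogOfDeg (-p) e := by
  rw [hom_iff] at *
  intro m hm
  exact hp m (by simpa using hm)

theorem hom_mul {p q : MvPolynomial (Fin n) k} {e e' : ℤ} (hp : HomogOfDeg p e)
    (hq : HomogOfDeg q e') : HomogOfDeg (p * q) (e + e') := by
  rcases hp with rfl | ⟨a, rfl, h⟩
  · left; simp
  rcases hq with rfl | ⟨b, rfl, h'⟩
  · left; simp
  exact Or.inr ⟨a + b, by simp, h.mul h'⟩

theorem hom_X (i : Fin n) : HomogOfDeg (X i : MvPolynomial (Fin n) k) 1 :=
  Or.inr ⟨1, rfl, isHomogeneous_X k i⟩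

/-- homogeneous component indexed by integers -/
noncomputable def hc (e : ℤ) : MvPolynomial (Fin n) k →ₗ[k] MvPolynomial (Fin n) k :=
  if 0 ≤ e then homogeneousComponent e.toNat else 0

theorem coeff_hc (e : ℤ) (p : MvPolynomial (Fin n) k) (m : Fin n →₀ ℕ) :
    coeff m (hc e p) = if ((m.degree : ℕ) : ℤ) = e then coeff m p else 0 := by
  unfold hc
  split_ifs with h1 h2 h2
  · rw [coeff_homogeneousComponent, if_pos (by lia)]
  · rw [coeff_homogeneousComponent, if_neg (by lia)]
  · lia
  · simp

theorem hc_hom (e : ℤ) (p : MvPolynomial (Fin n) k) : HomogOfDeg (hc e p) e := by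
  rw [hom_iff]
  intro m hm
  rw [coeff_hc] at hm
  by_contra h
  simp [h] at hm

theorem hc_same {e : ℤ} {p : MvPolynomial (Fin n) k} (h : HomogOfDeg p e) : hc e p = p := by
  rw [hom_iff] at h
  ext m
  rw [coeff_hc]
  split_ifs with h1
  · rfl
  · by_contra h2
    exact h1 (h m (Ne.symm h2))

theorem hc_diff {e e' : ℤ} {p : MvPolynomial (Fin n) k} (h : HomogOfDeg p e') (he : e ≠ e') :
    hc e p = 0 := by
  rw [hom_iff] at h
  ext m
  rw [coeff_hc]
  split_ifs with h1
  · by_contra h2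
    exact he (h1.symm.trans (h m h2))
  · simp

theorem hc_neg {e : ℤ} (he : e < 0) (p : MvPolynomial (Fin n) k) : hc e p = 0 := by
  unfold hc; rw [if_neg (by lia)]; rfl

theorem hc_sum (p : MvPolynomial (Fin n) k) (s : Finset ℤ)
    (hs : ∀ m ∈ p.support, ((m.degree : ℕ) : ℤ) ∈ s) : p = ∑ e ∈ s, hc e p := by
  ext m
  rw [coeff_sum]
  simp only [coeff_hc]
  rw [Finset.sum_ite_eq]
  split_ifs with h
  · rfl
  · by_contra h2
    exact h (hs m (MvPolynomial.mem_support_iff.2 h2))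

theorem hc_mul {a : ℤ} {q : MvPolynomial (Fin n) k} (hq : HomogOfDeg q a)
    (p : MvPolynomial (Fin n) k) (e : ℤ) : hc e (p * q) = hc (e - a) p * q := by
  classical
  set s := insert (e - a) (p.support.image (fun m => ((m.degree : ℕ) : ℤ)))
  have hp := hc_sum p s (fun m hm => by
    simp only [s, Finset.mem_insert, Finset.mem_image]; right; exact ⟨m, hm, rfl⟩)
  conv_lhs => rw [hp, Finset.sum_mul, map_sum]
  rw [Finset.sum_eq_single (e - a)]
  · have := hom_mul (hc_hom (e - a) p) hq
    rw [sub_add_cancel] at this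
    exact hc_same this
  · intro b _ hb
    exact hc_diff (hom_mul (hc_hom b p) hq) (by intro h; apply hb; lia)
  · intro h; exact absurd (Finset.mem_insert_self _ _) h

theorem hc_mul' {a : ℤ} {q : MvPolynomial (Fin n) k} (hq : HomogOfDeg q a)
    (p : MvPolynomial (Fin n) k) (e : ℤ) : hc e (q * p) = q * hc (e - a) p := by
  rw [mul_comm, hc_mul hq, mul_comm]

/-- closure of an ideal under homogeneous components -/
def HI (I : Ideal (MvPolynomial (Fin n) k)) : Prop := ∀ p ∈ I, ∀ e, hc e p ∈ I

theorem HI_of (I : Ideal (MvPolynomial (Fin n) k)) (h : IsHomogeneousIdeal I) : HI I := by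
  obtain ⟨T, hT, rfl⟩ := h
  intro p hp e
  induction hp using Submodule.span_induction with
  | mem x hx =>
    obtain ⟨a, ha⟩ := hT x hx
    by_cases hae : e = a
    · rw [hc_same (Or.inr ⟨a, hae.symm, ha⟩)]
      exact Ideal.subset_span hx
    · rw [hc_diff (Or.inr ⟨a, rfl, ha⟩) hae]
      exact zero_mem _
  | zero => simp
  | add x y _ _ hx hy => rw [map_add]; exact add_mem hx hy
  | smul a x hx' hx =>
    clear hx
    revert a
    induction hx' using Submodule.span_induction with
    | mem x hx =>
      intro r
      obtain ⟨a, ha⟩ := hT x hx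
      rw [smul_eq_mul, hc_mul (Or.inr ⟨a, rfl, ha⟩)]
      exact Ideal.mul_mem_left _ _ (Ideal.subset_span hx)
    | zero => intro a; simp
    | add x y _ _ hx hy => intro a; rw [smul_add, map_add]; exact add_mem (hx a) (hy a)
    | smul b x _ hx => intro a; rw [smul_smul]; exact hx _

/-- list of variables -/
noncomputable def Xl (k : Type u) [Field k] (n : ℕ) : List (MvPolynomial (Fin n) k) :=
  (List.finRange n).map X

theorem Xl_len : (Xl k n).length = n := by simp [Xl]

theorem mem_Xl (s : MvPolynomial (Fin n) k) : s ∈ Xl k n ↔ ∃ i, X i = s := by simp [Xl]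

/-- strong graded module condition -/
def GM {M : Type v} [AddCommGroup M] [Module (MvPolynomial (Fin n) k) M]
    (g : ℤ → AddSubgroup M) : Prop :=
  ∀ (p : MvPolynomial (Fin n) k) (a e : ℤ) (m : M), HomogOfDeg p a → m ∈ g e → p • m ∈ g (e + a)

theorem GM.gm {M : Type v} [AddCommGroup M] [Module (MvPolynomial (Fin n) k) M]
    {g : ℤ → AddSubgroup M} (h : GM (k := k) (n := n) g) : Gm (Xl k n) g := by
  intro r hr e m hm
  obtain ⟨i, rfl⟩ := (mem_Xl _).1 hr
  exact h _ _ _ _ (hom_X i) hm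

/-- grading on the free module with twists `D` -/
def gF {c : ℕ} (D : Fin c → ℤ) (e : ℤ) : AddSubgroup (Fin c → MvPolynomial (Fin n) k) where
  carrier := {v | ∀ r, HomogOfDeg (v r) (e - D r)}
  zero_mem' := fun _ => hom_zero _
  add_mem' := fun ha hb r => hom_add (ha r) (hb r)
  neg_mem' := fun ha r => hom_neg (ha r)

theorem mem_gF {c : ℕ} {D : Fin c → ℤ} {e : ℤ} {v : Fin c → MvPolynomial (Fin n) k} :
    v ∈ gF D e ↔ ∀ r, HomogOfDeg (v r) (e - D r) := Iff.rfl

theorem gF_GM {c : ℕ} (D : Fin c → ℤ) : GM (k := k) (n := n) (gF (n := n) (k := k) D) := by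
  intro p a e m hp hm r
  have := hom_mul hp (hm r)
  rw [show a + (e - D r) = e + a - D r by ring] at this
  exact this

/-- all monomials involve a variable in the list -/
def PP {c : ℕ} (il : List (Fin n)) (u : Fin c → MvPolynomial (Fin n) k) : Prop :=
  ∀ r m, coeff m (u r) ≠ 0 → ∃ i ∈ il, m i ≠ 0

theorem Kim_of_PP {c : ℕ} (D : Fin c → ℤ) (il : List (Fin n)) (e : ℤ)
    (u : Fin c → MvPolynomial (Fin n) k) (hu : u ∈ gF D (e + 1)) (hP : PP il u) :
    Kim (gF D) (il.map (X : Fin n → MvPolynomial (Fin n) k)) e u := by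
  induction il generalizing u with
  | nil =>
    funext r
    ext m
    by_contra h
    have := hP r m (by simpa using h)
    simp at this
  | cons j il ih =>
    refine ⟨fun r => (u r).modMonomial (Finsupp.single j 1),
      fun r => (u r).divMonomial (Finsupp.single j 1), ih _ ?_ ?_, ?_, ?_⟩
    · intro r
      have h := hu r
      rw [hom_iff] at h ⊢
      intro m hm
      apply h
      by_cases hle : Finsupp.single j 1 ≤ m
      · rw [coeff_modMonomial_of_le _ hle] at hm; exact absurd rfl hm
      · rwa [coeff_modMonomial_of_not_le _ hle] at hm
    · intro r m hm
      by_cases hle : Finsupp.single j 1 ≤ m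
      · rw [coeff_modMonomial_of_le _ hle] at hm; exact absurd rfl hm
      · rw [coeff_modMonomial_of_not_le _ hle] at hm
        obtain ⟨i, hi, h0⟩ := hP r m hm
        rcases List.mem_cons.1 hi with rfl | hi
        · exfalso; apply hle
          rw [Finsupp.single_le_iff]; lia
        · exact ⟨i, hi, h0⟩
    · intro r
      have h := hu r
      rw [hom_iff] at h ⊢
      intro m hm
      rw [coeff_divMonomial] at hm
      have := h _ hm
      rw [map_add, Finsupp.degree_single] at this
      push_cast at this
      lia
    · funext r
      have := divMonomial_add_modMonomial_single (u r) j
      simp only [Pi.add_apply, Pi.smul_apply, smul_eq_mul]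
      rw [add_comm]; exact this.symm

theorem PP_of_Kim {c : ℕ} (D : Fin c → ℤ) (il : List (Fin n)) (e : ℤ)
    (u : Fin c → MvPolynomial (Fin n) k) 
    (h : Kim (gF D) (il.map (X : Fin n → MvPolynomial (Fin n) k)) e u) : PP il u := by
  induction il generalizing u with
  | nil =>
    intro r m hm
    have : u = 0 := h
    subst this; simp at hm
  | cons j il ih =>
    obtain ⟨a, b, ha, hb, rfl⟩ := h
    intro r m hm
    by_cases h0 : coeff m (a r) = 0
    · refine ⟨j, by simp, ?_⟩
      simp only [Pi.add_apply, Pi.smul_apply, smul_eq_mul, coeff_add, h0, zero_add] at hm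
      rw [coeff_X_mul'] at hm
      intro hj
      simp [hj] at hm
    · obtain ⟨i, hi, h⟩ := ih a ha r m h0
      exact ⟨i, by simp [hi], h⟩

theorem PP_cancel {c : ℕ} (il : List (Fin n)) (j : Fin n) (hj : j ∉ il)
    (u : Fin c → MvPolynomial (Fin n) k)
    (h : PP il ((X j : MvPolynomial (Fin n) k) • u)) : PP il u := by
  intro r m hm
  obtain ⟨i, hi, h0⟩ := h r (Finsupp.single j 1 + m) (by
    simp only [Pi.smul_apply, smul_eq_mul]
    rwa [coeff_X_mul])
  refine ⟨i, hi, ?_⟩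
  have : j ≠ i := by rintro rfl; exact hj hi
  simpa [Finsupp.single_apply, this] using h0

theorem Van_free_aux {c : ℕ} (D : Fin c → ℤ) (il : List (Fin n)) (hnd : il.Nodup) (i e : ℤ)
    (hi : 1 ≤ i) : Van (il.map (X : Fin n → MvPolynomial (Fin n) k)) (gF (k := k) (n := n) D) i e := by
  induction il generalizing i e with
  | nil => exact Van_gt _ _ _ _ (by simp; lia)
  | cons j il ih =>
    have ih := ih (List.nodup_cons.1 hnd).2
    rw [List.map_cons]
    intro z hz hd
    obtain ⟨a, b, rfl⟩ := Kex _ _ z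
    rw [Kd_mk, Kmk_zero, Kmk_inj, neg_eq_zero] at hd
    obtain ⟨hd1, hd2⟩ := hd
    have hz1 := (mem_Kgr.1 hz).1
    have hz2 := (mem_Kgr.1 hz).2
    have key : ∃ b' ∈ Kgr (gF D) (il.map (X : Fin n → MvPolynomial (Fin n) k)) i (e - 1),
        Kd _ _ b' = b := by
      rcases eq_or_lt_of_le hi with rfl | hi'
      · obtain ⟨u, hu, rfl⟩ := K0_surj _ e b hz2
        have h1 : Kim (gF D) (il.map (X : Fin n → MvPolynomial (Fin n) k)) e
            ((X j : MvPolynomial (Fin n) k) • u) := by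
          rw [Kim_iff]
          refine ⟨-a, (Kgr _ _ _ _).neg_mem hz1, ?_⟩
          rw [map_neg, map_smul]
          exact neg_eq_of_add_eq_zero_right hd1
        have h2 := PP_cancel il j (List.nodup_cons.1 hnd).1 u (PP_of_Kim D il e _ h1)
        have h3 := Kim_of_PP D il (e - 1) u (by simpa using hu) h2
        exact (Kim_iff _ _ _).1 h3
      · obtain ⟨w, hw, h⟩ := ih (i - 1) e (by lia) b hz2 hd2
        exact ⟨w, by simpa using hw, h⟩
    obtain ⟨b', hb', rfl⟩ := key
    have hXb : (X j : MvPolynomial (Fin n) k) • b' ∈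
        Kgr (gF D) (il.map (X : Fin n → MvPolynomial (Fin n) k)) i e := by
      refine Kgr_smul _ (e - 1) e ?_ _ _ _ hb'
      intro m hm
      have := gF_GM D _ _ _ _ (hom_X j) hm
      rwa [sub_add_cancel] at this
    obtain ⟨w, hw, h⟩ := ih i e hi (a + (X j : MvPolynomial (Fin n) k) • b') (add_mem hz1 hXb)
      (by rw [map_add, map_smul, hd1])
    refine ⟨Kmk _ _ w (-b'), mem_Kgr.2 ⟨hw, (Kgr _ _ _ _).neg_mem (by simpa using hb')⟩, ?_⟩
    rw [Kd_mk, Kmk_inj, h]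
    simp

theorem Van_free {c : ℕ} (D : Fin c → ℤ) (i e : ℤ) (hi : 1 ≤ i) :
    Van (Xl k n) (gF (k := k) (n := n) D) i e := Van_free_aux D _ (List.nodup_finRange n) i e hi

theorem Kim_free {c : ℕ} (D : Fin c → ℤ) (e : ℤ) (u : Fin c → MvPolynomial (Fin n) k)
    (hu : u ∈ gF D e) (h0 : ∀ r, coeff 0 (u r) = 0) : Kim (gF D) (Xl k n) (e - 1) u := by
  apply Kim_of_PP D _ _ u (by simpa using hu)
  intro r m hm
  by_contra! h
  apply hm
  have : m = 0 := by
    ext i; simpa using h i (List.mem_finRange i)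
  rw [this, h0]

theorem Van_free_zero {c : ℕ} (D : Fin c → ℤ) (e : ℤ) (h : ∀ r, D r ≠ e) :
    Van (Xl k n) (gF (k := k) (n := n) D) 0 e := by
  rw [Van_zero_iff]
  intro u hu
  apply Kim_free D e u hu
  intro r
  by_contra h0
  have := (hom_iff _ _).1 (hu r) 0 h0
  simp at this
  exact h r (by lia)

end Poly
end DRM

namespace DRM
section Res
variable {k : Type u} [Field k] {n : ℕ}

/-- induced grading on a submodule -/
def gS {R : Type u} [CommRing R] {M : Type v} [AddCommGroup M] [Module R M] (N : Submodule R M)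
    (g : ℤ → AddSubgroup M) (e : ℤ) : AddSubgroup N := (g e).comap N.subtype.toAddMonoidHom

theorem mem_gS {R : Type u} [CommRing R] {M : Type v} [AddCommGroup M] [Module R M]
    {N : Submodule R M} {g : ℤ → AddSubgroup M} {e : ℤ} {x : N} : x ∈ gS N g e ↔ (x : M) ∈ g e :=
  Iff.rfl

theorem Ses_sub {R : Type u} [CommRing R] {B C : Type v} [AddCommGroup B] [Module R B]
    [AddCommGroup C] [Module R C] {gB : ℤ → AddSubgroup B} {gC : ℤ → AddSubgroup C}
    (ψ : B →ₗ[R] C) (N : Submodule R B) (hN : ∀ b, b ∈ N ↔ ψ b = 0)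
    (dB : ∀ e, ∀ b ∈ gB e, ψ b ∈ gC e) (surj : ∀ e, ∀ c ∈ gC e, ∃ b ∈ gB e, ψ b = c) :
    Ses (gS N gB) gB gC N.subtype ψ where
  inj := N.injective_subtype
  dA := fun _ _ h => h
  dB := dB
  zero := fun a => (hN _).1 a.2
  ex := fun e b hb h0 => ⟨⟨b, (hN b).2 h0⟩, hb, rfl⟩
  surj := surj

theorem gS_GM {M : Type v} [AddCommGroup M] [Module (MvPolynomial (Fin n) k) M]
    (N : Submodule (MvPolynomial (Fin n) k) M) {g : ℤ → AddSubgroup M}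
    (h : GM (k := k) (n := n) g) : GM (k := k) (n := n) (gS N g) :=
  fun p a e m hp hm => h p a e m hp hm

/-- grading on the quotient -/
def gQ (I : Ideal (MvPolynomial (Fin n) k)) (e : ℤ) : AddSubgroup (MvPolynomial (Fin n) k ⧸ I) where
  carrier := {x | ∃ p, HomogOfDeg p e ∧ Ideal.Quotient.mk I p = x}
  zero_mem' := ⟨0, hom_zero _, map_zero _⟩
  add_mem' := by
    rintro _ _ ⟨p, hp, rfl⟩ ⟨q, hq, rfl⟩
    exact ⟨p + q, hom_add hp hq, map_add _ _ _⟩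
  neg_mem' := by
    rintro _ ⟨p, hp, rfl⟩
    exact ⟨-p, hom_neg hp, map_neg _ _⟩

theorem smul_mk (I : Ideal (MvPolynomial (Fin n) k)) (p q : MvPolynomial (Fin n) k) :
    p • (Ideal.Quotient.mk I q) = Ideal.Quotient.mk I (p * q) := rfl

theorem gQ_GM (I : Ideal (MvPolynomial (Fin n) k)) : GM (k := k) (n := n) (gQ I) := by
  rintro p a e _ hp ⟨q, hq, rfl⟩
  refine ⟨p * q, ?_, rfl⟩
  rw [add_comm]; exact hom_mul hp hq

/-- componentwise homogeneous component -/
noncomputable def cp {c : ℕ} (D : Fin c → ℤ) (e : ℤ) (w : Fin c → MvPolynomial (Fin n) k) :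
    Fin c → MvPolynomial (Fin n) k := fun r => hc (e - D r) (w r)

theorem cp_mem {c : ℕ} (D : Fin c → ℤ) (e : ℤ) (w : Fin c → MvPolynomial (Fin n) k) :
    cp D e w ∈ gF D e := fun _ => hc_hom _ _

theorem cp_same {c : ℕ} (D : Fin c → ℤ) (e : ℤ) (w : Fin c → MvPolynomial (Fin n) k)
    (h : w ∈ gF D e) : cp D e w = w := funext fun r => hc_same (h r)

theorem cp_mulVec {c c' : ℕ} (D : Fin c → ℤ) (E : Fin c' → ℤ)
    (A : Matrix (Fin c) (Fin c') (MvPolynomial (Fin n) k))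
    (hA : ∀ r j, HomogOfDeg (A r j) (E j - D r)) (e : ℤ) (w : Fin c' → MvPolynomial (Fin n) k) :
    cp D e (A.mulVec w) = A.mulVec (cp E e w) := by
  funext r
  simp only [cp, Matrix.mulVec, dotProduct, map_sum]
  refine Finset.sum_congr rfl fun j _ => ?_
  rw [hc_mul' (hA r j), show e - D r - (E j - D r) = e - E j by ring]

theorem mulVec_mem {c c' : ℕ} (D : Fin c → ℤ) (E : Fin c' → ℤ)
    (A : Matrix (Fin c) (Fin c') (MvPolynomial (Fin n) k))
    (hA : ∀ r j, HomogOfDeg (A r j) (E j - D r)) (e : ℤ) (w : Fin c' → MvPolynomial (Fin n) k)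
    (hw : w ∈ gF E e) : A.mulVec w ∈ gF D e := by
  rw [← cp_same E e w hw, ← cp_mulVec D E A hA]
  exact cp_mem _ _ _

theorem cp_sum {c : ℕ} (D : Fin c → ℤ) (w : Fin c → MvPolynomial (Fin n) k) :
    ∃ s : Finset ℤ, w = ∑ e ∈ s, cp D e w := by
  classical
  refine ⟨Finset.univ.biUnion fun r => (w r).support.image fun m => ((m.degree : ℕ) : ℤ) + D r, ?_⟩
  funext r
  rw [Finset.sum_apply]
  simp only [cp]
  set s := Finset.univ.biUnion fun r => (w r).support.image fun m => ((m.degree : ℕ) : ℤ) + D r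
  have := hc_sum (w r) (s.image (fun e => e - D r)) (by
    intro m hm
    refine Finset.mem_image.2 ⟨((m.degree : ℕ) : ℤ) + D r, ?_, by ring⟩
    exact Finset.mem_biUnion.2 ⟨r, Finset.mem_univ _, Finset.mem_image.2 ⟨m, hm, rfl⟩⟩)
  rw [Finset.sum_image (by intro a _ b _ h; simpa using h)] at this
  exact this

/-- syzygy modules of a resolution -/
noncomputable def FZ {I : Ideal (MvPolynomial (Fin n) k)} (F : GradedFreeRes I) :
    (i : ℕ) → Submodule (MvPolynomial (Fin n) k) (Fin (F.b i) → MvPolynomial (Fin n) k)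
  | 0 => LinearMap.ker ((Submodule.mkQ I).comp (Fintype.linearCombination _ F.v))
  | i + 1 => LinearMap.ker (F.A i).mulVecLin

theorem FZ_range {I : Ideal (MvPolynomial (Fin n) k)} (F : GradedFreeRes I) (i : ℕ)
    (z : Fin (F.b i) → MvPolynomial (Fin n) k) :
    z ∈ FZ F i ↔ ∃ w, (F.A i).mulVec w = z := by
  cases i with
  | zero => exact F.hex0 z
  | succ i => exact F.hex i z

theorem FZ_Ses {I : Ideal (MvPolynomial (Fin n) k)} (F : GradedFreeRes I) (i : ℕ) :
    Ses (gS (FZ F (i + 1)) (gF (F.D (i + 1)))) (gF (F.D (i + 1))) (gS (FZ F i) (gF (F.D i)))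
      (FZ F (i + 1)).subtype
      ((F.A i).mulVecLin.codRestrict (FZ F i) (fun w => (FZ_range F i _).2 ⟨w, rfl⟩)) := by
  apply Ses_sub
  · intro b
    rw [← Subtype.coe_inj]
    exact Iff.rfl
  · intro e b hb
    exact mulVec_mem _ _ _ (F.hA i) e b hb
  · rintro e ⟨z, hz⟩ hze
    obtain ⟨w, rfl⟩ := (FZ_range F i z).1 hz
    refine ⟨cp _ e w, cp_mem _ _ _, Subtype.ext ?_⟩
    change (F.A i).mulVec (cp _ e w) = _
    rw [← cp_mulVec _ _ _ (F.hA i)]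
    exact cp_same _ _ _ hze

theorem FZ_Van {I : Ideal (MvPolynomial (Fin n) k)} (F : GradedFreeRes I) (j : ℕ) (i : ℕ) (e : ℤ)
    (h : ¬ Van (Xl k n) (gS (FZ F i) (gF (F.D i))) j e) :
    ∃ t : ℕ, t = i + 1 + j ∧ ∃ c, F.D t c = e + j := by
  induction j generalizing i e with
  | zero =>
    refine ⟨i + 1, rfl, ?_⟩
    by_contra! hc
    exact h ((FZ_Ses F i).right (gF_GM _).gm _ _ (Van_neg _ _ _ _ (by simp))
      (Van_free_zero _ _ (by simpa using hc)))
  | succ j ih =>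
    have h' : ¬ Van (Xl k n) (gS (FZ F (i + 1)) (gF (F.D (i + 1)))) j (e + 1) := by
      intro hv
      exact h ((FZ_Ses F i).right (gF_GM _).gm _ _ (by simpa using hv)
        (Van_free _ _ _ (by simp)))
    obtain ⟨t, ht, c, hc⟩ := ih (i + 1) (e + 1) h'
    exact ⟨t, by lia, c, by rw [hc]; push_cast; ring⟩

theorem res_Ses0 {I : Ideal (MvPolynomial (Fin n) k)} (hI : HI I) (F : GradedFreeRes I) :
    Ses (gS (FZ F 0) (gF (F.D 0))) (gF (F.D 0)) (gQ I) (FZ F 0).subtype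
      ((Submodule.mkQ I).comp (Fintype.linearCombination _ F.v)) := by
  apply Ses_sub
  · intro b; exact Iff.rfl
  · intro e b hb
    refine ⟨∑ r, b r * F.v r, ?_, rfl⟩
    have : ∀ r, HomogOfDeg (b r * F.v r) e := fun r => by
      have := hom_mul (hb r) (F.hv r)
      rwa [sub_add_cancel] at this
    exact Finset.sum_induction _ (fun p => HomogOfDeg p e) (fun _ _ => hom_add) (hom_zero _)
      (fun r _ => this r)
  · rintro e _ ⟨p, hp, rfl⟩
    obtain ⟨w, hw⟩ := F.haug (Ideal.Quotient.mk I p)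
    refine ⟨cp _ e w, cp_mem _ _ _, ?_⟩
    rw [Ideal.Quotient.eq] at hw
    have := hI _ hw e
    rw [map_sub, hc_same hp, map_sum] at this
    change Ideal.Quotient.mk I (∑ r, cp (F.D 0) e w r * F.v r) = _
    rw [Ideal.Quotient.eq]
    convert this using 3 with r
    rw [hc_mul (F.hv r)]; rfl

/-- every nonvanishing Koszul homology group is visible in every resolution -/
theorem res_lower {I : Ideal (MvPolynomial (Fin n) k)} (hI : HI I) (F : GradedFreeRes I) (i e : ℤ)
    (h : ¬ Van (Xl k n) (gQ I) i e) : ∃ (t : ℕ) (c : Fin (F.b t)), F.D t c - t = e := by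
  have hi : 0 ≤ i := by
    by_contra hi
    exact h (Van_neg _ _ _ _ (by lia))
  rcases eq_or_lt_of_le hi with rfl | hi
  · refine ⟨0, ?_⟩
    by_contra! hc
    exact h ((res_Ses0 hI F).right (gF_GM _).gm _ _ (Van_neg _ _ _ _ (by simp))
      (Van_free_zero _ _ (by simpa using hc)))
  · obtain ⟨j, rfl⟩ : ∃ j : ℕ, i = j + 1 := ⟨(i - 1).toNat, by lia⟩
    have h' : ¬ Van (Xl k n) (gS (FZ F 0) (gF (F.D 0))) j (e + 1) := by
      intro hv
      exact h ((res_Ses0 hI F).right (gF_GM _).gm _ _ (by simpa using hv)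
        (Van_free _ _ _ (by simp)))
    obtain ⟨t, ht, c, hc⟩ := FZ_Van F j 0 (e + 1) h'
    exact ⟨t, c, by rw [hc, ht]; push_cast; ring⟩

/-- extraction of homogeneous coefficients -/
def Dec {M : Type v} [AddCommGroup M] [Module (MvPolynomial (Fin n) k) M]
    (g : ℤ → AddSubgroup M) : Prop :=
  ∀ (c : ℕ) (E : Fin c → ℤ) (γ : Fin c → M), (∀ i, γ i ∈ g (E i)) → ∀ (e : ℤ)
    (p : Fin c → MvPolynomial (Fin n) k), (∑ i, p i • γ i) ∈ g e →
    ∑ i, p i • γ i = ∑ i, (cp E e p) i • γ i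

/-- finite homogeneous generation by `c` elements -/
def FG {M : Type v} [AddCommGroup M] [Module (MvPolynomial (Fin n) k) M]
    (g : ℤ → AddSubgroup M) (c : ℕ) : Prop :=
  ∃ (E : Fin c → ℤ) (γ : Fin c → M), (∀ i, γ i ∈ g (E i)) ∧
    Submodule.span (MvPolynomial (Fin n) k) (Set.range γ) = ⊤

section step
variable {M : Type u} [AddCommGroup M] [Module (MvPolynomial (Fin n) k) M]

theorem min_gens (g : ℤ → AddSubgroup M) (hfg : ∃ c, FG (k := k) (n := n) g c) :
    ∃ (c : ℕ) (E : Fin c → ℤ) (γ : Fin c → M), (∀ i, γ i ∈ g (E i)) ∧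
      Submodule.span (MvPolynomial (Fin n) k) (Set.range γ) = ⊤ ∧
      ∀ i, γ i ∉ Submodule.span (MvPolynomial (Fin n) k) (γ '' {i}ᶜ) := by
  classical
  obtain ⟨E, γ, h1, h2⟩ := Nat.find_spec hfg
  refine ⟨Nat.find hfg, E, γ, h1, h2, ?_⟩
  generalize hc : Nat.find hfg = c at E γ h1 h2
  intro i hi
  obtain ⟨c', rfl⟩ : ∃ c', c = c' + 1 := by
    cases c with
    | zero => exact i.elim0
    | succ c' => exact ⟨c', rfl⟩
  refine Nat.find_min hfg (m := c') (by lia) ⟨E ∘ i.succAbove, γ ∘ i.succAbove, fun j => h1 _, ?_⟩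
  rw [eq_top_iff, ← h2, Submodule.span_le]
  have himg : Set.range (γ ∘ i.succAbove) = γ '' {i}ᶜ := by
    rw [Set.range_comp, Fin.range_succAbove]
  rw [himg]
  rintro _ ⟨j, rfl⟩
  by_cases hj : j = i
  · subst hj; exact hi
  · exact Submodule.subset_span ⟨j, hj, rfl⟩

variable {g : ℤ → AddSubgroup M} {c : ℕ} {E : Fin c → ℤ} {γ : Fin c → M}

theorem gens_surj (hdec : Dec (k := k) (n := n) g) (h1 : ∀ i, γ i ∈ g (E i))
    (h2 : Submodule.span (MvPolynomial (Fin n) k) (Set.range γ) = ⊤) (e : ℤ) (m : M)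
    (hm : m ∈ g e) : ∃ p ∈ gF (k := k) (n := n) E e, Fintype.linearCombination _ γ p = m := by
  have : m ∈ Submodule.span (MvPolynomial (Fin n) k) (Set.range γ) := by rw [h2]; trivial
  rw [← Fintype.range_linearCombination] at this
  obtain ⟨p, rfl⟩ := this
  refine ⟨cp E e p, cp_mem _ _ _, ?_⟩
  exact (hdec c E γ h1 e p hm).symm

theorem gens_van (hdec : Dec (k := k) (n := n) g) (h1 : ∀ i, γ i ∈ g (E i))
    (h2 : Submodule.span (MvPolynomial (Fin n) k) (Set.range γ) = ⊤)
    (h3 : ∀ i, γ i ∉ Submodule.span (MvPolynomial (Fin n) k) (γ '' {i}ᶜ)) (i : Fin c) :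
    ¬ Van (Xl k n) g 0 (E i) := by
  rw [Van_zero_iff]
  intro h
  apply h3 i
  have key : ∀ (l : List (MvPolynomial (Fin n) k)) (m : M), Kim g l (E i - 1) m →
      m ∈ Submodule.span (MvPolynomial (Fin n) k) (γ '' {i}ᶜ) := by
    intro l
    induction l with
    | nil => rintro m rfl; exact zero_mem _
    | cons r l ih =>
      rintro _ ⟨a, b, ha, hb, rfl⟩
      refine add_mem (ih a ha) (Submodule.smul_mem _ _ ?_)
      obtain ⟨p, hp, rfl⟩ := gens_surj hdec h1 h2 _ b hb
      rw [Fintype.linearCombination_apply]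
      refine Submodule.sum_mem _ fun j _ => ?_
      by_cases hj : j = i
      · subst hj
        have hpj := hp j
        rw [show E j - 1 - E j = -1 by ring] at hpj
        have : p j = 0 := by
          rw [← hc_same hpj, hc_neg (by norm_num)]
        rw [this, zero_smul]; exact zero_mem _
      · exact Submodule.smul_mem _ _ (Submodule.subset_span ⟨j, hj, rfl⟩)
  exact key _ _ (h _ (h1 i))

theorem gens_min (h3 : ∀ i, γ i ∉ Submodule.span (MvPolynomial (Fin n) k) (γ '' {i}ᶜ)) (e : ℤ)
    (z : Fin c → MvPolynomial (Fin n) k) (hz : z ∈ gF E e)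
    (h0 : Fintype.linearCombination (MvPolynomial (Fin n) k) γ z = 0) (i : Fin c) :
    coeff 0 (z i) = 0 := by
  by_contra hne
  apply h3 i
  have hdeg : (0 : ℤ) = e - E i := by
    have := (hom_iff _ _).1 (hz i) 0 hne
    simpa using this
  have hzi : z i = C (coeff 0 (z i)) := by
    ext m
    rw [coeff_C]
    split_ifs with hm
    · rw [hm]
    · by_contra h
      have h' := (hom_iff _ _).1 (hz i) m h
      rw [← hdeg] at h'
      have : m.degree = 0 := by exact_mod_cast h'
      exact hm ((Finsupp.degree_eq_zero_iff m).1 this).symm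
  rw [Fintype.linearCombination_apply, ← Finset.add_sum_erase _ _ (Finset.mem_univ i)] at h0
  have h4 : z i • γ i ∈ Submodule.span (MvPolynomial (Fin n) k) (γ '' {i}ᶜ) := by
    rw [eq_neg_of_add_eq_zero_left h0]
    refine Submodule.neg_mem _ (Submodule.sum_mem _ fun j hj => ?_)
    exact Submodule.smul_mem _ _ (Submodule.subset_span ⟨j, Finset.ne_of_mem_erase hj, rfl⟩)
  have h5 := Submodule.smul_mem _ (C (coeff 0 (z i))⁻¹) h4
  rw [smul_smul] at h5
  conv at h5 => enter [2, 1, 2]; rw [hzi]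
  rw [← C_mul, inv_mul_cancel₀ hne, C_1, one_smul] at h5
  exact h5

theorem gens_Ses (hgm : GM (k := k) (n := n) g) (hdec : Dec (k := k) (n := n) g)
    (h1 : ∀ i, γ i ∈ g (E i))
    (h2 : Submodule.span (MvPolynomial (Fin n) k) (Set.range γ) = ⊤)
    (Z : Submodule (MvPolynomial (Fin n) k) (Fin c → MvPolynomial (Fin n) k))
    (hZ : ∀ z, z ∈ Z ↔ Fintype.linearCombination (MvPolynomial (Fin n) k) γ z = 0) :
    Ses (gS Z (gF E)) (gF E) g Z.subtype (Fintype.linearCombination (MvPolynomial (Fin n) k) γ) := by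
  refine Ses_sub _ _ hZ ?_ (gens_surj hdec h1 h2)
  intro e b hb
  rw [Fintype.linearCombination_apply]
  refine sum_mem fun i _ => ?_
  have := hgm _ _ _ _ (hb i) (h1 i)
  rwa [add_sub_cancel] at this

theorem gens_syz (hgm : GM (k := k) (n := n) g) (hdec : Dec (k := k) (n := n) g)
    (h1 : ∀ i, γ i ∈ g (E i))
    (h2 : Submodule.span (MvPolynomial (Fin n) k) (Set.range γ) = ⊤)
    (h3 : ∀ i, γ i ∉ Submodule.span (MvPolynomial (Fin n) k) (γ '' {i}ᶜ))
    (Z : Submodule (MvPolynomial (Fin n) k) (Fin c → MvPolynomial (Fin n) k))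
    (hZ : ∀ z, z ∈ Z ↔ Fintype.linearCombination (MvPolynomial (Fin n) k) γ z = 0)
    (i e : ℤ) (hv : Van (Xl k n) g (i + 1) (e - 1)) (hi : 0 ≤ i) :
    Van (Xl k n) (gS Z (gF E)) i e := by
  have S := gens_Ses hgm hdec h1 h2 Z hZ
  rcases eq_or_lt_of_le hi with rfl | hi
  · refine S.left' (gF_GM _).gm _ _ ?_ hv
    intro u hu hd
    obtain ⟨m, hm, rfl⟩ := K0_surj _ _ u hu
    have : Kmap Z.subtype (Xl k n) (K0 _ (Xl k n) m) = K0 _ (Xl k n) (m : Fin c → MvPolynomial (Fin n) k) := by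
      generalize Xl k n = l
      induction l with
      | nil => rfl
      | cons r l ih => rw [K0_cons, Kmap_mk, ih, map_zero]; rfl
    rw [this]
    exact (Kim_iff _ _ _).1 (Kim_free (k := k) (n := n) E e m.1 hm (gens_min h3 e m.1 hm ((hZ _).1 m.2)))
  · exact S.left (gF_GM _).gm _ _ (Van_free _ _ _ (by lia)) hv

end step

end Res
end DRM

namespace DRM
section MinRes
variable {k : Type u} [Field k] {n : ℕ}

/-- a homogeneous submodule of a graded free module -/
structure State (k : Type u) [Field k] (n : ℕ) where
  c : ℕ
  E : Fin c → ℤ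
  Z : Submodule (MvPolynomial (Fin n) k) (Fin c → MvPolynomial (Fin n) k)
  good : ∀ z ∈ Z, ∀ e, cp E e z ∈ Z

/-- the grading of the submodule in a state -/
noncomputable def State.g (s : State k n) : ℤ → AddSubgroup s.Z := gS s.Z (gF s.E)

theorem State.gm (s : State k n) : GM (k := k) (n := n) s.g := gS_GM _ (gF_GM _)

theorem State.dec (s : State k n) : Dec (k := k) (n := n) s.g := by
  intro c E γ hγ e p hp
  have key := cp_mulVec s.E E (Matrix.of fun r j => (γ j).1 r) (fun r j => hγ j r) e p
  have h1 : ∀ q : Fin c → MvPolynomial (Fin n) k,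
      (Matrix.of fun r j => (γ j).1 r).mulVec q = ((∑ i, q i • γ i : s.Z) : Fin s.c → _) := by
    intro q
    funext r
    simp [Matrix.mulVec, dotProduct, mul_comm]
  rw [h1, h1] at key
  exact Subtype.ext ((cp_same _ _ _ hp).symm.trans key)

theorem FG_of_span {M : Type v} [AddCommGroup M] [Module (MvPolynomial (Fin n) k) M]
    [Module.Finite (MvPolynomial (Fin n) k) M]
    (g : ℤ → AddSubgroup M)
    (h : Submodule.span (MvPolynomial (Fin n) k) {m : M | ∃ e, m ∈ g e} = ⊤) :
    ∃ c, FG (k := k) (n := n) g c := by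
  have hfg : (Submodule.span (MvPolynomial (Fin n) k) {m : M | ∃ e, m ∈ g e}).FG := by
    rw [h]; exact Module.Finite.fg_top
  rw [Submodule.fg_span_iff_fg_span_finset_subset] at hfg
  obtain ⟨T, hT, hs⟩ := hfg
  have hT' : ∀ x : T, ∃ e, (x : M) ∈ g e := fun x => hT x.2
  choose E hE using hT'
  refine ⟨T.card, fun i => E (T.equivFin.symm i), fun i => (T.equivFin.symm i : M),
    fun i => hE _, ?_⟩
  rw [← h, hs]
  congr 1
  ext x
  constructor
  · rintro ⟨i, rfl⟩; exact (T.equivFin.symm i).2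
  · intro hx; exact ⟨T.equivFin ⟨x, hx⟩, by simp⟩

theorem State.fg (s : State k n) : ∃ c, FG (k := k) (n := n) s.g c := by
  apply FG_of_span
  rw [eq_top_iff]
  rintro z -
  obtain ⟨T, hT⟩ := cp_sum s.E z.1
  have : z = ∑ e ∈ T, (⟨cp s.E e z.1, s.good _ z.2 e⟩ : s.Z) := by
    apply Subtype.ext
    rw [AddSubmonoidClass.coe_finsetSum]
    exact hT
  rw [this]
  refine Submodule.sum_mem _ fun e _ => Submodule.subset_span ⟨e, cp_mem _ _ _⟩

theorem step {M : Type u} [AddCommGroup M] [Module (MvPolynomial (Fin n) k) M]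
    (g : ℤ → AddSubgroup M) (hgm : GM (k := k) (n := n) g) (hdec : Dec (k := k) (n := n) g)
    (hfg : ∃ c, FG (k := k) (n := n) g c) :
    ∃ (t : State k n) (γ : Fin t.c → M), (∀ i, γ i ∈ g (t.E i)) ∧
      Submodule.span (MvPolynomial (Fin n) k) (Set.range γ) = ⊤ ∧
      (∀ z, z ∈ t.Z ↔ Fintype.linearCombination (MvPolynomial (Fin n) k) γ z = 0) ∧
      (∀ j, ¬ Van (Xl k n) g 0 (t.E j)) ∧
      (∀ i e : ℤ, 0 ≤ i → Van (Xl k n) g (i + 1) (e - 1) → Van (Xl k n) t.g i e) := by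
  obtain ⟨c, E, γ, h1, h2, h3⟩ := min_gens g hfg
  refine ⟨⟨c, E, LinearMap.ker (Fintype.linearCombination (MvPolynomial (Fin n) k) γ), ?_⟩, γ,
    h1, h2, fun z => LinearMap.mem_ker, gens_van hdec h1 h2 h3, ?_⟩
  · intro z hz e
    rw [LinearMap.mem_ker, Fintype.linearCombination_apply] at hz ⊢
    rw [← hdec c E γ h1 e z (by rw [hz]; exact zero_mem _), hz]
  · intro i e hi hv
    exact gens_syz hgm hdec h1 h2 h3 _ (fun z => LinearMap.mem_ker) i e hv hi

theorem step_state (s : State k n) : ∃ (t : State k n)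
    (B : Matrix (Fin s.c) (Fin t.c) (MvPolynomial (Fin n) k)),
    (∀ r j, HomogOfDeg (B r j) (t.E j - s.E r)) ∧ (∀ z, z ∈ s.Z ↔ ∃ w, B.mulVec w = z) ∧
    (∀ z, z ∈ t.Z ↔ B.mulVec z = 0) ∧ (∀ j, ¬ Van (Xl k n) s.g 0 (t.E j)) ∧
      (∀ i e : ℤ, 0 ≤ i → Van (Xl k n) s.g (i + 1) (e - 1) → Van (Xl k n) t.g i e) := by
  obtain ⟨t, γ, h1, h2, h3, h4, h5⟩ := step s.g s.gm s.dec s.fg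
  have hB : ∀ q : Fin t.c → MvPolynomial (Fin n) k,
      (Matrix.of fun r j => (γ j).1 r).mulVec q =
        ((Fintype.linearCombination (MvPolynomial (Fin n) k) γ q : s.Z) : Fin s.c → _) := by
    intro q
    funext r
    simp [Matrix.mulVec, dotProduct, mul_comm, Fintype.linearCombination_apply]
  refine ⟨t, Matrix.of fun r j => (γ j).1 r, fun r j => h1 j r, ?_, ?_, h4, h5⟩
  · intro z
    constructor
    · intro hz
      have : (⟨z, hz⟩ : s.Z) ∈ Submodule.span (MvPolynomial (Fin n) k) (Set.range γ) := by
        rw [h2]; trivial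
      rw [← Fintype.range_linearCombination] at this
      obtain ⟨p, hp⟩ := this
      exact ⟨p, by rw [hB, hp]⟩
    · rintro ⟨w, rfl⟩
      rw [hB]; exact Subtype.property _
  · intro z
    rw [h3, hB]
    simp

theorem gQ_dec {I : Ideal (MvPolynomial (Fin n) k)} (hI : HI I) :
    Dec (k := k) (n := n) (gQ I) := by
  rintro c E γ hγ e p ⟨q, hq, hqe⟩
  choose v hv hvγ using hγ
  have h1 : ∀ q : Fin c → MvPolynomial (Fin n) k,
      ∑ i, q i • γ i = Ideal.Quotient.mk I (∑ i, q i * v i) := by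
    intro q
    rw [map_sum]
    refine Finset.sum_congr rfl fun i _ => ?_
    rw [← hvγ, smul_mk]
  rw [h1] at hqe
  rw [h1, h1, ← hqe]
  rw [Ideal.Quotient.eq] at hqe ⊢
  have := hI _ hqe e
  rw [map_sub, hc_same hq, map_sum] at this
  convert this using 3 with r
  rw [hc_mul (hv r)]; rfl

theorem gQ_fg (I : Ideal (MvPolynomial (Fin n) k)) : ∃ c, FG (k := k) (n := n) (gQ I) c := by
  apply FG_of_span
  rw [eq_top_iff]
  rintro z -
  obtain ⟨p, rfl⟩ := Ideal.Quotient.mk_surjective z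
  have : Ideal.Quotient.mk I p = p • Ideal.Quotient.mk I 1 := by rw [smul_mk, mul_one]
  rw [this]
  refine Submodule.smul_mem _ _ (Submodule.subset_span ⟨0, 1, ?_, rfl⟩)
  exact Or.inr ⟨0, rfl, isHomogeneous_one _ _⟩

/-- sequence of minimal syzygies -/
noncomputable def stt (s : State k n) : ℕ → State k n
  | 0 => s
  | i + 1 => Classical.choose (step_state (stt s i))

theorem stt_spec (s : State k n) (i : ℕ) :
    ∃ B : Matrix (Fin (stt s i).c) (Fin (stt s (i + 1)).c) (MvPolynomial (Fin n) k),
    (∀ r j, HomogOfDeg (B r j) ((stt s (i + 1)).E j - (stt s i).E r)) ∧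
    (∀ z, z ∈ (stt s i).Z ↔ ∃ w, B.mulVec w = z) ∧
    (∀ z, z ∈ (stt s (i + 1)).Z ↔ B.mulVec z = 0) ∧
    (∀ j, ¬ Van (Xl k n) (stt s i).g 0 ((stt s (i + 1)).E j)) ∧
      (∀ a e : ℤ, 0 ≤ a → Van (Xl k n) (stt s i).g (a + 1) (e - 1) →
        Van (Xl k n) (stt s (i + 1)).g a e) :=
  Classical.choose_spec (step_state (stt s i))

theorem min_res {I : Ideal (MvPolynomial (Fin n) k)} (hI : HI I) :
    ∃ F : GradedFreeRes I, ∀ (i : ℕ) (j : Fin (F.b i)), ¬ Van (Xl k n) (gQ I) i (F.D i j - i) := by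
  obtain ⟨s, γ, h1, h2, h3, h4, h5⟩ := step (gQ I) (gQ_GM I) (gQ_dec hI) (gQ_fg I)
  choose v hv hvγ using h1
  choose B hB1 hB2 hB3 hB4 hB5 using stt_spec s
  have hvan : ∀ (i : ℕ) (a e : ℤ), 0 ≤ a → ¬ Van (Xl k n) (stt s i).g a e →
      ¬ Van (Xl k n) (gQ I) (a + i + 1) (e - i - 1) := by
    intro i
    induction i with
    | zero =>
      intro a e ha h h'
      exact h (h5 a e ha (by simpa using h'))
    | succ i ih =>
      intro a e ha h h'
      refine ih (a + 1) (e - 1) (by lia) (fun h'' => h (hB5 i a e ha h'')) ?_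
      convert h' using 1 <;> push_cast <;> ring
  have hD : ∀ (i : ℕ) (j : Fin (stt s i).c), ¬ Van (Xl k n) (gQ I) i ((stt s i).E j - i) := by
    intro i j
    cases i with
    | zero =>
      have := h4 j
      rw [← sub_zero (s.E j)] at this
      exact this
    | succ i =>
      have := hvan i 0 _ le_rfl (hB4 i j)
      convert this using 2 <;> push_cast <;> ring
  have hmk : ∀ w : Fin s.c → MvPolynomial (Fin n) k, Ideal.Quotient.mk I (∑ r, w r * v r) =
      Fintype.linearCombination (MvPolynomial (Fin n) k) γ w := by
    intro w
    rw [map_sum, Fintype.linearCombination_apply]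
    refine Finset.sum_congr rfl fun i _ => ?_
    rw [← hvγ, smul_mk]
  refine ⟨⟨n, fun i => (stt s i).c, ?_, fun i => (stt s i).E, B, v, hv, hB1, ?_, ?_, ?_⟩, hD⟩
  · intro i hi
    by_contra h0
    have : 0 < (stt s i).c := Nat.pos_of_ne_zero h0
    exact hD i ⟨0, this⟩ (Van_gt _ _ _ _ (by rw [Xl_len]; exact_mod_cast hi))
  · intro x
    have : x ∈ Submodule.span (MvPolynomial (Fin n) k) (Set.range γ) := by
      rw [h2]; trivial
    rw [← Fintype.range_linearCombination] at this
    obtain ⟨p, hp⟩ := this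
    exact ⟨p, by rw [← hp]; exact hmk p⟩
  · intro z
    have := hB2 0 z
    refine Iff.trans ?_ this
    refine Iff.trans ?_ (h3 z).symm
    exact Eq.congr (hmk z) rfl
  · intro i z
    exact (hB3 i z).symm.trans (hB2 (i + 1) z)

/-- regularity bound set -/
theorem reg_set {I : Ideal (MvPolynomial (Fin n) k)} (hI : HI I) (r : ℤ) :
    (∃ F : GradedFreeRes I, ∀ (i : ℕ) (j : Fin (F.b i)), F.D i j - (i : ℤ) ≤ r) ↔
      ∀ i e, ¬ Van (Xl k n) (gQ I) i e → e ≤ r := by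
  constructor
  · rintro ⟨F, hF⟩ i e h
    obtain ⟨t, c, rfl⟩ := res_lower hI F i e h
    exact hF t c
  · intro h
    obtain ⟨F, hF⟩ := min_res hI
    exact ⟨F, fun i j => h _ _ (hF i j)⟩

theorem reg_bdd {I : Ideal (MvPolynomial (Fin n) k)} (hI : HI I) :
    ∃ r, ∀ i e, ¬ Van (Xl k n) (gQ I) i e → e ≤ r := by
  obtain ⟨F, hF⟩ := min_res hI
  classical
  let T : Finset ℤ := (Finset.range (F.len + 1)).biUnion fun i =>
    (Finset.univ : Finset (Fin (F.b i))).image fun j => F.D i j - i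
  obtain ⟨r, hr⟩ := T.bddAbove
  refine ⟨r, (reg_set hI r).1 ⟨F, fun i j => hr ?_⟩⟩
  have hi : i ≤ F.len := by
    by_contra hi
    have := F.hb i (by lia)
    have := j.2
    lia
  simp only [T, Finset.coe_biUnion, Set.mem_iUnion, Finset.coe_image, Set.mem_image]
  exact ⟨i, by simpa using hi, j, by simp⟩

theorem van00 {I : Ideal (MvPolynomial (Fin n) k)} (h : I ≠ ⊤) : ¬ Van (Xl k n) (gQ I) 0 0 := by
  rw [Van_zero_iff]
  intro hv
  have h1 := hv (Ideal.Quotient.mk I 1) ⟨1, Or.inr ⟨0, rfl, isHomogeneous_one _ _⟩, rfl⟩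
  have key : ∀ (l : List (MvPolynomial (Fin n) k)) m, Kim (gQ I) l (0 - 1) m → m = 0 := by
    intro l
    induction l with
    | nil => rintro m rfl; rfl
    | cons r l ih =>
      rintro _ ⟨a, b, ha, ⟨q, hq, rfl⟩, rfl⟩
      have : q = 0 := by rw [← hc_same hq, hc_neg (by norm_num)]
      rw [ih a ha, this, map_zero, smul_zero, add_zero]
  have h2 := key _ _ h1
  rw [Ideal.Quotient.eq_zero_iff_mem] at h2
  exact h ((Ideal.eq_top_iff_one I).2 h2)

/-- characterization of the regularity -/
theorem reg_spec {I : Ideal (MvPolynomial (Fin n) k)} (hI : HI I) (hT : I ≠ ⊤) :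
    (∃ i, ¬ Van (Xl k n) (gQ I) i (regQuot I)) ∧
      ∀ i e, ¬ Van (Xl k n) (gQ I) i e → e ≤ regQuot I := by
  have hset : regQuot I = sInf {r : ℤ | ∀ i e, ¬ Van (Xl k n) (gQ I) i e → e ≤ r} := by
    unfold regQuot
    congr 1
    ext r
    exact reg_set hI r
  have hbd : BddBelow {r : ℤ | ∀ i e, ¬ Van (Xl k n) (gQ I) i e → e ≤ r} :=
    ⟨0, fun r hr => hr 0 0 (van00 hT)⟩
  have hmem : sInf {r : ℤ | ∀ i e, ¬ Van (Xl k n) (gQ I) i e → e ≤ r} ∈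
      {r : ℤ | ∀ i e, ¬ Van (Xl k n) (gQ I) i e → e ≤ r} := Int.csInf_mem (reg_bdd hI) hbd
  rw [← hset] at hmem
  refine ⟨?_, hmem⟩
  by_contra! hno
  have : regQuot I - 1 ∈ {r : ℤ | ∀ i e, ¬ Van (Xl k n) (gQ I) i e → e ≤ r} := by
    intro i e h
    have h1 := hmem i e h
    have h2 : e ≠ regQuot I := by rintro rfl; exact h (hno i)
    lia
  have := csInf_le hbd this
  rw [← hset] at this
  lia

end MinRes
end DRM

namespace DRM
section Depth
open scoped Pointwise
variable {k : Type u} [Field k] {n : ℕ}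

/-- trivial grading -/
def gT (M : Type v) [AddCommGroup M] : ℤ → AddSubgroup M := fun _ => ⊤

theorem Kgr_gT {R : Type u} [CommRing R] (M : Type v) [AddCommGroup M] [Module R M] (l : List R)
    (i e e' : ℤ) : Kgr (gT M) l i e = Kgr (gT M) l i e' := by
  induction l generalizing i with
  | nil => rfl
  | cons r l ih =>
    simp only [Kgr]
    rw [ih i, ih (i - 1)]

theorem Van_gT {R : Type u} [CommRing R] {M : Type v} [AddCommGroup M] [Module R M] {l : List R}
    {i e : ℤ} (e' : ℤ) (h : Van l (gT M) i e) : Van l (gT M) i e' := by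
  unfold Van at *
  rw [Kgr_gT M l i e' e, Kgr_gT M l (i + 1) (e' - 1) (e - 1)]
  exact h

theorem gT_Gm {R : Type u} [CommRing R] (M : Type v) [AddCommGroup M] [Module R M] (l : List R) :
    Gm l (gT M) := fun _ _ _ _ _ => trivial

theorem Kmap_lsmul {R : Type u} [CommRing R] (M : Type v) [AddCommGroup M] [Module R M]
    (r : R) (l : List R) (z : Kos M l) : Kmap (LinearMap.lsmul R M r) l z = r • z := by
  induction l with
  | nil => rfl
  | cons s l ih =>
    obtain ⟨a, b, rfl⟩ := Kex s l z
    rw [Kmap_mk, ih, ih, Kmk_smul]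

theorem mx_coef (r : MvPolynomial (Fin n) k) (hr : r ∈ mxIdeal k n) :
    ∃ c : MvPolynomial (Fin n) k → MvPolynomial (Fin n) k,
      ((Xl k n).map (fun s => s * c s)).sum = r := by
  unfold mxIdeal at hr
  rw [Ideal.mem_span_range_iff_exists_fun] at hr
  obtain ⟨c, rfl⟩ := hr
  refine ⟨Function.extend X c 0, ?_⟩
  have hinj : Function.Injective (X : Fin n → MvPolynomial (Fin n) k) := X_injective
  simp only [Xl, List.map_map, Function.comp_def, hinj.extend_apply]
  rw [← List.ofFn_eq_map, List.sum_ofFn]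
  exact Finset.sum_congr rfl fun i _ => mul_comm _ _

theorem reg_Ses {M : Type v} [AddCommGroup M] [Module (MvPolynomial (Fin n) k) M]
    (r : MvPolynomial (Fin n) k) (hr : IsSMulRegular M r) :
    Ses (gT M) (gT M) (gT (QuotSMulTop r M)) (LinearMap.lsmul _ M r)
      (Submodule.mkQ (r • (⊤ : Submodule (MvPolynomial (Fin n) k) M))) where
  inj := hr
  dA := fun _ _ _ => trivial
  dB := fun _ _ _ => trivial
  zero := fun a => by
    rw [Submodule.mkQ_apply, Submodule.Quotient.mk_eq_zero]
    exact Submodule.smul_mem_pointwise_smul _ _ _ trivial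
  ex := fun e b _ h => by
    rw [Submodule.mkQ_apply, Submodule.Quotient.mk_eq_zero,
      Submodule.mem_smul_pointwise_iff_exists] at h
    obtain ⟨a, _, ha⟩ := h
    exact ⟨a, trivial, ha⟩
  surj := fun e c _ => by
    obtain ⟨b, rfl⟩ := Submodule.mkQ_surjective _ c
    exact ⟨b, trivial, rfl⟩

theorem reg_null {M : Type v} [AddCommGroup M] [Module (MvPolynomial (Fin n) k) M]
    (r : MvPolynomial (Fin n) k) (hm : r ∈ mxIdeal k n) (i e : ℤ) (u : Kos M (Xl k n))
    (hu : u ∈ Kgr (gT M) (Xl k n) i e) (hd : Kd M (Xl k n) u = 0) :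
    ∃ w ∈ Kgr (gT M) (Xl k n) (i + 1) (e - 1), Kd M (Xl k n) w = r • u := by
  obtain ⟨c, hc⟩ := mx_coef r hm
  obtain ⟨w, hw, h⟩ := Knull (g := gT M) (Xl k n) (fun s hs => hs) c i e u
    (fun s _ => Kgr_smul (g := gT M) (c s) e e (fun _ _ => trivial) _ i u hu) hd
  refine ⟨w, ?_, by rw [h, hc]⟩
  rw [Kgr_gT M _ _ (e - 1) e]; exact hw

theorem reg_van {M : Type v} [AddCommGroup M] [Module (MvPolynomial (Fin n) k) M]
    (r : MvPolynomial (Fin n) k) (hr : IsSMulRegular M r) (hm : r ∈ mxIdeal k n) (i : ℤ)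
    (h : ¬ Van (Xl k n) (gT M) i 0) : ¬ Van (Xl k n) (gT (QuotSMulTop r M)) (i + 1) 0 := by
  intro hv
  refine h ((reg_Ses r hr).left' (gT_Gm _ _) i 0 ?_ (Van_gT _ hv))
  intro u hu hd
  rw [Kmap_lsmul]
  exact reg_null r hm i 0 u hu hd

theorem wr_le (rs : List (MvPolynomial (Fin n) k)) (hrs : ∀ r ∈ rs, r ∈ mxIdeal k n)
    {M : Type v} [AddCommGroup M] [Module (MvPolynomial (Fin n) k) M]
    (h : RingTheory.Sequence.IsWeaklyRegular M rs) (i : ℤ)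
    (hv : ¬ Van (Xl k n) (gT M) i 0) : i + rs.length ≤ n := by
  induction rs generalizing M i with
  | nil =>
    by_contra hc
    refine hv (Van_gt _ _ _ _ ?_)
    rw [Xl_len]
    simpa using hc
  | cons r rs ih =>
    rw [RingTheory.Sequence.isWeaklyRegular_cons_iff] at h
    have := ih (fun s hs => hrs s (by simp [hs])) h.2 (i + 1)
      (reg_van r h.1 (hrs r (by simp)) i hv)
    push_cast [List.length_cons]
    lia

theorem ex_reg {M : Type v} [AddCommGroup M] [Module (MvPolynomial (Fin n) k) M]
    [Module.Finite (MvPolynomial (Fin n) k) M] (h : Van (Xl k n) (gT M) n 0) :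
    ∃ r ∈ mxIdeal k n, IsSMulRegular M r := by
  have hs : ∀ m : M, (∀ r ∈ Xl k n, r • m = 0) → m = 0 := by
    intro m hm
    obtain ⟨w, hw, hwz⟩ := h (Kt M (Xl k n) m)
      (by
        have := Kt_mem (g := gT M) (Xl k n) 0 m trivial
        rwa [Xl_len] at this) (Kt_d _ m hm)
    have : w = 0 := Kgr_gt _ _ _ (by rw [Xl_len]; lia) w hw
    rw [this, map_zero] at hwz
    exact Kt_inj _ _ hwz.symm
  by_contra! hno
  have hsub : ((mxIdeal k n : Ideal (MvPolynomial (Fin n) k)) : Set (MvPolynomial (Fin n) k)) ⊆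
      ⋃ P ∈ associatedPrimes (MvPolynomial (Fin n) k) M, ((id P : Ideal _) : Set _) := by
    intro r hr
    simp_rw [id]
    rw [biUnion_associatedPrimes_eq_compl_regular]
    exact hno r hr
  obtain ⟨P, hP, hle⟩ := (Ideal.subset_union_prime_finite (associatedPrimes.finite _ _)
    (f := id) 0 0 fun _ h _ _ ↦ h.1).1 hsub
  rw [AssociatedPrimes.mem_iff, isAssociatedPrime_iff] at hP
  obtain ⟨prime, x, hx⟩ := hP
  have hx0 : x = 0 := by
    apply hs
    intro r hr
    obtain ⟨i, rfl⟩ := (mem_Xl r).1 hr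
    have : (X i : MvPolynomial (Fin n) k) ∈ P := hle (Ideal.subset_span ⟨i, rfl⟩)
    rw [hx, Submodule.mem_colon_singleton] at this
    exact this
  apply prime.ne_top
  rw [hx, hx0]
  simp

theorem ex_wr (m : ℕ) {M : Type v} [AddCommGroup M] [Module (MvPolynomial (Fin n) k) M]
    [Module.Finite (MvPolynomial (Fin n) k) M] (p : ℤ) (hp : p + m = n)
    (h1 : ¬ Van (Xl k n) (gT M) p 0) (h2 : ∀ i, p < i → Van (Xl k n) (gT M) i 0) :
    ∃ rs : List (MvPolynomial (Fin n) k), rs.length = m ∧ (∀ r ∈ rs, r ∈ mxIdeal k n) ∧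
      RingTheory.Sequence.IsWeaklyRegular M rs := by
  induction m generalizing M p with
  | zero => exact ⟨[], rfl, by simp, RingTheory.Sequence.IsWeaklyRegular.nil _ _⟩
  | succ m ih =>
    obtain ⟨r, hr, hreg⟩ := ex_reg (h2 n (by lia))
    obtain ⟨rs, h3, h4, h5⟩ := ih (M := QuotSMulTop r M) (p + 1) (by push_cast at hp; lia)
      (reg_van r hreg hr p h1) (fun i hi => (reg_Ses r hreg).right (gT_Gm _ _) i 0
        (Van_gT _ (h2 _ (by lia))) (h2 _ (by lia)))
    refine ⟨r :: rs, by simp [h3], ?_, ?_⟩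
    · intro s hs
      rcases List.mem_cons.1 hs with rfl | hs
      · exact hr
      · exact h4 s hs
    · rw [RingTheory.Sequence.isWeaklyRegular_cons_iff]
      exact ⟨hreg, h5⟩

theorem mem_mx (p : MvPolynomial (Fin n) k) : p ∈ mxIdeal k n ↔ coeff 0 p = 0 := by
  unfold mxIdeal
  rw [← Set.image_univ, mem_ideal_span_X_image]
  constructor
  · intro h
    by_contra h0
    obtain ⟨i, _, hi⟩ := h 0 (mem_support_iff.2 h0)
    exact hi rfl
  · intro h m hm
    by_contra! hc
    have : m = 0 := by ext i; exact hc i trivial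
    rw [mem_support_iff, this] at hm
    exact hm h

theorem le_mx {I : Ideal (MvPolynomial (Fin n) k)} (hI : HI I) (hT : I ≠ ⊤) : I ≤ mxIdeal k n := by
  intro p hp
  rw [mem_mx]
  by_contra h0
  apply hT
  have h1 := hI p hp 0
  have h2 : hc 0 p = C (coeff 0 p) := by
    ext m
    rw [coeff_hc, coeff_C]
    by_cases hm : m = 0
    · subst hm; simp
    · rw [if_neg, if_neg (Ne.symm hm)]
      intro h
      exact hm ((Finsupp.degree_eq_zero_iff m).1 (by exact_mod_cast h))
  rw [h2] at h1
  exact Ideal.eq_top_of_isUnit_mem _ h1 ((isUnit_iff_ne_zero.2 h0).map C)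

theorem one_notin {I : Ideal (MvPolynomial (Fin n) k)} (hI : I ≤ mxIdeal k n) :
    Ideal.Quotient.mk I 1 ∉ Submodule.map (Submodule.mkQ I) (mxIdeal k n) := by
  rintro ⟨y, hy, h⟩
  have h2 : Ideal.Quotient.mk I y = Ideal.Quotient.mk I 1 := h
  rw [Ideal.Quotient.eq] at h2
  have h3 := hI h2
  have h4 := sub_mem hy h3
  rw [sub_sub_cancel, mem_mx] at h4
  simp at h4

theorem vanT0 {I : Ideal (MvPolynomial (Fin n) k)} (hI : I ≤ mxIdeal k n) :
    ¬ Van (Xl k n) (gT (MvPolynomial (Fin n) k ⧸ I)) 0 0 := by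
  rw [Van_zero_iff]
  intro hv
  have key : ∀ (l : List (MvPolynomial (Fin n) k)), (∀ r ∈ l, r ∈ mxIdeal k n) →
      ∀ (m : MvPolynomial (Fin n) k ⧸ I), Kim (gT _) l (0 - 1) m →
      m ∈ Submodule.map (Submodule.mkQ I) (mxIdeal k n) := by
    intro l
    induction l with
    | nil => rintro _ m rfl; exact zero_mem _
    | cons r l ih =>
      rintro hl _ ⟨a, b, ha, hb, rfl⟩
      refine add_mem (ih (fun s hs => hl s (by simp [hs])) a ha) ?_
      obtain ⟨q, rfl⟩ := Ideal.Quotient.mk_surjective b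
      exact ⟨r * q, Ideal.mul_mem_right _ _ (hl r (by simp)), rfl⟩
  refine one_notin hI (key (Xl k n) ?_ _ (hv (Ideal.Quotient.mk I 1) trivial))
  intro r hr
  obtain ⟨i, rfl⟩ := (mem_Xl r).1 hr
  exact Ideal.subset_span ⟨i, rfl⟩

theorem pdepth_eq {I : Ideal (MvPolynomial (Fin n) k)} (hI : I ≤ mxIdeal k n) (p : ℤ)
    (h1 : ¬ Van (Xl k n) (gT (MvPolynomial (Fin n) k ⧸ I)) p 0)
    (h2 : ∀ i, p < i → Van (Xl k n) (gT (MvPolynomial (Fin n) k ⧸ I)) i 0) :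
    p + (pdepth I : ℤ) = n := by
  have hp : p ≤ n := by
    by_contra hc
    exact h1 (Van_gt _ _ _ _ (by rw [Xl_len]; lia))
  obtain ⟨m, hm⟩ : ∃ m : ℕ, p + m = n := ⟨(n - p).toNat, by lia⟩
  have : IsGreatest {d : ℕ | ∃ rs : List (MvPolynomial (Fin n) k), rs.length = d ∧
      (∀ r ∈ rs, r ∈ mxIdeal k n) ∧
      RingTheory.Sequence.IsRegular (MvPolynomial (Fin n) k ⧸ I) rs} m := by
    constructor
    · obtain ⟨rs, h3, h4, h5⟩ := ex_wr m p hm h1 h2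
      refine ⟨rs, h3, h4, h5, ?_⟩
      intro heq
      have h6 : Ideal.ofList rs • (⊤ : Submodule (MvPolynomial (Fin n) k) (MvPolynomial (Fin n) k ⧸ I)) ≤
          Submodule.map (Submodule.mkQ I) (mxIdeal k n) := by
        rw [Submodule.smul_le]
        intro r hr b _
        obtain ⟨q, rfl⟩ := Ideal.Quotient.mk_surjective b
        refine ⟨r * q, Ideal.mul_mem_right _ _ ?_, rfl⟩
        exact (Ideal.span_le.2 h4 : Ideal.ofList rs ≤ _) hr
      exact one_notin hI (h6 (heq ▸ trivial))
    · rintro d ⟨rs, rfl, h4, h5⟩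
      have := wr_le rs h4 h5.toIsWeaklyRegular p h1
      lia
  have h7 : pdepth I = m := this.csSup_eq
  rw [h7, hm]

end Depth
end DRM

namespace DRM
section Key
variable {k : Type u} [Field k] {n : ℕ}

theorem Kgr_shift {R : Type u} [CommRing R] {M : Type v} [AddCommGroup M] [Module R M]
    (g : ℤ → AddSubgroup M) (d : ℤ) (l : List R) (i e : ℤ) :
    Kgr (fun e => g (e - d)) l i e = Kgr g l i (e - d) := by
  induction l generalizing i with
  | nil => rfl
  | cons r l ih =>
    simp only [Kgr]
    rw [ih i, ih (i - 1)]

theorem Van_shift {R : Type u} [CommRing R] {M : Type v} [AddCommGroup M] [Module R M]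
    (g : ℤ → AddSubgroup M) (d : ℤ) (l : List R) (i e : ℤ) :
    Van l (fun e => g (e - d)) i e ↔ Van l g i (e - d) := by
  unfold Van
  rw [Kgr_shift, Kgr_shift, show e - 1 - d = e - d - 1 by ring]

theorem Kos_sub {R : Type u} [CommRing R] (M : Type v) [Subsingleton M]
    (l : List R) : Subsingleton (Kos M l) := by
  induction l with
  | nil => exact ‹Subsingleton M›
  | cons r l ih => exact inferInstanceAs (Subsingleton (Kos M l × Kos M l))

theorem Van_sub {R : Type u} [CommRing R] {M : Type v} [AddCommGroup M] [Module R M]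
    [Subsingleton M] (g : ℤ → AddSubgroup M) (l : List R) (i e : ℤ) : Van l g i e := by
  have := Kos_sub M l
  exact fun z _ _ => ⟨0, zero_mem _, Subsingleton.elim _ _⟩

theorem Kmap_comp {R : Type u} [CommRing R] {A B C : Type v} [AddCommGroup A] [Module R A]
    [AddCommGroup B] [Module R B] [AddCommGroup C] [Module R C] (φ : A →ₗ[R] B) (ψ : B →ₗ[R] C)
    (l : List R) (z : Kos A l) : Kmap (ψ.comp φ) l z = Kmap ψ l (Kmap φ l z) := by
  induction l with
  | nil => rfl
  | cons s l ih =>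
    obtain ⟨a, b, rfl⟩ := Kex s l z
    rw [Kmap_mk, Kmap_mk, Kmap_mk, ih, ih]

theorem gT_GM (M : Type v) [AddCommGroup M] [Module (MvPolynomial (Fin n) k) M] :
    GM (k := k) (n := n) (gT M) := fun _ _ _ _ _ _ => trivial

theorem mx_coef' (d : ℤ) (f : MvPolynomial (Fin n) k) (hf : f ∈ mxIdeal k n)
    (hd : HomogOfDeg f d) :
    ∃ c : MvPolynomial (Fin n) k → MvPolynomial (Fin n) k, (∀ s, HomogOfDeg (c s) (d - 1)) ∧
      ((Xl k n).map (fun s => s * c s)).sum = f := by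
  obtain ⟨c, hc'⟩ := mx_coef f hf
  refine ⟨fun s => hc (d - 1) (c s), fun s => hc_hom _ _, ?_⟩
  conv_rhs => rw [← hc_same hd, ← hc', map_list_sum, List.map_map]
  congr 1
  refine List.map_congr_left fun s hs => ?_
  obtain ⟨i, rfl⟩ := (mem_Xl s).1 hs
  rw [Function.comp_apply, hc_mul' (hom_X i)]

/-- The relations between non-vanishing loci. -/
structure Facts (d : ℤ) (NI NJ NK NH : ℤ → ℤ → Prop) : Prop where
  a1 : ∀ i e, NJ i e → NI i e
  a2 : ∀ i e, NK (i - 1) (e + 1 - d) → NI i e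
  a3 : ∀ i e, NI i e → NJ i e ∨ NK (i - 1) (e + 1 - d)
  b : ∀ i e, NK i e → NJ i e ∨ NH (i + 1) (e - 1)
  c : ∀ i e, NH i e → NJ i e ∨ NK (i - 1) (e + 1)
  d : ∀ i e, NJ i e → NK i e ∨ NH i e

theorem facts_of {M P Q : Type u} [AddCommGroup M] [Module (MvPolynomial (Fin n) k) M]
    [AddCommGroup P] [Module (MvPolynomial (Fin n) k) P]
    [AddCommGroup Q] [Module (MvPolynomial (Fin n) k) Q]
    (N : Submodule (MvPolynomial (Fin n) k) M) (g : ℤ → AddSubgroup M) (gP : ℤ → AddSubgroup P)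
    (gQ' : ℤ → AddSubgroup Q) (hg : GM (k := k) (n := n) g)
    (ψ : M →ₗ[MvPolynomial (Fin n) k] P) (χ : M →ₗ[MvPolynomial (Fin n) k] Q)
    (d : ℤ) (f : MvPolynomial (Fin n) k) (hf : f ∈ mxIdeal k n) (hd : HomogOfDeg f d)
    (Sa : Ses (gS N g) g gP N.subtype ψ)
    (Sb : Ses (fun e => gS N g (e - d)) g gQ'
      ((LinearMap.lsmul (MvPolynomial (Fin n) k) M f).comp N.subtype) χ) :
    Facts d (fun i e => ¬ Van (Xl k n) gQ' i e) (fun i e => ¬ Van (Xl k n) g i e)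
      (fun i e => ¬ Van (Xl k n) (gS N g) i e) (fun i e => ¬ Van (Xl k n) gP i e) := by
  have null : ∀ i e : ℤ, ∀ u ∈ Kgr (fun e => gS N g (e - d)) (Xl k n) i e, Kd N (Xl k n) u = 0 →
      ∃ w ∈ Kgr g (Xl k n) (i + 1) (e - 1), Kd M (Xl k n) w =
        Kmap ((LinearMap.lsmul (MvPolynomial (Fin n) k) M f).comp N.subtype) (Xl k n) u := by
    intro i e u hu hdu
    rw [Kgr_shift] at hu
    have hz := Kmap_gr N.subtype (e - d) (e - d) (gB := g) (fun _ h => h) (Xl k n) i u hu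
    have hdz : Kd M (Xl k n) (Kmap N.subtype (Xl k n) u) = 0 := by
      rw [← Kmap_d, hdu, map_zero]
    obtain ⟨c, hc1, hc2⟩ := mx_coef' d f hf hd
    obtain ⟨w, hw, h⟩ := Knull (g := g) (Xl k n) (fun s hs => hs) c i (e - 1) _
      (fun s _ => Kgr_smul (g := g) (c s) (e - d) (e - 1) (fun m hm => by
        have := hg _ _ _ _ (hc1 s) hm
        rwa [show e - d + (d - 1) = e - 1 by ring] at this) _ i _ hz) hdz
    refine ⟨w, hw, ?_⟩
    rw [h, hc2, ← Kmap_lsmul]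
    exact (Kmap_comp _ _ _ _).symm
  constructor
  · intro i e h h'
    exact h (Sb.mid' hg.gm i e (null i e) h')
  · intro i e h h'
    apply h
    rw [← Van_shift]
    refine Sb.left' hg.gm (i - 1) (e + 1) (null _ _) ?_
    simpa using h'
  · intro i e h
    by_contra! hc
    refine h (Sb.right hg.gm i e ?_ hc.1)
    rw [Van_shift]; exact hc.2
  · intro i e h
    by_contra! hc
    exact h (Sa.left hg.gm i e hc.1 hc.2)
  · intro i e h
    by_contra! hc
    exact h (Sa.right hg.gm i e hc.2 hc.1)
  · intro i e h
    by_contra! hc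
    exact h (Sa.mid hg.gm i e hc.1 hc.2)

variable {J H I : Ideal (MvPolynomial (Fin n) k)} {f : MvPolynomial (Fin n) k}

theorem mem_I (hI : I = J + Ideal.span {f} * H) (p : MvPolynomial (Fin n) k) :
    p ∈ I ↔ ∃ j ∈ J, ∃ h ∈ H, p = j + f * h := by
  rw [hI, Submodule.add_eq_sup, Submodule.mem_sup]
  constructor
  · rintro ⟨j, hj, z, hz, rfl⟩
    obtain ⟨h, hh, rfl⟩ := Ideal.mem_span_singleton_mul.1 hz
    exact ⟨j, hj, h, hh, rfl⟩
  · rintro ⟨j, hj, h, hh, rfl⟩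
    exact ⟨j, hj, f * h, Ideal.mem_span_singleton_mul.2 ⟨h, hh, rfl⟩, rfl⟩

theorem mem_JH (p : MvPolynomial (Fin n) k) :
    p ∈ J + H ↔ ∃ j ∈ J, ∃ h ∈ H, p = j + h := by
  rw [Submodule.add_eq_sup, Submodule.mem_sup]
  simp only [eq_comm]

theorem HI_JH (hJ : HI J) (hH : HI H) : HI (J + H) := by
  intro p hp e
  obtain ⟨j, hj, h, hh, rfl⟩ := (mem_JH p).1 hp
  exact (mem_JH _).2 ⟨_, hJ j hj e, _, hH h hh e, map_add _ _ _⟩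

theorem HI_I (hI : I = J + Ideal.span {f} * H) {d : ℤ} (hd : HomogOfDeg f d)
    (hJ : HI J) (hH : HI H) : HI I := by
  intro p hp e
  obtain ⟨j, hj, h, hh, rfl⟩ := (mem_I hI p).1 hp
  exact (mem_I hI _).2 ⟨_, hJ j hj e, _, hH h hh (e - d), by rw [map_add, hc_mul' hd]⟩

/-- the image of `J + H` in `R / J` -/
noncomputable def KK (J H : Ideal (MvPolynomial (Fin n) k)) :
    Submodule (MvPolynomial (Fin n) k) (MvPolynomial (Fin n) k ⧸ J) :=
  Submodule.map (Submodule.mkQ J) H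

theorem mem_KK (p : MvPolynomial (Fin n) k) : Ideal.Quotient.mk J p ∈ KK J H ↔ p ∈ J + H := by
  rw [mem_JH]
  constructor
  · rintro ⟨h, hh, he⟩
    have : Ideal.Quotient.mk J h = Ideal.Quotient.mk J p := he
    have := (Ideal.Quotient.eq.1 this.symm)
    exact ⟨p - h, this, h, hh, by ring⟩
  · rintro ⟨j, hj, h, hh, rfl⟩
    refine ⟨h, hh, ?_⟩
    change Ideal.Quotient.mk J h = _
    rw [map_add, Ideal.Quotient.eq_zero_iff_mem.2 hj, zero_add]

theorem J_le_JH : J ≤ J + H := le_sup_left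
theorem J_le_I (hI : I = J + Ideal.span {f} * H) : J ≤ I := by rw [hI]; exact le_sup_left

/-- projection between quotients -/
noncomputable def pr (h : J ≤ I) :
    (MvPolynomial (Fin n) k ⧸ J) →ₗ[MvPolynomial (Fin n) k] (MvPolynomial (Fin n) k ⧸ I) :=
  Submodule.factor h

theorem pr_mk (h : J ≤ I) (p : MvPolynomial (Fin n) k) :
    pr h (Ideal.Quotient.mk J p) = Ideal.Quotient.mk I p := rfl

theorem pr_ker (b : MvPolynomial (Fin n) k ⧸ J) : b ∈ KK J H ↔ pr (J_le_JH (H := H)) b = 0 := by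
  obtain ⟨p, rfl⟩ := Ideal.Quotient.mk_surjective b
  rw [mem_KK, pr_mk, Ideal.Quotient.eq_zero_iff_mem]

theorem Sa_gr : Ses (gS (KK J H) (gQ J)) (gQ J) (gQ (J + H)) (KK J H).subtype
    (pr (J_le_JH (H := H))) := by
  refine Ses_sub _ _ pr_ker ?_ ?_
  · rintro e _ ⟨p, hp, rfl⟩
    exact ⟨p, hp, rfl⟩
  · rintro e _ ⟨p, hp, rfl⟩
    exact ⟨_, ⟨p, hp, rfl⟩, rfl⟩

theorem Sa_un : Ses (gS (KK J H) (gT _)) (gT _) (gT _) (KK J H).subtype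
    (pr (J_le_JH (H := H))) := by
  refine Ses_sub _ _ pr_ker (fun _ _ _ => trivial) ?_
  rintro e c -
  obtain ⟨p, rfl⟩ := Ideal.Quotient.mk_surjective c
  exact ⟨Ideal.Quotient.mk J p, trivial, rfl⟩

theorem f_inj (hnzd : ∀ g, f * g ∈ J → g ∈ J) : Function.Injective
    ((LinearMap.lsmul (MvPolynomial (Fin n) k) (MvPolynomial (Fin n) k ⧸ J) f).comp
      (KK J H).subtype) := by
  rw [← LinearMap.ker_eq_bot, LinearMap.ker_eq_bot']
  rintro ⟨x, hx⟩ h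
  obtain ⟨p, rfl⟩ := Ideal.Quotient.mk_surjective x
  have h' : Ideal.Quotient.mk J (f * p) = 0 := h
  apply Subtype.ext
  exact Ideal.Quotient.eq_zero_iff_mem.2 (hnzd p (Ideal.Quotient.eq_zero_iff_mem.1 h'))

theorem f_zero (hI : I = J + Ideal.span {f} * H) (a : KK J H) : pr (J_le_I hI)
    ((LinearMap.lsmul (MvPolynomial (Fin n) k) (MvPolynomial (Fin n) k ⧸ J) f).comp
      (KK J H).subtype a) = 0 := by
  obtain ⟨x, hx⟩ := a
  obtain ⟨p, rfl⟩ := Ideal.Quotient.mk_surjective x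
  rw [mem_KK, mem_JH] at hx
  obtain ⟨j, hj, h, hh, rfl⟩ := hx
  change Ideal.Quotient.mk I (f * (j + h)) = 0
  rw [Ideal.Quotient.eq_zero_iff_mem, mem_I hI]
  exact ⟨f * j, Ideal.mul_mem_left _ _ hj, h, hh, by ring⟩

theorem Sb_gr (hI : I = J + Ideal.span {f} * H) {d : ℤ} (hd : HomogOfDeg f d)
    (hJ : HI J) (hH : HI H) (hnzd : ∀ g, f * g ∈ J → g ∈ J) :
    Ses (fun e => gS (KK J H) (gQ J) (e - d)) (gQ J) (gQ I)
      ((LinearMap.lsmul (MvPolynomial (Fin n) k) (MvPolynomial (Fin n) k ⧸ J) f).comp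
      (KK J H).subtype) (pr (J_le_I hI)) where
  inj := f_inj hnzd
  dA := fun e a ha => by
    have := gQ_GM J _ _ _ _ hd ha
    rwa [sub_add_cancel] at this
  dB := by
    rintro e _ ⟨p, hp, rfl⟩
    exact ⟨p, hp, rfl⟩
  zero := f_zero hI
  ex := by
    rintro e _ ⟨p, hp, rfl⟩ h
    rw [pr_mk, Ideal.Quotient.eq_zero_iff_mem, mem_I hI] at h
    obtain ⟨j, hj, h, hh, rfl⟩ := h
    refine ⟨⟨Ideal.Quotient.mk J (hc (e - d) h), (mem_KK _).2 ((mem_JH _).2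
      ⟨0, zero_mem _, _, hH h hh (e - d), by rw [zero_add]⟩)⟩, ⟨_, hc_hom _ _, rfl⟩, ?_⟩
    change Ideal.Quotient.mk J (f * hc (e - d) h) = _
    rw [← hc_same hp, map_add, hc_mul' hd, map_add,
      Ideal.Quotient.eq_zero_iff_mem.2 (hJ j hj e), zero_add]
  surj := by
    rintro e _ ⟨p, hp, rfl⟩
    exact ⟨_, ⟨p, hp, rfl⟩, rfl⟩

theorem Sb_un (hI : I = J + Ideal.span {f} * H) (d : ℤ) (hnzd : ∀ g, f * g ∈ J → g ∈ J) :
    Ses (fun e => gS (KK J H) (gT _) (e - d)) (gT _) (gT _)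
      ((LinearMap.lsmul (MvPolynomial (Fin n) k) (MvPolynomial (Fin n) k ⧸ J) f).comp
      (KK J H).subtype) (pr (J_le_I hI)) where
  inj := f_inj hnzd
  dA := fun _ _ _ => trivial
  dB := fun _ _ _ => trivial
  zero := f_zero hI
  ex := by
    rintro e b - h
    obtain ⟨p, rfl⟩ := Ideal.Quotient.mk_surjective b
    rw [pr_mk, Ideal.Quotient.eq_zero_iff_mem, mem_I hI] at h
    obtain ⟨j, hj, h, hh, rfl⟩ := h
    refine ⟨⟨Ideal.Quotient.mk J h, (mem_KK _).2 ((mem_JH _).2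
      ⟨0, zero_mem _, _, hh, by rw [zero_add]⟩)⟩, trivial, ?_⟩
    change Ideal.Quotient.mk J (f * h) = _
    rw [map_add, Ideal.Quotient.eq_zero_iff_mem.2 hj, zero_add]
  surj := by
    rintro e c -
    obtain ⟨p, rfl⟩ := Ideal.Quotient.mk_surjective c
    exact ⟨Ideal.Quotient.mk J p, trivial, rfl⟩

theorem gS_gT {M : Type v} [AddCommGroup M] [Module (MvPolynomial (Fin n) k) M]
    (N : Submodule (MvPolynomial (Fin n) k) M) : gS N (gT M) = gT N := by
  funext e; ext x; exact ⟨fun _ => trivial, fun _ => trivial⟩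

theorem reg_part (hI : I = J + Ideal.span {f} * H) (d : ℤ) (hd : HomogOfDeg f d) (hd1 : 1 ≤ d)
    (hf : f ∈ mxIdeal k n) (hJ : HI J) (hH : HI H) (hnzd : ∀ g, f * g ∈ J → g ∈ J)
    (hJT : J ≠ ⊤) (hIT : I ≠ ⊤) :
    regQuot I = regQuot (J + H) + d ∨ (regQuot J ≤ regQuot I ∧ regQuot I ≤ regQuot J + d - 1) := by
  have F := facts_of (KK J H) (gQ J) (gQ (J + H)) (gQ I) (gQ_GM J) _ _ d f hf hd Sa_gr
    (Sb_gr hI hd hJ hH hnzd)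
  obtain ⟨⟨iJ, hJ1⟩, hJ2⟩ := reg_spec hJ hJT
  obtain ⟨⟨iI, hI1⟩, hI2⟩ := reg_spec (HI_I hI hd hJ hH) hIT
  by_cases hcase : ∀ i e, ¬ Van (Xl k n) (gS (KK J H) (gQ J)) i e → e ≤ regQuot J
  · right
    refine ⟨hI2 _ _ (F.a1 _ _ hJ1), ?_⟩
    rcases F.a3 _ _ hI1 with h | h
    · have := hJ2 _ _ h
      lia
    · have := hcase _ _ h
      lia
  · left
    push Not at hcase
    obtain ⟨i, e, hK, he⟩ := hcase
    have hNH := (F.b i e hK).resolve_left (fun h => by have := hJ2 _ _ h; lia)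
    have hT : J + H ≠ ⊤ := by
      intro hT
      have : Subsingleton (MvPolynomial (Fin n) k ⧸ (J + H)) := Ideal.Quotient.subsingleton_iff.2 hT
      exact hNH (Van_sub _ _ _ _)
    obtain ⟨⟨iH, hH1⟩, hH2⟩ := reg_spec (HI_JH hJ hH) hT
    have h1 := hH2 _ _ hNH
    have h2 : ∃ j, ¬ Van (Xl k n) (gS (KK J H) (gQ J)) j (regQuot (J + H) + 1) := by
      rcases F.c _ _ hH1 with h | h
      · have := hJ2 _ _ h
        exact ⟨i, by rwa [show regQuot (J + H) + 1 = e by lia]⟩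
      · exact ⟨_, h⟩
    obtain ⟨j, hj⟩ := h2
    have h3 := hI2 (j + 1) (regQuot (J + H) + d) (F.a2 _ _ (by
      rwa [show regQuot (J + H) + d + 1 - d = regQuot (J + H) + 1 by ring, add_sub_cancel_right]))
    refine le_antisymm ?_ h3
    rcases F.a3 _ _ hI1 with h | h
    · have := hJ2 _ _ h
      lia
    · rcases F.b _ _ h with h | h
      · have := hJ2 _ _ h
        lia
      · have := hH2 _ _ h
        lia

theorem pd_ex {I : Ideal (MvPolynomial (Fin n) k)} (hI : I ≤ mxIdeal k n) :
    ∃ p : ℤ, ¬ Van (Xl k n) (gT (MvPolynomial (Fin n) k ⧸ I)) p 0 ∧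
      ∀ i, ¬ Van (Xl k n) (gT (MvPolynomial (Fin n) k ⧸ I)) i 0 → i ≤ p := by
  apply Int.exists_greatest_of_bdd
  · refine ⟨n, fun z hz => ?_⟩
    by_contra hc
    exact hz (Van_gt _ _ _ _ (by rw [Xl_len]; lia))
  · exact ⟨0, vanT0 hI⟩

theorem depth_part (hI : I = J + Ideal.span {f} * H) (d : ℤ) (hd : HomogOfDeg f d)
    (hf : f ∈ mxIdeal k n) (hJ : HI J) (hH : HI H) (hnzd : ∀ g, f * g ∈ J → g ∈ J)
    (hJT : J ≠ ⊤) (hIm : I ≤ mxIdeal k n) :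
    pdepth I = pdepth (J + H) ∨ pdepth I = pdepth J - 1 := by
  have F := facts_of (KK J H) (gT _) (gT _) (gT _) (gT_GM _) _ _ d f hf hd Sa_un
    (Sb_un hI d hnzd)
  rw [gS_gT] at F
  obtain ⟨p, hp1, hp2⟩ := pd_ex (le_mx hJ hJT)
  obtain ⟨q, hq1, hq2⟩ := pd_ex hIm
  have hpd := pdepth_eq (le_mx hJ hJT) p hp1 (fun i hi => by
    by_contra hc; have := hp2 i hc; lia)
  have hqd := pdepth_eq hIm q hq1 (fun i hi => by
    by_contra hc; have := hq2 i hc; lia)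
  have a2 : ∀ i, ¬ Van (Xl k n) (gT (KK J H)) i 0 → i + 1 ≤ q := by
    intro i h
    refine hq2 (i + 1) (F.a2 (i + 1) 0 (fun h' => h ?_))
    rw [add_sub_cancel_right] at h'
    exact Van_gT _ h'
  have a3 := F.a3 q 0 hq1
  have hb : ∀ i, ¬ Van (Xl k n) (gT (KK J H)) i 0 → i ≤ p ∨
      ¬ Van (Xl k n) (gT (MvPolynomial (Fin n) k ⧸ (J + H))) (i + 1) 0 := by
    intro i h
    rcases F.b i 0 h with h | h
    · exact Or.inl (hp2 _ h)
    · exact Or.inr fun h' => h (Van_gT _ h')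
  have hcc : ∀ i, ¬ Van (Xl k n) (gT (MvPolynomial (Fin n) k ⧸ (J + H))) i 0 → i ≤ p ∨
      ¬ Van (Xl k n) (gT (KK J H)) (i - 1) 0 := by
    intro i h
    rcases F.c i 0 h with h | h
    · exact Or.inl (hp2 _ h)
    · exact Or.inr fun h' => h (Van_gT _ h')
  have hpq : p ≤ q := hq2 _ (F.a1 _ _ hp1)
  have a3' : q ≤ p ∨ ¬ Van (Xl k n) (gT (KK J H)) (q - 1) 0 := by
    rcases a3 with h | h
    · exact Or.inl (hp2 _ h)
    · exact Or.inr fun h' => h (Van_gT _ h')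
  have hJH : ∀ i, ¬ Van (Xl k n) (gT (MvPolynomial (Fin n) k ⧸ (J + H))) i 0 →
      ∃ p' : ℤ, ¬ Van (Xl k n) (gT (MvPolynomial (Fin n) k ⧸ (J + H))) p' 0 ∧
      (∀ i, ¬ Van (Xl k n) (gT (MvPolynomial (Fin n) k ⧸ (J + H))) i 0 → i ≤ p') ∧
      p' + (pdepth (J + H) : ℤ) = n := by
    intro i hi
    have hT : J + H ≠ ⊤ := by
      intro hT
      have : Subsingleton (MvPolynomial (Fin n) k ⧸ (J + H)) := Ideal.Quotient.subsingleton_iff.2 hT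
      exact hi (Van_sub _ _ _ _)
    obtain ⟨p', h1, h2⟩ := pd_ex (le_mx (HI_JH hJ hH) hT)
    exact ⟨p', h1, h2, pdepth_eq (le_mx (HI_JH hJ hH) hT) p' h1 (fun i hi => by
      by_contra hc; have := h2 i hc; lia)⟩
  by_cases hcase : ∀ i, ¬ Van (Xl k n) (gT (KK J H)) i 0 → i ≤ p
  · by_cases hKp : Van (Xl k n) (gT (KK J H)) p 0
    · left
      have hlt : ∀ i, ¬ Van (Xl k n) (gT (KK J H)) i 0 → i < p := fun i hi =>
        lt_of_le_of_ne (hcase i hi) (by rintro rfl; exact hi hKp)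
      have hHp := (F.d p 0 hp1).resolve_left (fun h => h hKp)
      obtain ⟨p', h1, h2, h3⟩ := hJH p hHp
      have h4 := h2 p hHp
      have h5 : p' ≤ p := by
        rcases hcc p' h1 with h | h
        · exact h
        · have := hlt _ h
          lia
      have h6 : q ≤ p := by
        rcases a3' with h | h
        · exact h
        · have := hlt _ h
          lia
      lia
    · right
      have h1 := a2 p hKp
      have h2 : q ≤ p + 1 := by
        rcases a3' with h | h
        · lia
        · have := hcase _ h
          lia
      lia
  · left
    push Not at hcase
    obtain ⟨i, hi, hpi⟩ := hcase
    have hHi := (hb i hi).resolve_left (by lia)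
    obtain ⟨p', h1, h2, h3⟩ := hJH _ hHi
    have h4 := h2 _ hHi
    have h5 := a2 _ ((hcc p' h1).resolve_left (by lia))
    have h6 : q ≤ p' := by
      rcases a3' with h | h
      · lia
      · rcases hb _ h with h | h
        · lia
        · have := h2 _ h
          lia
    lia

theorem main (J H : Ideal (MvPolynomial (Fin n) k))
    (hJ : IsHomogeneousIdeal J) (hH : IsHomogeneousIdeal H)
    (d : ℕ) (f : MvPolynomial (Fin n) k) (hfd : f.IsHomogeneous d) (hf0 : f ≠ 0)
    (hnzd : ∀ g : MvPolynomial (Fin n) k, f * g ∈ J → g ∈ J)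
    (I : Ideal (MvPolynomial (Fin n) k)) (hI : I = J + Ideal.span {f} * H) :
    (pdepth I = pdepth (J + H) ∨ pdepth I = pdepth J - 1) ∧
      (regQuot I = regQuot (J + H) + d ∨
        ∃ e : ℕ, (e : ℤ) ≤ (d : ℤ) - 1 ∧ regQuot I = regQuot J + e) := by
  have hd : HomogOfDeg f (d : ℤ) := Or.inr ⟨d, rfl, hfd⟩
  rcases Nat.eq_zero_or_pos d with rfl | hd1
  · have hfC : f = C (coeff 0 f) := totalDegree_eq_zero_iff_eq_C.1 (by
      have := hfd.totalDegree_le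
      lia)
    have hne : coeff 0 f ≠ 0 := by
      intro h
      rw [h, C_0] at hfC
      exact hf0 hfC
    have hu : IsUnit f := by
      rw [hfC]; exact (isUnit_iff_ne_zero.2 hne).map C
    have : I = J + H := by
      rw [hI, Ideal.span_singleton_eq_top.2 hu, Ideal.top_mul]
    rw [this]
    simp
  by_cases hJT : J = ⊤
  · have h1 : I = ⊤ := by rw [hI, hJT]; exact top_sup_eq _
    have h2 : J + H = ⊤ := by rw [hJT]; exact top_sup_eq _
    refine ⟨Or.inl (by rw [h1, h2]), Or.inr ⟨0, by push_cast; lia, by rw [h1, hJT]; simp⟩⟩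
  have hJ' := HI_of J hJ
  have hH' := HI_of H hH
  have hf : f ∈ mxIdeal k n := by
    rw [mem_mx]
    exact hfd.coeff_eq_zero (by simp; lia)
  have hIm : I ≤ mxIdeal k n := by
    intro p hp
    obtain ⟨j, hj, h, hh, rfl⟩ := (mem_I hI p).1 hp
    exact add_mem (le_mx hJ' hJT hj) (Ideal.mul_mem_right _ _ hf)
  have hIT : I ≠ ⊤ := by
    intro hT
    have : (1 : MvPolynomial (Fin n) k) ∈ mxIdeal k n := hIm (hT ▸ trivial)
    rw [mem_mx] at this
    simp at this
  refine ⟨depth_part hI d hd hf hJ' hH' hnzd hJT hIm, ?_⟩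
  rcases reg_part hI d hd (by exact_mod_cast hd1) hf hJ' hH' hnzd hJT hIT with h | ⟨h1, h2⟩
  · exact Or.inl h
  · exact Or.inr ⟨(regQuot I - regQuot J).toNat, by lia, by lia⟩

end Key
end DRM

/-- **Corollary (depth and regularity modulo a form of degree `d`).** Let `I = J + fH` where
`J, H` are homogeneous ideals and `f` is a form of degree `d` which is a non-zerodivisor on
`R/J`. Then (i) `depth R/I ∈ {depth R/(J+H), depth R/J - 1}` and
(ii) `reg R/I ∈ {reg R/(J+H) + d, reg R/J + d - 1, …, reg R/J}`. -/
theorem depth_reg_modulo_form {k : Type*} [Field k] {n : ℕ}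
    (J H : Ideal (MvPolynomial (Fin n) k))
    (hJ : IsHomogeneousIdeal J) (hH : IsHomogeneousIdeal H)
    (d : ℕ) (f : MvPolynomial (Fin n) k) (hfd : f.IsHomogeneous d) (hf0 : f ≠ 0)
    (hnzd : ∀ g : MvPolynomial (Fin n) k, f * g ∈ J → g ∈ J)
    (I : Ideal (MvPolynomial (Fin n) k)) (hI : I = J + Ideal.span {f} * H) :
    (pdepth I = pdepth (J + H) ∨ pdepth I = pdepth J - 1) ∧
      (regQuot I = regQuot (J + H) + d ∨
        ∃ e : ℕ, (e : ℤ) ≤ (d : ℤ) - 1 ∧ regQuot I = regQuot J + e) := by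
  exact DRM.main J H hJ hH d f hfd hf0 hnzd I hI
end

section
/- Let R = k[x_1,…,x_n] be a polynomial ring over a field k, let I ⊆ R be a homogeneous ideal, and let f ∈ R be a linear form that is filter-regular on R/I. Then (i) depth R/I ∈ {depth R/(I:f), depth R/(I,f)}, and (ii) reg R/I ∈ {reg R/(I:f) + 1, reg R/(I,f)}. -/
open MvPolynomial

namespace KZ

/-- Koszul sign. -/
def eps {n : ℕ} (j : Fin n) (S : Finset (Fin n)) : ℤ := (-1) ^ (S.filter (· < j)).card

theorem eps_sq {n : ℕ} (j : Fin n) (S : Finset (Fin n)) : eps j S * eps j S = 1 := by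
  unfold eps; rw [← mul_pow]; simp

theorem eps_insert {n : ℕ} {j l : Fin n} {S : Finset (Fin n)} (hj : j ∉ S) :
    eps l (insert j S) = (if j < l then -1 else 1) * eps l S := by
  unfold eps
  rw [Finset.filter_insert]
  split_ifs with h
  · rw [Finset.card_insert_of_notMem (by simp [hj]), pow_succ]; ring
  · simp

variable {k : Type*} [Field k] {n : ℕ}

section mods
variable {M N : Type*} [AddCommGroup M] [Module (MvPolynomial (Fin n) k) M]
  [AddCommGroup N] [Module (MvPolynomial (Fin n) k) N]

/-- Contraction with the `j`-th basis vector. -/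
def iota (j : Fin n) :
    (Finset (Fin n) → M) →ₗ[MvPolynomial (Fin n) k] (Finset (Fin n) → M) where
  toFun w := fun S => if j ∈ S then 0 else eps j S • w (insert j S)
  map_add' a b := by ext S; by_cases h : j ∈ S <;> simp [h]
  map_smul' a b := by
    ext S; by_cases h : j ∈ S <;> simp [h]
    rw [smul_comm]

theorem iota_apply (j : Fin n) (w : Finset (Fin n) → M) (S : Finset (Fin n)) :
    iota (k := k) j w S = if j ∈ S then 0 else eps j S • w (insert j S) := rfl

/-- Exterior multiplication with the `j`-th basis vector. -/
def ext (j : Fin n) :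
    (Finset (Fin n) → M) →ₗ[MvPolynomial (Fin n) k] (Finset (Fin n) → M) where
  toFun w := fun S => if j ∈ S then eps j (S.erase j) • w (S.erase j) else 0
  map_add' a b := by ext S; by_cases h : j ∈ S <;> simp [h]
  map_smul' a b := by
    ext S; by_cases h : j ∈ S <;> simp [h]
    rw [smul_comm]

theorem ext_apply (j : Fin n) (w : Finset (Fin n) → M) (S : Finset (Fin n)) :
    ext (k := k) j w S = if j ∈ S then eps j (S.erase j) • w (S.erase j) else 0 := rfl

theorem iota_iota_self (j : Fin n) (w : Finset (Fin n) → M) :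
    iota (k := k) j (iota (k := k) j w) = 0 := by
  ext S; by_cases h : j ∈ S <;> simp [iota_apply, h]

theorem iota_iota (j l : Fin n) (h : j ≠ l) (w : Finset (Fin n) → M) :
    iota (k := k) j (iota (k := k) l w) = - iota (k := k) l (iota (k := k) j w) := by
  ext S
  by_cases hj : j ∈ S
  · simp [iota_apply, hj]
  by_cases hl : l ∈ S
  · simp [iota_apply, hl]
  have h1 : l ∉ insert j S := by simp [hl, Ne.symm h]
  have h2 : j ∉ insert l S := by simp [hj, h]
  simp only [iota_apply, hj, hl, h1, h2, if_false, Pi.neg_apply]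
  rw [Finset.insert_comm l j S, eps_insert hj, eps_insert hl, smul_smul, smul_smul, ← neg_smul]
  congr 1
  rcases lt_or_gt_of_ne h with h | h
  · rw [if_pos h, if_neg h.not_gt]; ring
  · rw [if_neg h.not_gt, if_pos h]; ring

theorem iota_ext_self (j : Fin n) (w : Finset (Fin n) → M) :
    iota (k := k) j (ext (k := k) j w) + ext (k := k) j (iota (k := k) j w) = w := by
  ext S
  by_cases hj : j ∈ S
  · simp [iota_apply, ext_apply, hj, smul_smul, eps_sq]
  · simp [iota_apply, ext_apply, hj, smul_smul, eps_sq]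

theorem iota_ext (j l : Fin n) (h : j ≠ l) (w : Finset (Fin n) → M) :
    iota (k := k) j (ext (k := k) l w) = - ext (k := k) l (iota (k := k) j w) := by
  ext S
  by_cases hj : j ∈ S
  · by_cases hl : l ∈ S
    · simp [iota_apply, ext_apply, hj, h]
    · simp [iota_apply, ext_apply, hj, hl]
  by_cases hl : l ∈ S
  · obtain ⟨T, hT, rfl⟩ : ∃ T, l ∉ T ∧ S = insert l T :=
      ⟨S.erase l, by simp, by simp [Finset.insert_erase hl]⟩
    have hjT : j ∉ T := fun h' => hj (by simp [h'])
    have e1 : (insert j (insert l T)).erase l = insert j T := by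
      rw [Finset.insert_comm, Finset.erase_insert (by simp [hT, Ne.symm h])]
    simp only [iota_apply, ext_apply, hj, if_false, Pi.neg_apply, Finset.mem_insert_self, if_true,
      Finset.mem_insert, or_true, e1, Finset.erase_insert hT, hjT]
    rw [eps_insert hT, eps_insert hjT, smul_smul, smul_smul, ← neg_smul]
    congr 1
    rcases lt_or_gt_of_ne h with h | h
    · rw [if_pos h, if_neg h.not_gt]; ring
    · rw [if_neg h.not_gt, if_pos h]; ring
  · simp [iota_apply, ext_apply, hj, hl, Ne.symm h]

/-- Koszul differential. -/
noncomputable def del :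
    (Finset (Fin n) → M) →ₗ[MvPolynomial (Fin n) k] (Finset (Fin n) → M) :=
  ∑ j, (X j : MvPolynomial (Fin n) k) • iota (k := k) j

theorem del_eq (w : Finset (Fin n) → M) :
    del (k := k) w = ∑ j, (X j : MvPolynomial (Fin n) k) • iota (k := k) j w := by
  simp [del]

theorem del_apply (w : Finset (Fin n) → M) (S) :
    del (k := k) w S = ∑ j, (X j : MvPolynomial (Fin n) k) • iota (k := k) j w S := by
  simp [del]

theorem del_del (w : Finset (Fin n) → M) : del (k := k) (del (k := k) w) = 0 := by
  rw [del_eq]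
  simp_rw [del_eq w, map_sum, map_smul, Finset.smul_sum, smul_smul]
  rw [← Finset.sum_product']
  refine Finset.sum_involution (fun a _ => (a.2, a.1)) ?_ ?_ ?_ ?_
  · rintro ⟨a, b⟩ _
    by_cases h : a = b
    · subst h; simp [iota_iota_self]
    · simp only
      rw [iota_iota a b h, mul_comm]; simp
  · rintro ⟨a, b⟩ _ h h'
    simp only [Prod.mk.injEq] at h'
    rw [h'.1] at h
    simp [iota_iota_self] at h
  · simp
  · simp

theorem iota_map (φ : M →ₗ[MvPolynomial (Fin n) k] N) (j : Fin n) (w : Finset (Fin n) → M) :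
    iota (k := k) j (fun S => φ (w S)) = fun S => φ (iota (k := k) j w S) := by
  ext S; by_cases h : j ∈ S <;> simp [iota_apply, h]

theorem del_map (φ : M →ₗ[MvPolynomial (Fin n) k] N) (w : Finset (Fin n) → M) :
    del (k := k) (fun S => φ (w S)) = fun S => φ (del (k := k) w S) := by
  ext S
  simp [del_apply, iota_map]

theorem del_top (w : Finset (Fin n) → M) : del (k := k) w Finset.univ = 0 := by
  simp [del_apply, iota_apply]

/-- `w` vanishes on sets of cardinality `≤ p`. -/
def Supp (p : ℕ) (w : Finset (Fin n) → M) : Prop := ∀ S, S.card < p → w S = 0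

theorem Supp.del {p : ℕ} {w : Finset (Fin n) → M} (h : Supp (p+1) w) :
    Supp p (del (k := k) w) := by
  intro S hS
  rw [del_apply]
  refine Finset.sum_eq_zero fun j _ => ?_
  rw [iota_apply]
  split_ifs with hj
  · simp
  · rw [h _ (by rw [Finset.card_insert_of_notMem hj]; omega)]; simp

/-- a family of degree pieces compatible with multiplication by variables -/
structure Gr (k : Type*) [Field k] (n : ℕ) (M : Type*) [AddCommGroup M]
    [Module (MvPolynomial (Fin n) k) M] where
  G : ℤ → AddSubgroup M
  hX : ∀ d j m, m ∈ G d → (X j : MvPolynomial (Fin n) k) • m ∈ G (d+1)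

theorem Gr.del_mem (g : Gr k n M) {d : ℤ} {w : Finset (Fin n) → M} (h : ∀ S, w S ∈ g.G d) (S) :
    del (k := k) w S ∈ g.G (d+1) := by
  rw [del_apply]
  refine sum_mem fun j _ => g.hX _ _ _ ?_
  rw [iota_apply]
  split_ifs
  · exact zero_mem _
  · exact zsmul_mem (h _) _

/-- vanishing of Koszul homology in (regularity) degree `d` -/
def Van (g : Gr k n M) (d : ℤ) : Prop :=
  ∀ w : Finset (Fin n) → M, (∀ S, w S ∈ g.G d) → del (k := k) w = 0 →
    ∃ u : Finset (Fin n) → M, (∀ S, u S ∈ g.G (d-1)) ∧ del (k := k) u = w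

variable (k n M) in
/-- vanishing of Koszul homology in homological degree `≥ p`. -/
def Tor0 (p : ℕ) : Prop :=
  ∀ w : Finset (Fin n) → M, Supp p w → del (k := k) w = 0 →
    ∃ u : Finset (Fin n) → M, Supp (p+1) u ∧ del (k := k) u = w

variable {Q : Type*} [AddCommGroup Q] [Module (MvPolynomial (Fin n) k) Q]

structure SES (gN : Gr k n N) (gM : Gr k n M) (gQ : Gr k n Q)
    (a : N →ₗ[MvPolynomial (Fin n) k] M) (b : M →ₗ[MvPolynomial (Fin n) k] Q) : Prop where
  inj : Function.Injective a
  ex : ∀ m, b m = 0 ↔ ∃ x, a x = m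
  degN : ∀ d x, x ∈ gN.G d ↔ a x ∈ gM.G d
  degM : ∀ d m, m ∈ gM.G d → b m ∈ gQ.G d
  degQ : ∀ d q, q ∈ gQ.G d → ∃ m ∈ gM.G d, b m = q

variable {gN : Gr k n N} {gM : Gr k n M} {gQ : Gr k n Q}
    {a : N →ₗ[MvPolynomial (Fin n) k] M} {b : M →ₗ[MvPolynomial (Fin n) k] Q}

theorem SES.lift (s : SES gN gM gQ a b) {d : ℤ} {w : Finset (Fin n) → M} (hw : ∀ S, w S ∈ gM.G d)
    (h : ∀ S, b (w S) = 0) :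
    ∃ v : Finset (Fin n) → N, (∀ S, v S ∈ gN.G d) ∧ (fun S => a (v S)) = w := by
  choose v hv using fun S => (s.ex (w S)).1 (h S)
  exact ⟨v, fun S => (s.degN _ _).2 (hv S ▸ hw S), funext hv⟩

theorem SES.cycle (s : SES gN gM gQ a b) {v : Finset (Fin n) → N}
    (h : del (k := k) (fun S => a (v S)) = 0) : del (k := k) v = 0 := by
  rw [del_map] at h
  ext S
  exact s.inj (by simpa using congrFun h S)

theorem SES.vanM (s : SES gN gM gQ a b) {d : ℤ} (hN : Van gN d) (hQ : Van gQ d) : Van gM d := by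
  intro w hw hw0
  obtain ⟨u, hu, hu0⟩ := hQ (fun S => b (w S)) (fun S => s.degM _ _ (hw S))
    (by rw [del_map, hw0]; ext; simp)
  choose u' hu' hu'' using fun S => s.degQ _ _ (hu S)
  have e : (fun S => b (u' S)) = u := funext hu''
  have hd : ∀ S, (w - del (k := k) u') S ∈ gM.G d := fun S =>
    sub_mem (hw S) (by simpa using gM.del_mem hu' S)
  obtain ⟨v, hv, hv'⟩ := s.lift hd (fun S => by
    have : b (w S) = del (k := k) u S := (congrFun hu0 S).symm
    rw [Pi.sub_apply, map_sub, this, ← e, del_map]; simp)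
  obtain ⟨t, ht, ht'⟩ := hN v hv (s.cycle (by rw [hv', map_sub, del_del, hw0, sub_zero]))
  refine ⟨u' + fun S => a (t S), fun S => add_mem (hu' S) ((s.degN _ _).1 (ht S)), ?_⟩
  rw [map_add, del_map, ht', hv']; abel

theorem SES.vanQ (s : SES gN gM gQ a b) {d : ℤ} (hM : Van gM d) (hN : Van gN (d+1)) :
    Van gQ d := by
  intro w hw hw0
  choose u hu hu' using fun S => s.degQ _ _ (hw S)
  have e : (fun S => b (u S)) = w := funext hu'
  obtain ⟨v, hv, hv'⟩ := s.lift (gM.del_mem hu) (fun S => by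
    have := congrFun (del_map b u) S
    rw [← this, e, hw0]; rfl)
  obtain ⟨t, ht, ht'⟩ := hN v hv (s.cycle (by
    rw [hv']; exact del_del u))
  rw [add_sub_cancel_right] at ht
  obtain ⟨y, hy, hy'⟩ := hM (u - fun S => a (t S))
    (fun S => sub_mem (hu S) ((s.degN _ _).1 (ht S)))
    (by rw [map_sub, del_map, ht', hv']; exact sub_self _)
  refine ⟨fun S => b (y S), fun S => s.degM _ _ (hy S), ?_⟩
  rw [del_map, hy', ← e]
  ext S
  have : b (a (t S)) = 0 := (s.ex _).2 ⟨_, rfl⟩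
  simp [this]

theorem SES.vanN (s : SES gN gM gQ a b) {d : ℤ} (hM : Van gM d) (hQ : Van gQ (d-1)) :
    Van gN d := by
  intro w hw hw0
  obtain ⟨u, hu, hu'⟩ := hM (fun S => a (w S)) (fun S => (s.degN _ _).1 (hw S))
    (by rw [del_map, hw0]; ext; simp)
  obtain ⟨y, hy, hy'⟩ := hQ (fun S => b (u S)) (fun S => s.degM _ _ (hu S))
    (by
      rw [del_map, hu']; ext S
      exact (s.ex _).2 ⟨_, rfl⟩)
  choose z hz hz' using fun S => s.degQ _ _ (hy S)
  have e : (fun S => b (z S)) = y := funext hz'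
  obtain ⟨v, hv, hv'⟩ := s.lift (w := u - del (k := k) z)
    (fun S => sub_mem (hu S) (by simpa using gM.del_mem hz S)) (fun S => by
      have h1 := congrFun (del_map b z) S
      have h2 : del (k := k) y S = b (u S) := congrFun hy' S
      rw [Pi.sub_apply, map_sub, ← h1, e, h2, sub_self])
  refine ⟨v, hv, ?_⟩
  ext S
  apply s.inj
  have h1 := congrFun (del_map a v) S
  rw [← h1, hv', map_sub, del_del, sub_zero, hu']

/-- key step for homological dimension -/
theorem tor_step (a : N →ₗ[MvPolynomial (Fin n) k] M) (b : M →ₗ[MvPolynomial (Fin n) k] Q)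
    (inj : Function.Injective a) (ex : ∀ m, b m = 0 ↔ ∃ x, a x = m)
    (surj : Function.Surjective b) {p : ℕ} (hQ : Tor0 k n Q (p+1))
    {w : Finset (Fin n) → N} {u : Finset (Fin n) → M} (hu : Supp (p+1) u)
    (huw : del (k := k) u = fun S => a (w S)) :
    ∃ u : Finset (Fin n) → N, Supp (p+1) u ∧ del (k := k) u = w := by
  obtain ⟨y, hy, hy'⟩ := hQ (fun S => b (u S)) (fun S hS => by simp [hu S hS])
    (by
      rw [del_map, huw]; ext S
      exact (ex _).2 ⟨_, rfl⟩)
  have : ∀ S, ∃ m, b m = y S ∧ (S.card < p + 2 → m = 0) := fun S => by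
    by_cases h : S.card < p + 2
    · exact ⟨0, by rw [hy S h, map_zero], fun _ => rfl⟩
    · obtain ⟨m, hm⟩ := surj (y S)
      exact ⟨m, hm, fun h' => absurd h' h⟩
  choose z hz hz' using this
  have e : (fun S => b (z S)) = y := funext hz
  have hzs : Supp (p+2) z := fun S hS => hz' S hS
  have h0 : ∀ S, b ((u - del (k := k) z) S) = 0 := fun S => by
      have h1 := congrFun (del_map b z) S
      have h2 : del (k := k) y S = b (u S) := congrFun hy' S
      rw [Pi.sub_apply, map_sub, ← h1, e, h2, sub_self]
  choose v hv using fun S => (ex _).1 (h0 S)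
  have hv' : (fun S => a (v S)) = u - del (k := k) z := funext hv
  refine ⟨v, fun S hS => ?_, ?_⟩
  · apply inj
    rw [hv, Pi.sub_apply, hu S hS, hzs.del S hS]; simp
  ext S
  apply inj
  have h1 := congrFun (del_map a v) S
  rw [← h1, hv', map_sub, del_del, sub_zero, huw]

theorem tor_univ : Tor0 k n M (n+1) := by
  intro w hw _
  have : w = 0 := by
    ext S
    exact hw S (by have := Finset.card_le_univ S; simp at this; omega)
  exact ⟨0, fun _ _ => rfl, by simp [this]⟩

end mods
end KZ


namespace KZ
variable {k : Type*} [Field k] {n : ℕ}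

variable (k n) in
/-- homogeneous polynomials of (integer) degree `d`. -/
def Hd (d : ℤ) : AddSubgroup (MvPolynomial (Fin n) k) where
  carrier := {p | ∀ m, coeff m p ≠ 0 → (m.degree : ℤ) = d}
  zero_mem' := by intro m; simp
  add_mem' := by
    intro a b ha hb m hm
    by_cases h : coeff m a = 0
    · exact hb m (by simpa [h] using hm)
    · exact ha m h
  neg_mem' := by
    intro a ha m hm
    exact ha m (by simpa using hm)

theorem mem_Hd {d : ℤ} {p : MvPolynomial (Fin n) k} :
    p ∈ Hd k n d ↔ ∀ m, coeff m p ≠ 0 → (m.degree : ℤ) = d := Iff.rfl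

theorem isHom_iff {d : ℕ} {p : MvPolynomial (Fin n) k} :
    p.IsHomogeneous d ↔ p ∈ Hd k n d := by
  rw [mem_Hd, IsHomogeneous, IsWeightedHomogeneous]
  have : ∀ m : Fin n →₀ ℕ, Finsupp.weight (1 : Fin n → ℕ) m = m.degree := fun m => by
    rw [Finsupp.degree_eq_weight_one]; rfl
  simp only [this, Nat.cast_inj]

theorem homogOfDeg_iff {d : ℤ} {p : MvPolynomial (Fin n) k} :
    HomogOfDeg p d ↔ p ∈ Hd k n d := by
  constructor
  · rintro (rfl | ⟨m, rfl, h⟩)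
    · exact zero_mem _
    · exact isHom_iff.1 h
  · intro h
    by_cases hp : p = 0
    · exact Or.inl hp
    · obtain ⟨m, hm⟩ := MvPolynomial.ne_zero_iff.1 hp
      have := h m hm
      subst this
      exact Or.inr ⟨_, rfl, isHom_iff.2 h⟩

theorem Hd_mul {d e : ℤ} {p q : MvPolynomial (Fin n) k} (hp : p ∈ Hd k n d) (hq : q ∈ Hd k n e) :
    p * q ∈ Hd k n (d + e) := by
  classical
  intro m hm
  rw [coeff_mul] at hm
  obtain ⟨x, hx, hx'⟩ := Finset.exists_ne_zero_of_sum_ne_zero hm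
  have h1 := hp x.1 (left_ne_zero_of_mul hx')
  have h2 := hq x.2 (right_ne_zero_of_mul hx')
  rw [Finset.HasAntidiagonal.mem_antidiagonal] at hx
  rw [← hx, ← h1, ← h2, map_add]; push_cast; rfl

theorem Hd_neg {d : ℤ} (hd : d < 0) {p : MvPolynomial (Fin n) k} (hp : p ∈ Hd k n d) : p = 0 := by
  ext m
  by_contra h
  have := hp m (by simpa using h)
  omega

theorem X_Hd (j : Fin n) : (X j : MvPolynomial (Fin n) k) ∈ Hd k n 1 := by
  have := isHom_iff.1 (isHomogeneous_X k j)
  simpa using this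

theorem Hd_X_mul {d : ℤ} (j : Fin n) {p : MvPolynomial (Fin n) k} (hp : p ∈ Hd k n d) :
    X j * p ∈ Hd k n (d + 1) := by
  rw [add_comm]; exact Hd_mul (X_Hd j) hp

variable (k n) in
noncomputable def GrR : Gr k n (MvPolynomial (Fin n) k) where
  G := Hd k n
  hX d j m h := Hd_X_mul j h

/-- homogeneous component -/
noncomputable def comp (d : ℤ) : MvPolynomial (Fin n) k →ₗ[k] MvPolynomial (Fin n) k :=
  if 0 ≤ d then homogeneousComponent d.toNat else 0

theorem coeff_comp (d : ℤ) (p : MvPolynomial (Fin n) k) (m) :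
    coeff m (comp d p) = if (m.degree : ℤ) = d then coeff m p else 0 := by
  unfold comp
  split_ifs with h1 h2 h2
  · rw [coeff_homogeneousComponent, if_pos (by omega)]
  · rw [coeff_homogeneousComponent, if_neg (by omega)]
  · omega
  · simp

theorem comp_mem (d : ℤ) (p : MvPolynomial (Fin n) k) : comp d p ∈ Hd k n d := by
  intro m hm
  rw [coeff_comp] at hm
  by_contra h
  simp [h] at hm

theorem comp_of_mem {d : ℤ} {p : MvPolynomial (Fin n) k} (hp : p ∈ Hd k n d) : comp d p = p := by
  ext m
  rw [coeff_comp]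
  split_ifs with h
  · rfl
  · by_contra h'
    exact h (hp m (Ne.symm h'))

theorem comp_mul {d e : ℤ} {q : MvPolynomial (Fin n) k} (hq : q ∈ Hd k n e)
    (p : MvPolynomial (Fin n) k) : comp d (q * p) = q * comp (d - e) p := by
  classical
  ext m
  rw [coeff_comp, coeff_mul, coeff_mul]
  split_ifs with h
  · refine Finset.sum_congr rfl fun x hx => ?_
    rw [coeff_comp]
    by_cases h0 : coeff x.1 q = 0
    · simp [h0]
    have h1 := hq _ h0
    rw [Finset.HasAntidiagonal.mem_antidiagonal] at hx
    rw [← hx, map_add] at h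
    push_cast at h
    rw [if_pos (by omega)]
  · symm
    refine Finset.sum_eq_zero fun x hx => ?_
    rw [coeff_comp]
    by_cases h0 : coeff x.1 q = 0
    · simp [h0]
    have h1 := hq _ h0
    rw [Finset.HasAntidiagonal.mem_antidiagonal] at hx
    rw [← hx, map_add] at h
    push_cast at h
    rw [if_neg (by omega), mul_zero]

theorem comp_zero_eq (p : MvPolynomial (Fin n) k) : comp 0 p = C (coeff 0 p) := by
  simp [comp]

theorem sum_comp {p : MvPolynomial (Fin n) k} {N : ℕ} (h : p.totalDegree < N) :
    ∑ d ∈ Finset.range N, comp (d : ℤ) p = p := by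
  ext m
  simp only [coeff_sum, coeff_comp, Nat.cast_inj]
  rw [Finset.sum_ite_eq]
  split_ifs with h'
  · rfl
  · rw [coeff_eq_zero_of_totalDegree_lt]
    simp only [Finset.mem_range] at h'
    have : m.degree = ∑ i ∈ m.support, m i := rfl
    omega

/-- division by a variable -/
noncomputable def dv (i : Fin n) (p : MvPolynomial (Fin n) k) : MvPolynomial (Fin n) k :=
  p.divMonomial (Finsupp.single i 1)

theorem dv_Hd {i : Fin n} {d : ℤ} {p : MvPolynomial (Fin n) k} (hp : p ∈ Hd k n d) :
    dv i p ∈ Hd k n (d - 1) := by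
  intro m hm
  rw [dv, coeff_divMonomial] at hm
  have := hp _ hm
  rw [map_add, Finsupp.degree_single] at this
  push_cast at this
  omega

theorem dv_X (i : Fin n) (p : MvPolynomial (Fin n) k) : dv i (X i * p) = p :=
  X_mul_divMonomial i p

theorem dv_X_ne {i j : Fin n} (h : j ≠ i) (p : MvPolynomial (Fin n) k) :
    dv i (X j * p) = X j * dv i p := by
  ext m
  rw [dv, dv, coeff_divMonomial, coeff_X_mul', coeff_X_mul', coeff_divMonomial]
  have : j ∈ (Finsupp.single i 1 + m).support ↔ j ∈ m.support := by
    simp [Finsupp.single_apply, Ne.symm h]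
  simp only [this]
  split_ifs with hj
  · congr 1
    ext l
    simp only [Finsupp.coe_tsub, Finsupp.coe_add, Pi.sub_apply, Pi.add_apply]
    by_cases hl : l = j
    · subst hl; simp [Finsupp.single_apply, Ne.symm h]
    · simp [Finsupp.single_apply, Ne.symm hl]
  · rfl

theorem dv_add (i : Fin n) (p q : MvPolynomial (Fin n) k) : dv i (p + q) = dv i p + dv i q :=
  add_divMonomial _ _ _

noncomputable def dvHom (i : Fin n) : MvPolynomial (Fin n) k →+ MvPolynomial (Fin n) k where
  toFun := dv i
  map_zero' := zero_divMonomial _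
  map_add' := dv_add i

theorem iota_dv (i j : Fin n) (w : Finset (Fin n) → MvPolynomial (Fin n) k) :
    iota (k := k) j (fun S => dvHom i (w S)) = fun S => dvHom i (iota (k := k) j w S) := by
  ext1 S
  simp only [iota_apply]
  split_ifs
  · simp
  · rw [map_zsmul]

theorem ext_dv (i j : Fin n) (w : Finset (Fin n) → MvPolynomial (Fin n) k) :
    ext (k := k) j (fun S => dvHom i (w S)) = fun S => dvHom i (ext (k := k) j w S) := by
  ext1 S
  simp only [ext_apply]
  split_ifs
  · rw [map_zsmul]
  · simp

/-- homotopy -/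
noncomputable def hom (i : Fin n) (w : Finset (Fin n) → MvPolynomial (Fin n) k) :
    Finset (Fin n) → MvPolynomial (Fin n) k :=
  ext (k := k) i (fun S => dvHom i (w S))

theorem homotopy (i : Fin n) (w : Finset (Fin n) → MvPolynomial (Fin n) k)
    (hw : del (k := k) w = 0) (S) :
    (w - del (k := k) (hom i w)) S = if i ∈ S then 0 else w S - X i * dv i (w S) := by
  have h0 : ext (k := k) i (fun S => dvHom i (del (k := k) w S)) = 0 := by
    rw [hw]; ext; simp [ext_apply]
  have h1 : (fun S => dvHom i (del (k := k) w S)) =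
      ∑ j, fun S => dvHom i (X j * iota (k := k) j w S) := by
    ext1 S
    rw [Finset.sum_apply, del_apply, map_sum]; rfl
  rw [h1, map_sum] at h0
  have h2 : ∀ j, ext (k := k) i (fun S => dvHom i (X j * iota (k := k) j w S)) =
      - ((X j : MvPolynomial (Fin n) k) • iota (k := k) j (hom i w)) +
        if j = i then ext (k := k) i (iota (k := k) i w) +
          (X i : MvPolynomial (Fin n) k) • iota (k := k) i (hom i w) else 0 := by
    intro j
    split_ifs with hj
    · subst hj
      have : (fun S => dvHom j (X j * iota (k := k) j w S)) = iota (k := k) j w := by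
        ext1 S; exact dv_X _ _
      rw [this]; abel
    · have : (fun S => dvHom i (X j * iota (k := k) j w S)) =
          (X j : MvPolynomial (Fin n) k) • iota (k := k) j (fun S => dvHom i (w S)) := by
        rw [iota_dv]
        ext1 S
        exact dv_X_ne hj _
      rw [this, map_smul, hom, iota_ext j i hj]; simp
  simp_rw [h2] at h0
  rw [Finset.sum_add_distrib, Finset.sum_neg_distrib, ← del_eq, Finset.sum_ite_eq' Finset.univ i] at h0
  simp only [Finset.mem_univ, if_true] at h0
  have h3 : del (k := k) (hom i w) = ext (k := k) i (iota (k := k) i w) +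
          (X i : MvPolynomial (Fin n) k) • iota (k := k) i (hom i w) := by
    exact neg_add_eq_zero.1 h0
  rw [h3, Pi.sub_apply, Pi.add_apply, Pi.smul_apply]
  by_cases hi : i ∈ S
  · rw [if_pos hi]
    simp only [ext_apply, iota_apply, hi, if_true, Finset.notMem_erase, if_false,
      Finset.insert_erase hi, smul_smul, eps_sq, one_smul, smul_zero, add_zero, sub_self]
  · rw [if_neg hi]
    simp only [ext_apply, iota_apply, hi, hom, if_false, zero_add, Finset.mem_insert_self, if_true,
      Finset.erase_insert hi, smul_smul, eps_sq, one_smul, smul_eq_mul]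
    rfl

theorem coeff_mod (i : Fin n) (p : MvPolynomial (Fin n) k) (m) :
    coeff m (p - X i * dv i p) = if m i = 0 then coeff m p else 0 := by
  rw [coeff_sub, coeff_X_mul']
  by_cases h : m i = 0
  · rw [if_pos h, if_neg (by simpa using h), sub_zero]
  · rw [if_neg h, if_pos (by simpa using h), dv, coeff_divMonomial, add_tsub_cancel_of_le, sub_self]
    rw [Finsupp.single_le_iff]; omega

theorem acyc_aux (w : Finset (Fin n) → MvPolynomial (Fin n) k) (hw : del (k := k) w = 0)
    (t : Finset (Fin n)) :
    ∃ u : Finset (Fin n) → MvPolynomial (Fin n) k,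
      (∀ d, (∀ S, w S ∈ Hd k n d) → ∀ S, u S ∈ Hd k n (d-1)) ∧
      (∀ p, Supp p w → Supp (p+1) u) ∧
      (∀ i ∈ t, ∀ S, i ∈ S → (w - del (k := k) u) S = 0) ∧
      (∀ i ∈ t, ∀ S m, m i ≠ 0 → coeff m ((w - del (k := k) u) S) = 0) := by
  classical
  induction t using Finset.induction_on with
  | empty => exact ⟨0, fun _ _ _ => zero_mem _, fun _ _ _ _ => rfl, by simp, by simp⟩
  | insert i t hi ih =>
    obtain ⟨u, h1, h2, h3, h4⟩ := ih
    set w' := w - del (k := k) u with hw'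
    have hc : del (k := k) w' = 0 := by rw [hw', map_sub, del_del, hw, sub_zero]
    have key := homotopy i w' hc
    have e : w - del (k := k) (u + hom i w') = w' - del (k := k) (hom i w') := by
      rw [hw', map_add]; abel
    refine ⟨u + hom i w', fun d hd S => add_mem (h1 d hd S) ?_, fun p hp S hS => ?_, ?_, ?_⟩
    · have hh : ∀ S, w' S ∈ Hd k n d := fun S => by
        have := (GrR k n).del_mem (d := d-1) (h1 d hd) S
        rw [sub_add_cancel] at this
        exact sub_mem (hd S) this
      rw [hom, ext_apply]
      split_ifs
      · exact zsmul_mem (dv_Hd (hh _)) _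
      · exact zero_mem _
    · have hh : Supp p w' := fun S hS => by
        rw [hw', Pi.sub_apply, hp S hS, (h2 p hp).del S hS, sub_zero]
      rw [Pi.add_apply, h2 p hp S hS, zero_add, hom, ext_apply]
      split_ifs with hiS
      · rw [hh _ (by rw [Finset.card_erase_of_mem hiS]; have := Finset.card_pos.2 ⟨i, hiS⟩; omega)]
        simp
      · rfl
    · intro j hj S hjS
      rw [e, key]
      rcases Finset.mem_insert.1 hj with rfl | hj
      · rw [if_pos hjS]
      · split_ifs
        · rfl
        · have h0 : dv i (0 : MvPolynomial (Fin n) k) = 0 := (dvHom i).map_zero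
          rw [h3 j hj S hjS, h0, mul_zero, sub_zero]
    · intro j hj S m hm
      rw [e, key]
      split_ifs with hiS
      · simp
      rw [coeff_mod]
      rcases Finset.mem_insert.1 hj with rfl | hj
      · rw [if_neg hm]
      · rw [h4 j hj S m hm]; simp

theorem coeff_zero_del (u : Finset (Fin n) → MvPolynomial (Fin n) k) (S) :
    coeff 0 (del (k := k) u S) = 0 := by
  rw [del_apply, coeff_sum]
  refine Finset.sum_eq_zero fun j _ => ?_
  rw [smul_eq_mul, coeff_X_mul']; simp

theorem acyc (w : Finset (Fin n) → MvPolynomial (Fin n) k) (hw : del (k := k) w = 0)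
    (h0 : coeff 0 (w ∅) = 0) :
    ∃ u : Finset (Fin n) → MvPolynomial (Fin n) k,
      (∀ d, (∀ S, w S ∈ Hd k n d) → ∀ S, u S ∈ Hd k n (d-1)) ∧
      (∀ p, Supp p w → Supp (p+1) u) ∧ del (k := k) u = w := by
  obtain ⟨u, h1, h2, h3, h4⟩ := acyc_aux w hw Finset.univ
  refine ⟨u, h1, h2, ?_⟩
  ext1 S
  symm
  rw [← sub_eq_zero]
  change (w - del (k := k) u) S = 0
  rcases S.eq_empty_or_nonempty with rfl | ⟨i, hi⟩
  · ext m
    by_cases hm : m = 0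
    · subst hm
      rw [Pi.sub_apply, coeff_sub, coeff_zero_del, h0]; simp
    · obtain ⟨i, hi⟩ := Finsupp.ne_iff.1 hm
      rw [h4 i (Finset.mem_univ _) ∅ m (by simpa using hi)]; simp
  · exact h3 i (Finset.mem_univ _) S hi

/-- graded free module -/
noncomputable def GF {b : ℕ} (D : Fin b → ℤ) : Gr k n (Fin b → MvPolynomial (Fin n) k) where
  G d :=
    { carrier := {w | ∀ r, w r ∈ Hd k n (d - D r)}
      zero_mem' := fun r => zero_mem _
      add_mem' := fun ha hb r => add_mem (ha r) (hb r)
      neg_mem' := fun ha r => neg_mem (ha r) }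
  hX d j m h := fun r => by
    have := Hd_X_mul j (h r)
    rw [sub_add_eq_add_sub] at this
    exact this

theorem mem_GF {b : ℕ} {D : Fin b → ℤ} {d : ℤ} {w : Fin b → MvPolynomial (Fin n) k} :
    w ∈ (GF (k := k) (n := n) D).G d ↔ ∀ r, w r ∈ Hd k n (d - D r) := Iff.rfl

theorem acycF {b : ℕ} (w : Finset (Fin n) → Fin b → MvPolynomial (Fin n) k)
    (hw : del (k := k) w = 0) (h0 : ∀ r, coeff 0 (w ∅ r) = 0) :
    ∃ u : Finset (Fin n) → Fin b → MvPolynomial (Fin n) k,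
      (∀ (D : Fin b → ℤ) d, (∀ S, w S ∈ (GF (k := k) (n := n) D).G d) →
        ∀ S, u S ∈ (GF (k := k) (n := n) D).G (d-1)) ∧
      (∀ p, Supp p w → Supp (p+1) u) ∧ del (k := k) u = w := by
  have hp : ∀ (u : Finset (Fin n) → Fin b → MvPolynomial (Fin n) k) r,
      del (k := k) (fun S => u S r) = fun S => del (k := k) u S r := fun u r =>
    del_map (LinearMap.proj r : (Fin b → MvPolynomial (Fin n) k) →ₗ[MvPolynomial (Fin n) k] _) u
  choose u h1 h2 h3 using fun r => acyc (fun S => w S r)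
    (by rw [hp, hw]; rfl) (h0 r)
  refine ⟨fun S r => u r S, fun D d h S r => ?_, fun p hw S hS => ?_, ?_⟩
  · have := h1 r (d - D r) (fun S => h S r) S
    rw [sub_right_comm] at this
    exact this
  · ext1 r
    exact h2 r p (fun S hS => by simp [hw S hS]) S hS
  · ext1 S
    ext1 r
    rw [← congrFun (h3 r) S]
    exact (congrFun (hp (fun S r => u r S) r) S).symm

theorem vanF {b : ℕ} {D : Fin b → ℤ} {d : ℤ} (h : ∀ r, D r < d) :
    Van (GF (k := k) (n := n) D) d := by
  intro w hw hw0
  obtain ⟨u, h1, -, h3⟩ := acycF w hw0 (fun r => by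
    by_contra h'
    have := hw ∅ r 0 h'
    have := h r
    simp at *
    omega)
  exact ⟨u, h1 D d hw, h3⟩

end KZ


namespace KZ
variable {k : Type*} [Field k] {n : ℕ}

/-- homogeneous component of vectors -/
noncomputable def compV {b : ℕ} (D : Fin b → ℤ) (d : ℤ) (w : Fin b → MvPolynomial (Fin n) k) :
    Fin b → MvPolynomial (Fin n) k := fun r => comp (d - D r) (w r)

theorem compV_mem {b : ℕ} (D : Fin b → ℤ) (d : ℤ) (w : Fin b → MvPolynomial (Fin n) k) :
    compV D d w ∈ (GF (k := k) (n := n) D).G d := fun _ => comp_mem _ _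

theorem compV_of_mem {b : ℕ} {D : Fin b → ℤ} {d : ℤ} {w : Fin b → MvPolynomial (Fin n) k}
    (h : w ∈ (GF (k := k) (n := n) D).G d) : compV D d w = w :=
  funext fun r => comp_of_mem (h r)

theorem compV_mulVec {b b' : ℕ} {D : Fin b → ℤ} {D' : Fin b' → ℤ}
    {A : Matrix (Fin b) (Fin b') (MvPolynomial (Fin n) k)}
    (hA : ∀ r c, A r c ∈ Hd k n (D' c - D r)) (d : ℤ) (u : Fin b' → MvPolynomial (Fin n) k) :
    compV D d (A.mulVec u) = A.mulVec (compV D' d u) := by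
  ext1 r
  simp only [compV, Matrix.mulVec, dotProduct, map_sum]
  refine Finset.sum_congr rfl fun c _ => ?_
  rw [comp_mul (hA r c)]
  congr 2; ring_nf

/-- graded submodule -/
def IsGr {b : ℕ} (D : Fin b → ℤ) (Z : Submodule (MvPolynomial (Fin n) k)
    (Fin b → MvPolynomial (Fin n) k)) : Prop := ∀ z ∈ Z, ∀ d, compV D d z ∈ Z

/-- induced grading on a submodule -/
noncomputable def GS {b : ℕ} (D : Fin b → ℤ) (Z : Submodule (MvPolynomial (Fin n) k)
    (Fin b → MvPolynomial (Fin n) k)) : Gr k n Z where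
  G d := ((GF (k := k) (n := n) D).G d).comap Z.subtype.toAddMonoidHom
  hX d j m h := by
    have := (GF (k := k) (n := n) D).hX d j (m : Fin b → MvPolynomial (Fin n) k) h
    exact this

theorem mem_GS {b : ℕ} {D : Fin b → ℤ} {Z : Submodule (MvPolynomial (Fin n) k)
    (Fin b → MvPolynomial (Fin n) k)} {d : ℤ} {z : Z} :
    z ∈ (GS D Z).G d ↔ (z : Fin b → MvPolynomial (Fin n) k) ∈ (GF (k := k) (n := n) D).G d :=
  Iff.rfl

theorem mulVec_mem {b b' : ℕ} {D : Fin b → ℤ} {D' : Fin b' → ℤ}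
    {A : Matrix (Fin b) (Fin b') (MvPolynomial (Fin n) k)}
    (hA : ∀ r c, A r c ∈ Hd k n (D' c - D r)) {d : ℤ} {u : Fin b' → MvPolynomial (Fin n) k}
    (hu : u ∈ (GF (k := k) (n := n) D').G d) :
    A.mulVec u ∈ (GF (k := k) (n := n) D).G d := by
  rw [← compV_of_mem hu, ← compV_mulVec hA]
  exact compV_mem _ _ _

theorem matSES {b b' : ℕ} {D : Fin b → ℤ} {D' : Fin b' → ℤ}
    {A : Matrix (Fin b) (Fin b') (MvPolynomial (Fin n) k)}
    (hA : ∀ r c, A r c ∈ Hd k n (D' c - D r)) :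
    SES (GS D' (LinearMap.ker A.mulVecLin)) (GF D') (GS D (LinearMap.range A.mulVecLin))
      (Submodule.subtype _) A.mulVecLin.rangeRestrict where
  inj := Subtype.val_injective
  ex m := by
    constructor
    · intro h
      exact ⟨⟨m, by simpa [Subtype.ext_iff] using h⟩, rfl⟩
    · rintro ⟨x, rfl⟩
      ext1
      exact x.2
  degN d x := Iff.rfl
  degM d m h := mulVec_mem hA h
  degQ d q h := by
    obtain ⟨q, u, rfl⟩ := q
    refine ⟨compV D' d u, compV_mem _ _ _, ?_⟩
    ext1
    change A.mulVec (compV D' d u) = A.mulVec u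
    rw [← compV_mulVec hA]
    exact compV_of_mem h

theorem ker_gr {b b' : ℕ} {D : Fin b → ℤ} {D' : Fin b' → ℤ}
    {A : Matrix (Fin b) (Fin b') (MvPolynomial (Fin n) k)}
    (hA : ∀ r c, A r c ∈ Hd k n (D' c - D r)) : IsGr D' (LinearMap.ker A.mulVecLin) := by
  intro z hz d
  have hz' : A.mulVec z = 0 := hz
  change A.mulVec (compV D' d z) = 0
  rw [← compV_mulVec hA, hz']
  ext1 r
  simp [compV]

/-- homogeneous ideal, closed under components -/
def HI (I : Ideal (MvPolynomial (Fin n) k)) : Prop := ∀ p ∈ I, ∀ d, comp d p ∈ I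

/-- grading on `R/I`. -/
noncomputable def GQ (I : Ideal (MvPolynomial (Fin n) k)) :
    Gr k n (MvPolynomial (Fin n) k ⧸ I) where
  G d := (Hd k n d).map (Ideal.Quotient.mk I).toAddMonoidHom
  hX d j m h := by
    obtain ⟨p, hp, rfl⟩ := h
    exact ⟨X j * p, Hd_X_mul j hp, rfl⟩

theorem mem_GQ {I : Ideal (MvPolynomial (Fin n) k)} {d : ℤ} {m} :
    m ∈ (GQ I).G d ↔ ∃ p ∈ Hd k n d, Ideal.Quotient.mk I p = m := Iff.rfl

/-- augmentation map -/
noncomputable def aug (I : Ideal (MvPolynomial (Fin n) k)) {b : ℕ}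
    (v : Fin b → MvPolynomial (Fin n) k) :
    (Fin b → MvPolynomial (Fin n) k) →ₗ[MvPolynomial (Fin n) k] (MvPolynomial (Fin n) k ⧸ I) :=
  (Submodule.mkQ I).comp (Fintype.linearCombination (MvPolynomial (Fin n) k) v)

theorem aug_apply (I : Ideal (MvPolynomial (Fin n) k)) {b : ℕ}
    (v : Fin b → MvPolynomial (Fin n) k) (w) :
    aug I v w = Ideal.Quotient.mk I (∑ r, w r * v r) := rfl

theorem augSES {I : Ideal (MvPolynomial (Fin n) k)} (hI : HI I) {b : ℕ} {D : Fin b → ℤ}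
    {v : Fin b → MvPolynomial (Fin n) k} (hv : ∀ r, v r ∈ Hd k n (D r))
    (hs : Function.Surjective (aug I v)) :
    SES (GS D (LinearMap.ker (aug I v))) (GF D) (GQ I) (Submodule.subtype _) (aug I v) where
  inj := Subtype.val_injective
  ex m := by
    constructor
    · intro h
      exact ⟨⟨m, h⟩, rfl⟩
    · rintro ⟨x, rfl⟩
      exact x.2
  degN d x := Iff.rfl
  degM d m h := by
    refine ⟨∑ r, m r * v r, sum_mem fun r _ => ?_, rfl⟩
    have := Hd_mul (h r) (hv r)
    rwa [sub_add_cancel] at this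
  degQ d q h := by
    obtain ⟨p, hp, rfl⟩ := h
    obtain ⟨w, hw⟩ := hs (Ideal.Quotient.mk I p)
    refine ⟨compV D d w, compV_mem _ _ _, ?_⟩
    rw [aug_apply] at hw ⊢
    have h1 : ∑ r, compV D d w r * v r = comp d (∑ r, w r * v r) := by
      rw [map_sum]
      refine Finset.sum_congr rfl fun r _ => ?_
      rw [mul_comm (w r), comp_mul (hv r), mul_comm]; rfl
    rw [h1]
    have h2 := hI _ (Ideal.Quotient.eq.1 hw) d
    rw [map_sub, comp_of_mem hp] at h2
    exact Ideal.Quotient.eq.2 h2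

/-- `reg R/I ≤ r` via Koszul homology -/
def VI (I : Ideal (MvPolynomial (Fin n) k)) (r : ℤ) : Prop := ∀ d, r < d → Van (GQ I) d

theorem vanS_bot {b : ℕ} {D : Fin b → ℤ} {d : ℤ} {Z : Submodule (MvPolynomial (Fin n) k)
    (Fin b → MvPolynomial (Fin n) k)} (h : Z = ⊥) : Van (GS D Z) d := by
  subst h
  intro w _ _
  have : w = 0 := by
    ext1 S; exact Subsingleton.elim _ _
  exact ⟨0, fun _ => zero_mem _, by simp [this]⟩

theorem res_to_van {I : Ideal (MvPolynomial (Fin n) k)} (hI : HI I) {r : ℤ} (F : GradedFreeRes I)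
    (hF : ∀ (i : ℕ) (j : Fin (F.b i)), F.D i j - (i : ℤ) ≤ r) : VI I r := by
  have hA : ∀ i r c, F.A i r c ∈ Hd k n (F.D (i+1) c - F.D i r) := fun i r c =>
    homogOfDeg_iff.1 (F.hA i r c)
  have hv : ∀ r, F.v r ∈ Hd k n (F.D 0 r) := fun r => homogOfDeg_iff.1 (F.hv r)
  have hker : ∀ i, LinearMap.ker (F.A i).mulVecLin = LinearMap.range (F.A (i+1)).mulVecLin := by
    intro i; ext x; exact F.hex i x
  have hker0 : LinearMap.ker (aug I F.v) = LinearMap.range (F.A 0).mulVecLin := by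
    ext x; exact F.hex0 x
  have key : ∀ m i, F.len < i + m → ∀ d, r + i + 1 < d →
      Van (GS (F.D i) (LinearMap.range (F.A i).mulVecLin)) d := by
    intro m
    induction m with
    | zero =>
      intro i hi d hd
      apply vanS_bot
      rw [eq_bot_iff]
      intro x _
      have := F.hb i (by simpa using hi)
      ext1 j
      exact absurd j.2 (by omega)
    | succ m ih =>
      intro i hi d hd
      refine (matSES (hA i)).vanQ (vanF fun j => ?_) ?_
      · have := hF (i+1) j
        push_cast at this
        omega
      · rw [hker]
        apply ih (i+1) (by omega)
        push_cast
        omega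
  intro d hd
  refine (augSES hI hv F.haug).vanQ (vanF fun j => ?_) ?_
  · have := hF 0 j
    push_cast at this
    omega
  · rw [hker0]
    exact key (F.len + 1) 0 (by omega) _ (by push_cast; omega)

end KZ


namespace KZ
variable {k : Type*} [Field k] {n : ℕ}

theorem del_delta {M : Type*} [AddCommGroup M] [Module (MvPolynomial (Fin n) k) M] (x : M) :
    del (k := k) (fun S : Finset (Fin n) => if S = ∅ then x else 0) = 0 := by
  ext1 S
  rw [del_apply]
  refine Finset.sum_eq_zero fun j _ => ?_
  rw [iota_apply]
  split_ifs with h1 h2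
  · simp
  · exact absurd h2 (Finset.insert_ne_empty _ _)
  · simp

theorem sum_comp_shift {p : MvPolynomial (Fin n) k} {s : Finset ℤ} {c : ℤ}
    (h : ∀ m, coeff m p ≠ 0 → (m.degree : ℤ) + c ∈ s) : ∑ d ∈ s, comp (d - c) p = p := by
  ext m
  simp only [coeff_sum, coeff_comp]
  have : ∀ d : ℤ, ((m.degree : ℤ) = d - c) ↔ ((m.degree : ℤ) + c = d) := fun d => by omega
  simp only [this]
  rw [Finset.sum_ite_eq]
  split_ifs with h'
  · rfl
  · by_contra h''
    exact h' (h m (Ne.symm h''))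

theorem sum_compV {b : ℕ} (D : Fin b → ℤ) (z : Fin b → MvPolynomial (Fin n) k) :
    ∃ s : Finset ℤ, ∑ d ∈ s, compV D d z = z := by
  classical
  refine ⟨Finset.univ.biUnion fun r => (z r).support.image fun m => (m.degree : ℤ) + D r, ?_⟩
  ext1 r
  rw [Finset.sum_apply]
  refine sum_comp_shift fun m hm => ?_
  rw [Finset.mem_biUnion]
  exact ⟨r, Finset.mem_univ _, Finset.mem_image.2 ⟨m, by simpa using hm, rfl⟩⟩

theorem exists_gens {b : ℕ} {D : Fin b → ℤ} {Z : Submodule (MvPolynomial (Fin n) k)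
    (Fin b → MvPolynomial (Fin n) k)} (hZ : IsGr D Z) :
    ∃ (b' : ℕ) (D' : Fin b' → ℤ) (g : Fin b' → Fin b → MvPolynomial (Fin n) k),
      (∀ c, g c ∈ (GF (k := k) (n := n) D).G (D' c)) ∧
      Submodule.span (MvPolynomial (Fin n) k) (Set.range g) = Z := by
  have h1 : Submodule.span (MvPolynomial (Fin n) k)
      {z | z ∈ Z ∧ ∃ d, z ∈ (GF (k := k) (n := n) D).G d} = Z := by
    apply le_antisymm
    · rw [Submodule.span_le]; exact fun z hz => hz.1
    · intro z hz
      obtain ⟨s, hs⟩ := sum_compV D z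
      rw [← hs]
      exact Submodule.sum_mem _ fun d _ =>
        Submodule.subset_span ⟨hZ z hz d, d, compV_mem _ _ _⟩
  have h2 := (Submodule.fg_span_iff_fg_span_finset_subset (R := MvPolynomial (Fin n) k)
    {z | z ∈ Z ∧ ∃ d, z ∈ (GF (k := k) (n := n) D).G d}).1
    (IsNoetherian.noetherian _)
  obtain ⟨s, hs, hs'⟩ := h2
  choose! deg hdeg using fun z (hz : z ∈ {z | z ∈ Z ∧ ∃ d, z ∈ (GF (k := k) (n := n) D).G d}) => hz.2
  refine ⟨s.card, fun c => deg (s.equivFin.symm c), fun c => (s.equivFin.symm c : _), fun c => ?_, ?_⟩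
  · exact hdeg _ (hs (s.equivFin.symm c).2)
  · rw [← h1, hs']
    congr 1
    ext z
    constructor
    · rintro ⟨c, rfl⟩
      exact (s.equivFin.symm c).2
    · intro hz
      exact ⟨s.equivFin ⟨z, hz⟩, by simp⟩

theorem exists_min_gens {b : ℕ} {D : Fin b → ℤ} {Z : Submodule (MvPolynomial (Fin n) k)
    (Fin b → MvPolynomial (Fin n) k)} (hZ : IsGr D Z) :
    ∃ (b' : ℕ) (D' : Fin b' → ℤ) (g : Fin b' → Fin b → MvPolynomial (Fin n) k),
      (∀ c, g c ∈ (GF (k := k) (n := n) D).G (D' c)) ∧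
      Submodule.span (MvPolynomial (Fin n) k) (Set.range g) = Z ∧
      ∀ c, g c ∉ Submodule.span (MvPolynomial (Fin n) k) (g '' {c}ᶜ) := by
  classical
  have h := exists_gens hZ
  obtain ⟨D', g, hg, hspan⟩ := Nat.find_spec h
  refine ⟨Nat.find h, D', g, hg, hspan, ?_⟩
  have hmin := fun m => Nat.find_min h (m := m)
  generalize Nat.find h = b' at *
  intro c hc
  obtain _ | m := b'
  · exact c.elim0
  refine hmin m (by omega) ⟨D' ∘ c.succAbove, g ∘ c.succAbove, fun i => hg _, ?_⟩
  rw [← hspan]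
  apply le_antisymm
  · exact Submodule.span_mono (Set.range_comp_subset_range _ _)
  · rw [Submodule.span_le]
    have e : Set.range (g ∘ c.succAbove) = g '' {c}ᶜ := by
      rw [Set.range_comp, Fin.range_succAbove]
    rintro _ ⟨i, rfl⟩
    rw [e]
    by_cases hi : i = c
    · subst hi; exact hc
    · exact Submodule.subset_span ⟨i, hi, rfl⟩

/-- Properties of a minimal cover, as a matrix. -/
structure MinCov {b b' : ℕ} (D : Fin b → ℤ) (D' : Fin b' → ℤ)
    (Z : Submodule (MvPolynomial (Fin n) k) (Fin b → MvPolynomial (Fin n) k))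
    (A : Matrix (Fin b) (Fin b') (MvPolynomial (Fin n) k)) : Prop where
  hA : ∀ r c, A r c ∈ Hd k n (D' c - D r)
  range : LinearMap.range A.mulVecLin = Z
  min : ∀ c (u : Fin b' → MvPolynomial (Fin n) k), u c = 0 → A.mulVec u ≠ A.mulVec (Pi.single c 1)

theorem exists_minCov {b : ℕ} {D : Fin b → ℤ} {Z : Submodule (MvPolynomial (Fin n) k)
    (Fin b → MvPolynomial (Fin n) k)} (hZ : IsGr D Z) :
    ∃ (b' : ℕ) (D' : Fin b' → ℤ) (A : Matrix (Fin b) (Fin b') (MvPolynomial (Fin n) k)),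
      MinCov D D' Z A := by
  obtain ⟨b', D', g, hg, hs, hm⟩ := exists_min_gens hZ
  have hAu : ∀ u : Fin b' → MvPolynomial (Fin n) k,
      (Matrix.of fun r c => g c r).mulVec u = ∑ c, u c • g c := by
    intro u
    ext1 r
    simp [Matrix.mulVec, dotProduct, Finset.sum_apply, mul_comm]
  refine ⟨b', D', Matrix.of fun r c => g c r, fun r c => hg c r, ?_, ?_⟩
  · rw [← hs, Matrix.range_mulVecLin]
    rfl
  · intro c u hu h
    apply hm c
    have : (Matrix.of fun r c => g c r).mulVec (Pi.single c 1) = g c := by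
      ext1 r; simp
    rw [this, hAu] at h
    rw [← h]
    refine Submodule.sum_mem _ fun i _ => ?_
    by_cases hi : i = c
    · subst hi; rw [hu, zero_smul]; exact zero_mem _
    · exact Submodule.smul_mem _ _ (Submodule.subset_span ⟨i, hi, rfl⟩)

section cov
variable {b b' : ℕ} {D : Fin b → ℤ} {D' : Fin b' → ℤ}
    {Z : Submodule (MvPolynomial (Fin n) k) (Fin b → MvPolynomial (Fin n) k)}
    {A : Matrix (Fin b) (Fin b') (MvPolynomial (Fin n) k)}

theorem MinCov.coeff_zero (h : MinCov D D' Z A) {u : Fin b' → MvPolynomial (Fin n) k}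
    (hu : A.mulVec u = 0) (c : Fin b') : coeff 0 (u c) = 0 := by
  by_contra hc
  set a := coeff 0 (u c) with ha
  have h1 : A.mulVec (compV D' (D' c) u) = 0 := by
    rw [← compV_mulVec h.hA, hu]; ext1 r; simp [compV]
  set u' := compV D' (D' c) u with hu'
  have h2 : u' c = C a := by
    rw [hu', compV, sub_self, comp_zero_eq]
  refine h.min c (Pi.single c 1 - (C a⁻¹ : MvPolynomial (Fin n) k) • u') ?_ ?_
  · simp [h2, ← C_mul, inv_mul_cancel₀ hc]
  · rw [Matrix.mulVec_sub, Matrix.mulVec_smul, h1]; simp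

theorem MinCov.deg_le (h : MinCov D D' Z A) {s : ℤ} (hs : ∀ d, s < d → Van (GS D Z) d)
    (c : Fin b') : D' c ≤ s := by
  by_contra hc
  push Not at hc
  have hgc : A.mulVec (Pi.single c 1) ∈ (GF (k := k) (n := n) D).G (D' c) := by
    intro r; simpa using h.hA r c
  have hgZ : A.mulVec (Pi.single c 1) ∈ Z := by
    rw [← h.range]; exact ⟨_, rfl⟩
  obtain ⟨u, hu, hu'⟩ := hs _ hc (fun S => if S = ∅ then ⟨_, hgZ⟩ else 0)
    (fun S => by
      split_ifs
      · exact hgc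
      · exact zero_mem _)
    (del_delta _)
  have h1 := congrFun hu' ∅
  rw [del_apply, if_pos rfl] at h1
  have h2 : ∀ j, ∃ y : Fin b' → MvPolynomial (Fin n) k, y c = 0 ∧
      A.mulVec y = (iota (k := k) j u ∅ : Z) := by
    intro j
    have hm : iota (k := k) j u ∅ ∈ (GS D Z).G (D' c - 1) := by
      rw [iota_apply]
      split_ifs
      · exact zero_mem _
      · exact zsmul_mem (hu _) _
    generalize iota (k := k) j u ∅ = z at *
    obtain ⟨z, hz⟩ := z
    rw [← h.range] at hz
    obtain ⟨y, rfl⟩ := hz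
    refine ⟨compV D' (D' c - 1) y, ?_, ?_⟩
    · exact Hd_neg (d := -1) (by omega) (by simpa using compV_mem D' (D' c - 1) y c)
    · rw [← compV_mulVec h.hA]
      exact compV_of_mem hm
  choose y hy hy' using h2
  refine h.min c (∑ j, (X j : MvPolynomial (Fin n) k) • y j) (by simp [hy]) ?_
  have h3 := congrArg Subtype.val h1
  refine Eq.trans ?_ h3
  change A.mulVecLin _ = _
  rw [map_sum]
  simp only [map_smul, Matrix.mulVecLin_apply, hy']
  simp

theorem MinCov.van (h : MinCov D D' Z A) {s : ℤ} (hs : ∀ d, s < d → Van (GS D Z) d) :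
    ∀ d, s + 1 < d → Van (GS D' (LinearMap.ker A.mulVecLin)) d := by
  intro d hd
  refine (matSES h.hA).vanN (vanF fun r => ?_) ?_
  · have := h.deg_le hs r
    omega
  · rw [h.range]; exact hs _ (by omega)

theorem MinCov.zero (h : MinCov D D' Z A) (hZ : Z = ⊥) : b' = 0 := by
  by_contra hb
  have : ∀ u, A.mulVec u = 0 := fun u => by
    have : A.mulVec u ∈ Z := by rw [← h.range]; exact ⟨u, rfl⟩
    simpa [hZ] using this
  exact h.min ⟨0, by omega⟩ 0 rfl (by rw [this, this])

theorem MinCov.tor (h : MinCov D D' Z A) {p : ℕ} (hZ : Tor0 k n Z (p+1)) :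
    Tor0 k n (LinearMap.ker A.mulVecLin) p := by
  have hs := matSES h.hA
  rw [← h.range] at hZ
  intro w hw hw0
  obtain ⟨u, -, hu, hu'⟩ := acycF (fun S => (w S : Fin b' → MvPolynomial (Fin n) k))
    (by
      have := del_map (LinearMap.ker A.mulVecLin).subtype w
      rw [hw0] at this
      exact this) (fun r => h.coeff_zero (w ∅).2 r)
  exact tor_step (Submodule.subtype _) A.mulVecLin.rangeRestrict hs.inj hs.ex
    (LinearMap.surjective_rangeRestrict _) hZ (hu p (fun S hS => by simp [hw S hS])) hu'

theorem tor_zero_bot (hZ : Tor0 k n Z 0) : Z = ⊥ := by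
  have hle : Z ≤ mxIdeal k n • Z := by
    intro z hz
    obtain ⟨u, -, hu⟩ := hZ (fun S => if S = ∅ then ⟨z, hz⟩ else 0) (fun S hS => by omega)
      (del_delta _)
    have h1 := congrArg Subtype.val (congrFun hu ∅)
    rw [del_apply, if_pos rfl] at h1
    change _ = z at h1
    rw [← h1, AddSubmonoidClass.coe_finset_sum]
    refine Submodule.sum_mem _ fun j _ => ?_
    exact Submodule.smul_mem_smul (Ideal.subset_span ⟨j, rfl⟩) (iota (k := k) j u ∅).2
  obtain ⟨a, ha, ha'⟩ := Submodule.exists_sub_one_mem_and_smul_eq_zero_of_fg_of_le_smul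
    (mxIdeal k n) Z (IsNoetherian.noetherian _) hle
  have hm : mxIdeal k n ≤ RingHom.ker (constantCoeff : MvPolynomial (Fin n) k →+* k) := by
    rw [mxIdeal, Ideal.span_le]
    rintro _ ⟨i, rfl⟩
    simp [RingHom.mem_ker]
  have ha0 : a ≠ 0 := by
    rintro rfl
    have := hm ha
    simp [RingHom.mem_ker] at this
  rw [eq_bot_iff]
  intro z hz
  ext1 r
  have := congrFun (ha' z hz) r
  simpa [ha0] using this

end cov

end KZ


namespace KZ
variable {k : Type*} [Field k] {n : ℕ}

/-- a graded submodule of a graded free module -/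
structure St (k : Type*) [Field k] (n : ℕ) where
  b : ℕ
  D : Fin b → ℤ
  Z : Submodule (MvPolynomial (Fin n) k) (Fin b → MvPolynomial (Fin n) k)
  hZ : IsGr D Z

noncomputable def St.nb (s : St k n) : ℕ := (exists_minCov s.hZ).choose
noncomputable def St.nD (s : St k n) : Fin s.nb → ℤ := (exists_minCov s.hZ).choose_spec.choose
noncomputable def St.nA (s : St k n) : Matrix (Fin s.b) (Fin s.nb) (MvPolynomial (Fin n) k) :=
  (exists_minCov s.hZ).choose_spec.choose_spec.choose
theorem St.spec (s : St k n) : MinCov s.D s.nD s.Z s.nA :=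
  (exists_minCov s.hZ).choose_spec.choose_spec.choose_spec

noncomputable def St.step (s : St k n) : St k n :=
  ⟨s.nb, s.nD, LinearMap.ker s.nA.mulVecLin, ker_gr s.spec.hA⟩

noncomputable def St.seq (s : St k n) : ℕ → St k n
  | 0 => s
  | i+1 => (St.seq s i).step

theorem St.seq_tor (s : St k n) (i p : ℕ) (h : i + p = n + 1) : Tor0 k n (s.seq i).Z p := by
  induction i generalizing p with
  | zero =>
    have : p = n + 1 := by omega
    subst this
    exact tor_univ
  | succ i ih => exact (s.seq i).spec.tor (ih (p+1) (by omega))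

theorem St.seq_bot (s : St k n) (m : ℕ) : (s.seq (n + 1 + m)).Z = ⊥ := by
  induction m with
  | zero => exact tor_zero_bot (s.seq_tor (n+1) 0 rfl)
  | succ m ih =>
    have h : (s.seq (n + 1 + m + 1)).b = 0 := (s.seq (n+1+m)).spec.zero ih
    rw [eq_bot_iff]
    intro x _
    ext1 j
    exact absurd j.2 (by have : (s.seq (n + 1 + (m + 1))).b = 0 := h; omega)

theorem St.seq_van (s : St k n) {r : ℤ} (h : ∀ d, r + 1 < d → Van (GS s.D s.Z) d) (i : ℕ) :
    ∀ d, r + i + 1 < d → Van (GS (s.seq i).D (s.seq i).Z) d := by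
  induction i with
  | zero => intro d hd; exact h d (by simpa using hd)
  | succ i ih =>
    intro d hd
    exact (s.seq i).spec.van ih d (by push_cast at hd; omega)

theorem St.seq_deg (s : St k n) {r : ℤ} (h : ∀ d, r + 1 < d → Van (GS s.D s.Z) d) (i : ℕ) (j) :
    (s.seq (i+1)).D j ≤ r + i + 1 :=
  (s.seq i).spec.deg_le (s.seq_van h i) j

theorem aug_one_surj (I : Ideal (MvPolynomial (Fin n) k)) :
    Function.Surjective (aug I (fun _ : Fin 1 => 1)) := by
  intro q
  obtain ⟨p, rfl⟩ := Ideal.Quotient.mk_surjective q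
  exact ⟨fun _ => p, by simp [aug_apply]⟩

theorem one_Hd : (1 : MvPolynomial (Fin n) k) ∈ Hd k n 0 := by
  have := isHom_iff.1 (isHomogeneous_one (Fin n) k)
  simpa using this

theorem aug_gr {I : Ideal (MvPolynomial (Fin n) k)} (hI : HI I) :
    IsGr (fun _ : Fin 1 => 0) (LinearMap.ker (aug I (fun _ : Fin 1 => 1))) := by
  intro z hz d
  have hz' : z 0 ∈ I := by
    have : aug I (fun _ : Fin 1 => 1) z = 0 := hz
    rw [aug_apply] at this
    simpa [Ideal.Quotient.eq_zero_iff_mem] using this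
  change aug I (fun _ : Fin 1 => 1) _ = 0
  rw [aug_apply, Ideal.Quotient.eq_zero_iff_mem]
  simpa [compV] using hI _ hz' d

noncomputable def st0 {I : Ideal (MvPolynomial (Fin n) k)} (hI : HI I) : St k n :=
  ⟨1, fun _ => 0, LinearMap.ker (aug I (fun _ : Fin 1 => 1)), aug_gr hI⟩

noncomputable def minRes {I : Ideal (MvPolynomial (Fin n) k)} (hI : HI I) : GradedFreeRes I where
  len := n + 1
  b i := ((st0 hI).seq i).b
  hb i hi := by
    obtain ⟨m, rfl⟩ : ∃ m, i = n + 1 + m + 1 := ⟨i - (n+2), by omega⟩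
    exact ((st0 hI).seq (n+1+m)).spec.zero ((st0 hI).seq_bot m)
  D i := ((st0 hI).seq i).D
  A i := ((st0 hI).seq i).nA
  v := fun _ => 1
  hv r := homogOfDeg_iff.2 one_Hd
  hA i r c := homogOfDeg_iff.2 (((st0 hI).seq i).spec.hA r c)
  haug := aug_one_surj I
  hex0 := by
    intro x
    have := (st0 hI).spec.range
    have h2 : x ∈ LinearMap.range (st0 hI).nA.mulVecLin ↔ x ∈ (st0 hI).Z := by rw [this]
    exact h2.symm
  hex i := by
    intro x
    have := ((st0 hI).seq (i+1)).spec.range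
    have h2 : x ∈ LinearMap.range ((st0 hI).seq (i+1)).nA.mulVecLin ↔
      x ∈ ((st0 hI).seq (i+1)).Z := by rw [this]
    exact h2.symm

theorem VI.nonneg {I : Ideal (MvPolynomial (Fin n) k)} (hI : HI I) (hI1 : I ≠ ⊤) {r : ℤ}
    (h : VI I r) : 0 ≤ r := by
  by_contra hr
  push Not at hr
  obtain ⟨u, hu, hu'⟩ := h 0 hr (fun S => if S = ∅ then 1 else 0) (fun S => by
    split_ifs
    · exact ⟨1, one_Hd, rfl⟩
    · exact zero_mem _) (del_delta _)
  have h1 := congrFun hu' ∅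
  rw [if_pos rfl] at h1
  have hu0 : u = 0 := by
    ext1 S
    obtain ⟨p, hp, hp'⟩ := hu S
    have : p = 0 := Hd_neg (by omega) hp
    rw [← hp', this]; simp
  rw [hu0, map_zero] at h1
  apply hI1
  rw [Ideal.eq_top_iff_one, ← Ideal.Quotient.eq_zero_iff_mem]
  exact h1.symm

theorem van_to_res {I : Ideal (MvPolynomial (Fin n) k)} (hI : HI I) {r : ℤ} (hr : 0 ≤ r)
    (h : VI I r) (i : ℕ) (j : Fin ((minRes hI).b i)) : (minRes hI).D i j - (i : ℤ) ≤ r := by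
  cases i with
  | zero =>
    change (0 : ℤ) - _ ≤ r
    simpa using hr
  | succ i =>
    have h0 : ∀ d, r + 1 < d → Van (GS (st0 hI).D (st0 hI).Z) d := by
      intro d hd
      refine (augSES hI (D := fun _ => 0) (fun _ => one_Hd) (aug_one_surj I)).vanN
        (vanF fun _ => by omega) (h _ (by omega))
    have := (st0 hI).seq_deg h0 i j
    change ((st0 hI).seq (i+1)).D j - _ ≤ _
    push_cast
    omega

theorem exists_VI {I : Ideal (MvPolynomial (Fin n) k)} (hI : HI I) : ∃ r, VI I r := by
  have : ∃ r : ℤ, ∀ (i : ℕ) (j : Fin ((minRes hI).b i)), (minRes hI).D i j - (i : ℤ) ≤ r := by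
    have hfin : Set.Finite {x : ℤ | ∃ (i : ℕ) (j : Fin ((minRes hI).b i)), (minRes hI).D i j - (i : ℤ) = x} := by
      have : {x : ℤ | ∃ (i : ℕ) (j : Fin ((minRes hI).b i)), (minRes hI).D i j - (i : ℤ) = x} ⊆
        ⋃ i ∈ Finset.range (n+2), Set.range (fun j => (minRes hI).D i j - (i : ℤ)) := by
        rintro x ⟨i, j, rfl⟩
        simp only [Set.mem_iUnion]
        refine ⟨i, ?_, j, rfl⟩
        rw [Finset.mem_range]
        by_contra hi
        have h1 : (minRes hI).b i = 0 := (minRes hI).hb i (by change n + 1 < i; omega)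
        exact absurd j.2 (by omega)
      refine Set.Finite.subset ?_ this
      exact Set.Finite.biUnion (Finset.finite_toSet _) fun i _ => Set.finite_range _
    obtain ⟨r, hr⟩ := hfin.bddAbove
    exact ⟨r, fun i j => hr ⟨i, j, rfl⟩⟩
  obtain ⟨r, hr⟩ := this
  exact ⟨r, res_to_van hI (minRes hI) hr⟩

theorem regQuot_eq {I : Ideal (MvPolynomial (Fin n) k)} (hI : HI I) (hI1 : I ≠ ⊤) :
    regQuot I = sInf {r | VI I r} := by
  unfold regQuot
  congr 1
  ext r
  constructor
  · rintro ⟨F, hF⟩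
    exact res_to_van hI F hF
  · intro h
    exact ⟨minRes hI, van_to_res hI (VI.nonneg hI hI1 h) h⟩

theorem VI_reg {I : Ideal (MvPolynomial (Fin n) k)} (hI : HI I) (hI1 : I ≠ ⊤) :
    VI I (regQuot I) := by
  rw [regQuot_eq hI hI1]
  exact Int.csInf_mem (exists_VI hI) ⟨0, fun r hr => VI.nonneg hI hI1 hr⟩

theorem reg_le {I : Ideal (MvPolynomial (Fin n) k)} (hI : HI I) (hI1 : I ≠ ⊤) {r : ℤ}
    (h : VI I r) : regQuot I ≤ r := by
  rw [regQuot_eq hI hI1]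
  exact csInf_le ⟨0, fun r hr => VI.nonneg hI hI1 hr⟩ h

/-! ### The colon sequence -/

theorem HI_of {I : Ideal (MvPolynomial (Fin n) k)} (hI : IsHomogeneousIdeal I) : HI I := by
  obtain ⟨T, hT, rfl⟩ := hI
  intro p hp d
  induction hp using Submodule.span_induction generalizing d with
  | mem x hx =>
    obtain ⟨e, he⟩ := hT x hx
    have := comp_mul (d := d) (isHom_iff.1 he) 1
    rw [mul_one] at this
    rw [this]
    exact Ideal.mul_mem_right _ _ (Ideal.subset_span hx)
  | zero => simp
  | add x y _ _ hx hy => rw [map_add]; exact add_mem (hx d) (hy d)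
  | smul a x _ hx =>
    have ha := sum_comp (p := a) (Nat.lt_succ_self _)
    rw [smul_eq_mul, ← ha, Finset.sum_mul, map_sum]
    refine sum_mem fun e _ => ?_
    rw [comp_mul (comp_mem _ _)]
    exact Ideal.mul_mem_left _ _ (hx _)

variable {I : Ideal (MvPolynomial (Fin n) k)} {f : MvPolynomial (Fin n) k}

theorem mem_col {p : MvPolynomial (Fin n) k} : p ∈ I.colon (Ideal.span {f}) ↔ f * p ∈ I := by
  rw [Ideal.mem_colon_span_singleton, mul_comm]

theorem HI_colon (hI : HI I) (hf : f ∈ Hd k n 1) : HI (I.colon (Ideal.span {f})) := by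
  intro p hp d
  rw [mem_col] at *
  have := hI _ hp (d + 1)
  rwa [comp_mul hf, add_sub_cancel_right] at this

theorem mem_sup {p : MvPolynomial (Fin n) k} :
    p ∈ I + Ideal.span {f} ↔ ∃ i ∈ I, ∃ t, i + f * t = p := by
  rw [Submodule.add_eq_sup, Submodule.mem_sup]
  constructor
  · rintro ⟨i, hi, z, hz, rfl⟩
    obtain ⟨t, rfl⟩ := Ideal.mem_span_singleton.1 hz
    exact ⟨i, hi, t, rfl⟩
  · rintro ⟨i, hi, t, rfl⟩
    exact ⟨i, hi, _, Ideal.mem_span_singleton.2 ⟨t, rfl⟩, rfl⟩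

theorem HI_sup (hI : HI I) (hf : f ∈ Hd k n 1) : HI (I + Ideal.span {f}) := by
  intro p hp d
  obtain ⟨i, hi, t, rfl⟩ := mem_sup.1 hp
  rw [map_add, comp_mul hf]
  exact mem_sup.2 ⟨_, hI _ hi d, _, rfl⟩

theorem sup_ne_top (hI : HI I) (hI1 : I ≠ ⊤) (hf : f ∈ Hd k n 1) : I + Ideal.span {f} ≠ ⊤ := by
  intro h
  rw [Ideal.eq_top_iff_one] at h
  obtain ⟨i, hi, t, hit⟩ := mem_sup.1 h
  have h1 := hI _ hi 0
  have h2 : comp 0 (f * t) = 0 := by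
    rw [comp_mul hf, Hd_neg (d := 0 - 1) (by omega) (comp_mem _ _), mul_zero]
  have h3 := congrArg (comp 0) hit
  rw [map_add, h2, add_zero, comp_of_mem one_Hd] at h3
  rw [h3] at h1
  exact hI1 ((Ideal.eq_top_iff_one _).2 h1)

/-- shifted grading -/
def shift {M : Type*} [AddCommGroup M] [Module (MvPolynomial (Fin n) k) M] (g : Gr k n M) :
    Gr k n M where
  G d := g.G (d - 1)
  hX d j m h := by
    have := g.hX _ j m h
    rwa [sub_add_eq_add_sub] at this

theorem van_shift {M : Type*} [AddCommGroup M] [Module (MvPolynomial (Fin n) k) M] (g : Gr k n M)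
    (d : ℤ) : Van (shift g) d ↔ Van g (d - 1) := Iff.rfl

noncomputable def colMap (I : Ideal (MvPolynomial (Fin n) k)) (f : MvPolynomial (Fin n) k) :
    (MvPolynomial (Fin n) k ⧸ I.colon (Ideal.span {f})) →ₗ[MvPolynomial (Fin n) k]
      (MvPolynomial (Fin n) k ⧸ I) :=
  Submodule.mapQ _ _ (LinearMap.mulLeft (MvPolynomial (Fin n) k) f) (fun _ hp => mem_col.1 hp)

theorem colMap_mk (p : MvPolynomial (Fin n) k) :
    colMap I f (Ideal.Quotient.mk _ p) = Ideal.Quotient.mk I (f * p) := rfl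

noncomputable def supMap (I : Ideal (MvPolynomial (Fin n) k)) (f : MvPolynomial (Fin n) k) :
    (MvPolynomial (Fin n) k ⧸ I) →ₗ[MvPolynomial (Fin n) k]
      (MvPolynomial (Fin n) k ⧸ (I + Ideal.span {f})) :=
  Submodule.mapQ _ _ LinearMap.id (fun p hp => mem_sup.2 ⟨p, hp, 0, by simp⟩)

theorem supMap_mk (p : MvPolynomial (Fin n) k) :
    supMap I f (Ideal.Quotient.mk _ p) = Ideal.Quotient.mk _ p := rfl

theorem colSES (hI : HI I) (hf : f ∈ Hd k n 1) :
    SES (shift (GQ (I.colon (Ideal.span {f})))) (GQ I) (GQ (I + Ideal.span {f}))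
      (colMap I f) (supMap I f) where
  inj := by
    rw [injective_iff_map_eq_zero]
    intro q hq
    obtain ⟨p, rfl⟩ := Ideal.Quotient.mk_surjective q
    rw [colMap_mk, Ideal.Quotient.eq_zero_iff_mem] at hq
    rw [Ideal.Quotient.eq_zero_iff_mem]
    exact mem_col.2 hq
  ex m := by
    obtain ⟨p, rfl⟩ := Ideal.Quotient.mk_surjective m
    rw [supMap_mk, Ideal.Quotient.eq_zero_iff_mem, mem_sup]
    constructor
    · rintro ⟨i, hi, t, rfl⟩
      refine ⟨Ideal.Quotient.mk _ t, ?_⟩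
      rw [colMap_mk, map_add, Ideal.Quotient.eq_zero_iff_mem.2 hi, zero_add]
    · rintro ⟨x, hx⟩
      obtain ⟨t, rfl⟩ := Ideal.Quotient.mk_surjective x
      rw [colMap_mk, Ideal.Quotient.eq] at hx
      exact ⟨p - f * t, by rw [← neg_sub]; exact neg_mem hx, t, by ring⟩
  degN d x := by
    obtain ⟨p, rfl⟩ := Ideal.Quotient.mk_surjective x
    rw [colMap_mk]
    constructor
    · rintro ⟨q, hq, hq'⟩
      refine ⟨f * q, ?_, ?_⟩
      · have := Hd_mul hf hq
        rwa [add_sub_cancel] at this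
      · have h1 := mem_col.1 (Ideal.Quotient.eq.1 hq')
        apply Ideal.Quotient.eq.2
        rwa [mul_sub] at h1
    · rintro ⟨q, hq, hq'⟩
      have h1 := hI _ (Ideal.Quotient.eq.1 hq') d
      rw [map_sub, comp_of_mem hq, comp_mul hf] at h1
      refine ⟨comp (d - 1) p, comp_mem _ _, ?_⟩
      apply Ideal.Quotient.eq.2
      apply mem_col.2
      have h2 := sub_mem (Ideal.Quotient.eq.1 hq') h1
      convert h2 using 1
      ring
  degM d m h := by
    obtain ⟨p, hp, rfl⟩ := h
    exact ⟨p, hp, rfl⟩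
  degQ d q h := by
    obtain ⟨p, hp, rfl⟩ := h
    exact ⟨_, ⟨p, hp, rfl⟩, rfl⟩

end KZ


namespace KZ
variable {k : Type*} [Field k] {n : ℕ}
variable {I : Ideal (MvPolynomial (Fin n) k)} {f : MvPolynomial (Fin n) k}

theorem exists_socle (hfilter : ∀ p ∈ associatedPrimes (MvPolynomial (Fin n) k)
      (MvPolynomial (Fin n) k ⧸ I), p ≠ mxIdeal k n → f ∉ p) {p : MvPolynomial (Fin n) k}
    (hfp : f * p ∈ I) (hp : p ∉ I) :
    ∃ c, p * c ∉ I ∧ ∀ r ∈ mxIdeal k n, r * (p * c) ∈ I := by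
  let N : Submodule (MvPolynomial (Fin n) k) (MvPolynomial (Fin n) k ⧸ I) :=
    Submodule.span _ {Ideal.Quotient.mk I p}
  let x0 : N := ⟨Ideal.Quotient.mk I p, Submodule.subset_span rfl⟩
  have hx0 : x0 ≠ 0 := by
    intro h
    exact hp (Ideal.Quotient.eq_zero_iff_mem.1 (congrArg Subtype.val h))
  obtain ⟨P, hP, hle⟩ := exists_le_isAssociatedPrime_of_isNoetherianRing
    (MvPolynomial (Fin n) k) x0 hx0
  have hfP : f ∈ P := by
    apply hle
    rw [Submodule.mem_colon_singleton, Submodule.mem_bot]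
    apply Subtype.ext
    exact Ideal.Quotient.eq_zero_iff_mem.2 hfp
  have hPm : P = mxIdeal k n := by
    by_contra h
    exact hfilter P (hP.map_of_injective N.subtype N.subtype_injective) h hfP
  obtain ⟨hprime, y, hy⟩ := isAssociatedPrime_iff.1 hP
  obtain ⟨c, hc⟩ := Submodule.mem_span_singleton.1 y.2
  have hc' : (y : MvPolynomial (Fin n) k ⧸ I) = Ideal.Quotient.mk I (p * c) := by
    rw [← hc, mul_comm]; rfl
  refine ⟨c, fun h => ?_, fun r hr => ?_⟩
  · apply hprime.ne_top
    rw [hy]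
    have : y = 0 := Subtype.ext (by rw [hc']; exact Ideal.Quotient.eq_zero_iff_mem.2 h)
    rw [this]; simp
  · rw [← hPm, hy, Submodule.mem_colon_singleton, Submodule.mem_bot] at hr
    have h2 : r • (y : MvPolynomial (Fin n) k ⧸ I) = 0 := congrArg Subtype.val hr
    rw [hc'] at h2
    exact Ideal.Quotient.eq_zero_iff_mem.1 h2

theorem X_mx (j : Fin n) : (X j : MvPolynomial (Fin n) k) ∈ mxIdeal k n :=
  Ideal.subset_span ⟨j, rfl⟩

theorem socle_deg (hfilter : ∀ p ∈ associatedPrimes (MvPolynomial (Fin n) k)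
      (MvPolynomial (Fin n) k ⧸ I), p ≠ mxIdeal k n → f ∉ p) (hI : HI I) {b : ℤ} (hb : VI I b)
    {d : ℤ} (hd : b < d) {p : MvPolynomial (Fin n) k} (hpd : p ∈ Hd k n d) (hfp : f * p ∈ I) :
    p ∈ I := by
  by_contra hp
  obtain ⟨c, hc, hm⟩ := exists_socle hfilter hfp hp
  have : ∃ e : ℤ, comp e (p * c) ∉ I := by
    by_contra! h
    apply hc
    rw [← sum_comp (p := p * c) (Nat.lt_succ_self _)]
    exact sum_mem fun e _ => h e
  obtain ⟨e, he⟩ := this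
  have hde : d ≤ e := by
    by_contra! h
    apply he
    rw [comp_mul hpd, Hd_neg (d := e - d) (by omega) (comp_mem _ _), mul_zero]
    exact zero_mem _
  set q := comp e (p * c) with hq
  have hXq : ∀ j, X j * q ∈ I := by
    intro j
    have h1 := hI _ (hm _ (X_mx j)) (e + 1)
    rwa [comp_mul (X_Hd j), add_sub_cancel_right] at h1
  classical
  have hz : ∀ (j : Fin n), (X j : MvPolynomial (Fin n) k) • Ideal.Quotient.mk I q = 0 := fun j =>
    Ideal.Quotient.eq_zero_iff_mem.2 (hXq j)
  obtain ⟨u, -, hu⟩ := hb e (by omega)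
    (fun S => if S = Finset.univ then Ideal.Quotient.mk I q else 0) (by
      intro S
      split_ifs
      · exact mem_GQ.2 ⟨q, comp_mem _ _, rfl⟩
      · exact zero_mem _) (by
      ext S
      rw [del_apply]
      refine Finset.sum_eq_zero fun j _ => ?_
      rw [iota_apply]
      split_ifs
      · simp
      · rw [smul_comm, hz, smul_zero]
      · simp)
  have h1 := congrFun hu Finset.univ
  rw [del_top, if_pos rfl] at h1
  exact he (Ideal.Quotient.eq_zero_iff_mem.1 h1.symm)

/-- quotient map to the colon ideal -/
noncomputable def facMap (I : Ideal (MvPolynomial (Fin n) k)) (f : MvPolynomial (Fin n) k) :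
    (MvPolynomial (Fin n) k ⧸ I) →ₗ[MvPolynomial (Fin n) k]
      (MvPolynomial (Fin n) k ⧸ I.colon (Ideal.span {f})) :=
  Submodule.mapQ _ _ LinearMap.id (fun p hp => mem_col.2 (Ideal.mul_mem_left _ _ hp))

theorem facMap_mk (p : MvPolynomial (Fin n) k) :
    facMap I f (Ideal.Quotient.mk _ p) = Ideal.Quotient.mk _ p := rfl

theorem VI_colon (hfilter : ∀ p ∈ associatedPrimes (MvPolynomial (Fin n) k)
      (MvPolynomial (Fin n) k ⧸ I), p ≠ mxIdeal k n → f ∉ p) (hI : HI I) {b : ℤ} (hb : VI I b) :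
    VI (I.colon (Ideal.span {f})) b := by
  intro d hd w hw hw0
  choose p hp hpw using fun S => mem_GQ.1 (hw S)
  have hv : ∀ S, Ideal.Quotient.mk I (p S) ∈ (GQ I).G d := fun S => mem_GQ.2 ⟨_, hp S, rfl⟩
  have e : (fun S => facMap I f (Ideal.Quotient.mk I (p S))) = w := funext hpw
  obtain ⟨u, hu, hu'⟩ := hb d hd (fun S => Ideal.Quotient.mk I (p S)) hv (by
    ext S
    obtain ⟨q, hq, hq'⟩ := mem_GQ.1 ((GQ I).del_mem hv S)
    rw [← e, del_map] at hw0
    have h1 := congrFun hw0 S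
    rw [← hq', facMap_mk] at h1
    rw [← hq']
    exact Ideal.Quotient.eq_zero_iff_mem.2 (socle_deg hfilter hI hb (by omega) hq
      (mem_col.1 (Ideal.Quotient.eq_zero_iff_mem.1 h1))))
  refine ⟨fun S => facMap I f (u S), fun S => ?_, ?_⟩
  · obtain ⟨q, hq, hq'⟩ := mem_GQ.1 (hu S)
    exact mem_GQ.2 ⟨q, hq, by beta_reduce; rw [← hq', facMap_mk]⟩
  · rw [del_map, hu', ← e]

theorem reg_main (hfilter : ∀ p ∈ associatedPrimes (MvPolynomial (Fin n) k)
      (MvPolynomial (Fin n) k ⧸ I), p ≠ mxIdeal k n → f ∉ p) (hI : HI I) (hf : f ∈ Hd k n 1) :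
    regQuot I = regQuot (I.colon (Ideal.span {f})) + 1 ∨
      regQuot I = regQuot (I + Ideal.span {f}) := by
  by_cases hfI : f ∈ I
  · right
    rw [Submodule.add_eq_sup, sup_eq_left.2]
    rwa [Ideal.span_singleton_le_iff_mem]
  have hI1 : I ≠ ⊤ := fun h => hfI (h ▸ Submodule.mem_top)
  have hs1 := sup_ne_top hI hI1 hf
  have hc1 : I.colon (Ideal.span {f}) ≠ ⊤ := by
    rw [Ne, Ideal.eq_top_iff_one, mem_col, mul_one]; exact hfI
  have hc := HI_colon hI hf
  have hs := HI_sup hI hf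
  have vI := VI_reg hI hI1
  have vc := VI_reg hc hc1
  have vs := VI_reg hs hs1
  have s := colSES hI hf
  have h1 : regQuot (I.colon (Ideal.span {f})) ≤ regQuot I := reg_le hc hc1 (VI_colon hfilter hI vI)
  have h2 : regQuot (I + Ideal.span {f}) ≤ regQuot I := reg_le hs hs1 (fun d hd =>
    s.vanQ (vI d hd) ((van_shift _ _).2 (vc _ (by omega))))
  have h3 : regQuot I ≤ max (regQuot (I.colon (Ideal.span {f})) + 1)
      (regQuot (I + Ideal.span {f})) := reg_le hI hI1 (fun d hd =>
    s.vanM ((van_shift _ _).2 (vc _ (by omega))) (vs _ (by omega)))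
  have h4 : regQuot (I.colon (Ideal.span {f})) ≤ max (regQuot I - 1)
      (regQuot (I + Ideal.span {f})) := reg_le hc hc1 (fun d hd => by
    have := s.vanN (d := d + 1) (vI _ (by omega)) (vs _ (by omega))
    rwa [van_shift, add_sub_cancel_right] at this)
  omega

theorem exists_reg {J : Ideal (MvPolynomial (Fin n) k)} (h : pdepth J ≠ 0) :
    ∃ r ∈ mxIdeal k n, ∀ t, r * t ∈ J → t ∈ J := by
  by_contra! hno
  apply h
  unfold pdepth idealDepth
  refine Nat.le_zero.1 ?_
  by_contra! h0
  have hne : {d : ℕ | ∃ rs : List (MvPolynomial (Fin n) k), rs.length = d ∧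
      (∀ r ∈ rs, r ∈ mxIdeal k n) ∧
      RingTheory.Sequence.IsRegular (MvPolynomial (Fin n) k ⧸ J) rs} ⊆ {0} := by
    rintro d ⟨rs, rfl, hrs, hreg⟩
    cases rs with
    | nil => rfl
    | cons r rs =>
      exfalso
      have hr := ((RingTheory.Sequence.isRegular_cons_iff _ r rs).1 hreg).1
      obtain ⟨t, ht, ht'⟩ := hno r (hrs r (by simp))
      apply ht'
      rw [← Ideal.Quotient.eq_zero_iff_mem]
      apply hr
      change r • Ideal.Quotient.mk J t = r • (0 : MvPolynomial (Fin n) k ⧸ J)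
      rw [smul_zero]
      exact Ideal.Quotient.eq_zero_iff_mem.2 ht
  rcases Set.subset_singleton_iff_eq.1 hne with h | h <;> rw [h] at h0 <;> simp at h0

theorem pdepth_zero {J : Ideal (MvPolynomial (Fin n) k)} {s : MvPolynomial (Fin n) k}
    (hs : s ∉ J) (h : ∀ r ∈ mxIdeal k n, r * s ∈ J) : pdepth J = 0 := by
  by_contra h0
  obtain ⟨r, hr, hr'⟩ := exists_reg h0
  exact hs (hr' s (h r hr))

theorem depth_main (hfilter : ∀ p ∈ associatedPrimes (MvPolynomial (Fin n) k)
      (MvPolynomial (Fin n) k ⧸ I), p ≠ mxIdeal k n → f ∉ p) :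
    pdepth I = pdepth (I.colon (Ideal.span {f})) ∨ pdepth I = pdepth (I + Ideal.span {f}) := by
  by_cases hreg : ∀ p, f * p ∈ I → p ∈ I
  · left
    have : I.colon (Ideal.span {f}) = I := by
      ext p
      rw [mem_col]
      exact ⟨hreg p, fun h => Ideal.mul_mem_left _ _ h⟩
    rw [this]
  push Not at hreg
  obtain ⟨p, hfp, hp⟩ := hreg
  obtain ⟨c, hs, hm⟩ := exists_socle hfilter hfp hp
  rw [pdepth_zero hs hm]
  by_cases hc : pdepth (I.colon (Ideal.span {f})) = 0
  · exact Or.inl hc.symm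
  right
  obtain ⟨r, hr, hr'⟩ := exists_reg hc
  refine (pdepth_zero (s := p * c) (fun h => ?_) (fun r hr => ?_)).symm
  · obtain ⟨i, hi, t, hit⟩ := mem_sup.1 h
    apply hs
    have h1 := hm r hr
    rw [← hit, mul_add] at h1
    have h2 := (Ideal.add_mem_iff_right _ (Ideal.mul_mem_left _ r hi)).1 h1
    have h3 := hr' t (mem_col.2 (by rwa [mul_left_comm] at h2))
    rw [← hit]
    exact add_mem hi (mem_col.1 h3)
  · exact mem_sup.2 ⟨_, hm r hr, 0, by simp⟩

end KZ

/-- **Corollary (depth and regularity modulo a filter-regular linear form).** Let `I` be a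
homogeneous ideal and `f` a linear form which is filter-regular on `R/I` (i.e. `f` avoids
all associated primes of `R/I` other than the maximal homogeneous ideal). Then
(i) `depth R/I ∈ {depth R/(I:f), depth R/(I,f)}` and
(ii) `reg R/I ∈ {reg R/(I:f) + 1, reg R/(I,f)}`. -/
theorem depth_reg_modulo_filter_regular {k : Type*} [Field k] {n : ℕ}
    (I : Ideal (MvPolynomial (Fin n) k)) (hI : IsHomogeneousIdeal I)
    (f : MvPolynomial (Fin n) k) (hf1 : f.IsHomogeneous 1) (hf0 : f ≠ 0)
    (hfilter : ∀ p ∈ associatedPrimes (MvPolynomial (Fin n) k)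
      (MvPolynomial (Fin n) k ⧸ I), p ≠ mxIdeal k n → f ∉ p) :
    (pdepth I = pdepth (I.colon (Ideal.span {f})) ∨
      pdepth I = pdepth (I + Ideal.span {f})) ∧
    (regQuot I = regQuot (I.colon (Ideal.span {f})) + 1 ∨
      regQuot I = regQuot (I + Ideal.span {f})) := by
  exact ⟨KZ.depth_main hfilter, KZ.reg_main hfilter (KZ.HI_of hI) (by
    have := KZ.isHom_iff.1 hf1
    simpa using this)⟩
end
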